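/- arXiv:math/0606027 — 4 statements merged into one kernel-verified Lean document; each statement's English description precedes it below -/
import Mathlib

section
/- Let n ≥ 1 be odd, let G be a finite group acting freely and continuously on the unit sphere Sⁿ ⊂ ℝⁿ⁺¹, and let N = Sⁿ/G be the orbit space with the quotient topology. Let m > 1 and let f₁, f₂ : Sᵐ → N be continuous maps that are NOT homotopic to each other. Then MCC(f₁, f₂) equals the order of G (equivalently, the order of π₁(N)); i.e., the minimum over all f₁' homotopic to f₁ and f₂' homotopic to f₂ of the number of connected components of the coincidence set C(f₁', f₂') equals |G|. -/
/-- The minimum number of coincidence components: the infimum, over all pairs of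
continuous maps homotopic to `f₁` and `f₂` respectively, of the (extended-natural)
number of connected components of the coincidence set. -/
noncomputable def MCC {M N : Type*} [TopologicalSpace M] [TopologicalSpace N]
    (f₁ f₂ : C(M, N)) : ℕ∞ :=
  ⨅ (g₁ : C(M, N)) (_ : g₁.Homotopic f₁) (g₂ : C(M, N)) (_ : g₂.Homotopic f₂),
    ENat.card (ConnectedComponents {x : M // g₁ x = g₂ x})

namespace SpaceForm

open Set Metric Topology Filter
open scoped unitInterval

section Normalize

variable {E : Type*} [NormedAddCommGroup E] [InnerProductSpace ℝ E]
variable {X : Type*} [TopologicalSpace X]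

/-- The radial projection of a nowhere vanishing map to the unit sphere. -/
noncomputable def sphereProj (f : X → E) (hf : Continuous f) (h0 : ∀ x, f x ≠ 0) :
    C(X, sphere (0 : E) 1) where
  toFun x := ⟨‖f x‖⁻¹ • f x, by
    rw [mem_sphere_zero_iff_norm, norm_smul, norm_inv, norm_norm,
      inv_mul_cancel₀ (norm_ne_zero_iff.2 (h0 x))]⟩
  continuous_toFun := by
    refine Continuous.subtype_mk (Continuous.smul (Continuous.inv₀ hf.norm fun x => ?_) hf) _
    exact norm_ne_zero_iff.2 (h0 x)

lemma sphereProj_apply (f : X → E) (hf : Continuous f) (h0 : ∀ x, f x ≠ 0) (x : X) :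
    (sphereProj f hf h0 x : E) = ‖f x‖⁻¹ • f x := rfl

lemma sphereProj_eq_of_eq (f : X → E) (hf : Continuous f) (h0 : ∀ x, f x ≠ 0) {x : X}
    {y : sphere (0 : E) 1} (h : f x = y) : sphereProj f hf h0 x = y := by
  apply Subtype.ext
  rw [sphereProj_apply, h, norm_eq_of_mem_sphere, inv_one, one_smul]

lemma sphere_ne_zero {E : Type*} [NormedAddCommGroup E] (y : sphere (0 : E) 1) : (y : E) ≠ 0 := by
  intro h
  have := norm_eq_of_mem_sphere y
  rw [h, norm_zero] at this
  exact zero_ne_one this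

/-- A segment joining two non-antipodal unit vectors misses the origin. -/
lemma segment_ne_zero {a b : E} (ha : ‖a‖ = 1) (hb : ‖b‖ = 1) (hab : a ≠ -b) (t : I) :
    (1 - (t : ℝ)) • a + (t : ℝ) • b ≠ 0 := by
  intro h
  have h1 : (1 - (t : ℝ)) • a = -((t : ℝ) • b) := eq_neg_of_add_eq_zero_left h
  have h2 : (1 - (t : ℝ)) = t := by
    have := congrArg norm h1
    rw [norm_neg, norm_smul, norm_smul, ha, hb, mul_one, mul_one, Real.norm_eq_abs,
      Real.norm_eq_abs, abs_of_nonneg t.2.1, abs_of_nonneg (sub_nonneg.2 t.2.2)] at this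
    exact this
  have h3 : (t : ℝ) ≠ 0 := by intro h; rw [h] at h2; norm_num at h2
  apply hab
  rw [h2, ← smul_neg] at h1
  exact smul_right_injective E h3 h1

/-- Two maps to the sphere that are nowhere antipodal are homotopic relative to their
coincidence set. -/
lemma homotopicRel_of_ne_neg {f g : C(X, sphere (0 : E) 1)} (h : ∀ x, (f x : E) ≠ -(g x : E)) :
    f.HomotopicRel g {x | f x = g x} := by
  have h0 : ∀ p : I × X, (1 - (p.1 : ℝ)) • (f p.2 : E) + (p.1 : ℝ) • (g p.2 : E) ≠ 0 := fun p =>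
    segment_ne_zero (norm_eq_of_mem_sphere _) (norm_eq_of_mem_sphere _) (h p.2) p.1
  have hc : Continuous fun p : I × X =>
      (1 - (p.1 : ℝ)) • (f p.2 : E) + (p.1 : ℝ) • (g p.2 : E) := by fun_prop
  refine ⟨{ toContinuousMap := sphereProj _ hc h0, map_zero_left := ?_, map_one_left := ?_,
            prop' := ?_ }⟩
  · intro x
    exact sphereProj_eq_of_eq _ hc h0 (by simp)
  · intro x
    exact sphereProj_eq_of_eq _ hc h0 (by simp)
  · intro t x hx
    refine sphereProj_eq_of_eq _ hc h0 ?_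
    have hx : f x = g x := hx
    simp [← hx, ← add_smul]

/-- Borsuk's homotopy extension property for maps to a sphere. -/
lemma exists_homotopy_extension [FiniteDimensional ℝ E] [CompactSpace X] [T2Space X]
    {A : Set X} (hA : IsClosed A)
    (f : C(X, sphere (0 : E) 1)) (K : X × I → sphere (0 : E) 1)
    (hK : ContinuousOn K (A ×ˢ univ)) (h0 : ∀ a ∈ A, K (a, 0) = f a) :
    ∃ F : C(X × I, sphere (0 : E) 1), (∀ x, F (x, 0) = f x) ∧
      ∀ a ∈ A, ∀ t, F (a, t) = K (a, t) := by
  have : TietzeExtension.{_, _} E := TietzeExtension.of_tvs ℝ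
  obtain ⟨K', hK'⟩ := ContinuousMap.exists_restrict_eq (Y := E)
    (hA.prod (isClosed_univ (X := I)))
    ⟨fun p => (K p.1 : E), continuous_subtype_val.comp
      (continuousOn_iff_continuous_domRestrict.1 hK)⟩
  have hK' : ∀ a ∈ A, ∀ t, K' (a, t) = K (a, t) := fun a ha t =>
    DFunLike.congr_fun hK' ⟨(a, t), ha, mem_univ _⟩
  set Φ : X × I → E := fun p => K' p + f p.1 - K' (p.1, 0) with hΦ
  have hΦc : Continuous Φ := by fun_prop
  have hΦ0 : ∀ x, Φ (x, 0) = f x := fun x => by simp [hΦ]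
  have hΦA : ∀ a ∈ A, ∀ t, Φ (a, t) = K (a, t) := fun a ha t => by
    simp [hΦ, hK' a ha, h0 a ha]
  have hV : IsOpen {x | ∀ t, Φ (x, t) ≠ 0} := by
    have : IsClosed (Prod.fst '' {p : X × I | Φ p = 0}) :=
      isClosedMap_fst_of_compactSpace _ (isClosed_eq hΦc continuous_const)
    convert this.isOpen_compl using 1
    ext x
    simp
  obtain ⟨u, hu0, hu1, hu⟩ := exists_continuous_zero_one_of_isClosed hV.isClosed_compl hA
    (disjoint_left.2 fun x hx hxA => hx fun t => by
      rw [hΦA x hxA]; exact sphere_ne_zero _)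
  set w : X × I → I := fun p => ⟨u p.1, hu p.1⟩ * p.2 with hw
  have hwc : Continuous w := by fun_prop
  have hne : ∀ p : X × I, Φ (p.1, w p) ≠ 0 := by
    rintro ⟨x, t⟩
    by_cases hx : ∀ t, Φ (x, t) ≠ 0
    · exact hx _
    · have : w (x, t) = 0 := by
        apply Subtype.ext
        simp [hw, hu0 hx]
      simp only [this, hΦ0]
      exact sphere_ne_zero _
  have hc : Continuous fun p : X × I => Φ (p.1, w p) := by fun_prop
  refine ⟨sphereProj _ hc hne, fun x => ?_, fun a ha t => ?_⟩
  · refine sphereProj_eq_of_eq _ hc hne ?_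
    have : w (x, 0) = 0 := by simp [hw]
    simp only [this, hΦ0]
  · refine sphereProj_eq_of_eq _ hc hne ?_
    have : w (a, t) = t := by
      apply Subtype.ext
      simp [hw, hu1 ha]
    simp only [this, hΦA a ha]

end Normalize

section SimplyConnected

lemma exists_contDiff_near {k : ℕ} (γ : C(I, EuclideanSpace ℝ (Fin k))) {ε : ℝ} (hε : 0 < ε) :
    ∃ q : ℝ → EuclideanSpace ℝ (Fin k), ContDiff ℝ 1 q ∧ ∀ t : I, ‖q t - γ t‖ < ε := by
  have hpos : 0 < ε / (k + 1) := by positivity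
  have : ∀ i : Fin k, ∃ p : Polynomial ℝ, ∀ t : I, |p.eval (t : ℝ) - γ t i| < ε / (k + 1) := by
    intro i
    let φ : C(I, ℝ) := ⟨fun t => γ t i, by fun_prop⟩
    obtain ⟨p, hp⟩ := exists_polynomial_near_continuousMap 0 1 φ _ hpos
    refine ⟨p, fun t => ?_⟩
    have := ContinuousMap.norm_coe_le_norm (p.toContinuousMapOn (Icc 0 1) - φ) t
    exact this.trans_lt hp
  choose p hp using this
  refine ⟨fun t => WithLp.toLp 2 fun i => (p i).eval t, ?_, fun t => ?_⟩
  · rw [contDiff_euclidean]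
    intro i
    exact (p i).contDiff_aeval 1
  · set w := (WithLp.toLp 2 fun i => (p i).eval (t : ℝ) : EuclideanSpace ℝ (Fin k)) - γ t with hw
    have h1 : w = ∑ i, w i • EuclideanSpace.single i (1 : ℝ) := by
      have := (EuclideanSpace.basisFun (Fin k) ℝ).sum_repr w
      simpa using this.symm
    have h2 : ‖w‖ ≤ ∑ i : Fin k, ε / (k + 1) := by
      rw [h1]
      refine (norm_sum_le _ _).trans (Finset.sum_le_sum fun i _ => ?_)
      rw [norm_smul]
      simp only [PiLp.norm_single, norm_one, mul_one]
      exact (hp i t).le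
    refine h2.trans_lt ?_
    rw [Finset.sum_const, Finset.card_univ, Fintype.card_fin, nsmul_eq_mul, mul_div_assoc',
      div_lt_iff₀ (by positivity)]
    nlinarith

/-- A loop on the sphere whose image misses a point is null-homotopic. -/
lemma loop_homotopic_refl_of_notMem_range {E : Type*} [NormedAddCommGroup E]
    [InnerProductSpace ℝ E] {x v : sphere (0 : E) 1} (γ : Path x x) (hv : ∀ t, γ t ≠ v) :
    γ.Homotopic (Path.refl x) := by
  have hv1 : ‖(v : E)‖ = 1 := norm_eq_of_mem_sphere v
  set e := stereographic hv1 with he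
  have hsrc : ∀ t, γ t ∈ e.source := fun t => by
    rw [he, stereographic_source]
    exact fun h => hv t (Subtype.ext (congrArg Subtype.val h))
  have hx : x ∈ e.source := by simpa using hsrc 0
  have hγ : Continuous fun t => e (γ t) :=
    e.continuousOn.comp_continuous γ.continuous hsrc
  have hsymm : Continuous e.symm := by
    rw [← continuousOn_univ, ← stereographic_target hv1]
    exact e.continuousOn_symm
  refine ⟨{ toFun := fun p => e.symm ((1 - (p.1 : ℝ)) • e (γ p.2) + (p.1 : ℝ) • e x)
            continuous_toFun := hsymm.comp (((continuous_const.sub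
              (continuous_subtype_val.comp continuous_fst)).smul (hγ.comp continuous_snd)).add
              ((continuous_subtype_val.comp continuous_fst).smul continuous_const))
            map_zero_left := fun t => ?_
            map_one_left := fun t => ?_
            prop' := fun s t ht => ?_ }⟩
  · simpa using e.left_inv (hsrc t)
  · simpa using e.left_inv hx
  · have : γ t = x := by
      rcases ht with rfl | ht
      · simp
      · rw [mem_singleton_iff] at ht
        simp [ht]
    change e.symm ((1 - (s : ℝ)) • e (γ t) + (s : ℝ) • e x) = γ t
    rw [this, ← add_smul, sub_add_cancel, one_smul, e.left_inv hx]

lemma loop_homotopic_refl {k : ℕ} (hk : 3 ≤ k) {x : sphere (0 : EuclideanSpace ℝ (Fin k)) 1}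
    (γ : Path x x) : γ.Homotopic (Path.refl x) := by
  obtain ⟨p, hp, hpγ⟩ := exists_contDiff_near (k := k)
    ⟨fun t => (γ t : EuclideanSpace ℝ (Fin k)), by fun_prop⟩ (ε := 1 / 3) (by norm_num)
  simp only [ContinuousMap.coe_mk] at hpγ
  set q : ℝ → EuclideanSpace ℝ (Fin k) := fun t =>
    p t - ((1 - t) • (p 0 - x) + t • (p 1 - x)) with hq
  have hqd : ContDiff ℝ 1 q := by fun_prop
  have hq0 : q 0 = x := by simp [hq]
  have hq1 : q 1 = x := by simp [hq]
  have hqγ : ∀ t : I, ‖q t - γ t‖ < 1 := by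
    intro t
    have h0 : ‖p 0 - x‖ < 1 / 3 := by simpa using hpγ 0
    have h1 : ‖p 1 - x‖ < 1 / 3 := by simpa using hpγ 1
    have ht := hpγ t
    have e1 : q t - γ t = (p t - γ t) - ((1 - (t : ℝ)) • (p 0 - x) + (t : ℝ) • (p 1 - x)) := by
      simp only [hq]; abel
    rw [e1]
    refine (norm_sub_le _ _).trans_lt ?_
    have h2 := norm_add_le ((1 - (t : ℝ)) • (p 0 - (x : EuclideanSpace ℝ (Fin k))))
      ((t : ℝ) • (p 1 - (x : EuclideanSpace ℝ (Fin k))))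
    rw [norm_smul, norm_smul, Real.norm_of_nonneg t.2.1,
      Real.norm_of_nonneg (sub_nonneg.2 t.2.2)] at h2
    have t0 := t.2.1
    have t1 := t.2.2
    nlinarith [norm_nonneg (p 0 - (x : EuclideanSpace ℝ (Fin k))),
      norm_nonneg (p 1 - (x : EuclideanSpace ℝ (Fin k)))]
  have hne : ∀ t : I, q t ≠ 0 := by
    intro t h
    have := hqγ t
    rw [h, zero_sub, norm_neg, norm_eq_of_mem_sphere] at this
    exact lt_irrefl _ this
  have hqc : Continuous fun t : I => q t := hqd.continuous.comp continuous_subtype_val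
  let γ' : Path x x :=
    { toContinuousMap := sphereProj _ hqc hne
      source' := sphereProj_eq_of_eq _ hqc hne (by simp [hq0])
      target' := sphereProj_eq_of_eq _ hqc hne (by simp [hq1]) }
  have hγ' : ∀ t, (γ' t : EuclideanSpace ℝ (Fin k)) = ‖q t‖⁻¹ • q t := fun t => rfl
  have hnear : γ.Homotopic γ' := by
    have h1 : ∀ t, (γ.toContinuousMap t : EuclideanSpace ℝ (Fin k)) ≠ -γ'.toContinuousMap t := by
      intro t h
      have h2 : (γ t : EuclideanSpace ℝ (Fin k)) = -(‖q t‖⁻¹ • q t) := h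
      have h3 := hqγ t
      have h4 : q t - γ t = (1 + ‖q t‖⁻¹) • q t := by
        rw [h2, sub_neg_eq_add, add_smul, one_smul]
      have h5 : 0 < ‖q t‖ := norm_pos_iff.2 (hne t)
      rw [h4, norm_smul, Real.norm_of_nonneg (by positivity), add_mul,
        inv_mul_cancel₀ h5.ne'] at h3
      linarith
    obtain ⟨H⟩ := homotopicRel_of_ne_neg h1
    refine ⟨{ toHomotopy := H.toHomotopy, prop' := fun t s hs => H.prop' t s ?_ }⟩
    rcases hs with rfl | hs
    · change γ 0 = γ' 0
      simp
    · rw [mem_singleton_iff] at hs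
      subst hs
      change γ 1 = γ' 1
      simp
  have hcone : ContDiff ℝ 1 fun z : ℝ × ℝ => z.1 • q z.2 := by fun_prop
  have hdense := hcone.dense_compl_range_of_finrank_lt_finrank (by
    rw [Module.finrank_prod, finrank_euclideanSpace, Module.finrank_self, Fintype.card_fin]
    omega)
  obtain ⟨v, hv⟩ := hdense.nonempty
  have hv0 : v ≠ 0 := by
    rintro rfl
    exact hv ⟨(0, 0), by simp⟩
  refine hnear.trans (loop_homotopic_refl_of_notMem_range
    (v := ⟨‖v‖⁻¹ • v, by
      rw [mem_sphere_zero_iff_norm, norm_smul, norm_inv, norm_norm,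
        inv_mul_cancel₀ (norm_ne_zero_iff.2 hv0)]⟩) γ' fun t h => hv ⟨(‖v‖ * ‖q t‖⁻¹, t), ?_⟩)
  have h1 := congrArg Subtype.val h
  rw [hγ'] at h1
  simp only at h1 ⊢
  rw [mul_smul, h1, smul_smul, mul_inv_cancel₀ (norm_ne_zero_iff.2 hv0), one_smul]

lemma simplyConnectedSpace_sphere {k : ℕ} (hk : 3 ≤ k) :
    SimplyConnectedSpace (sphere (0 : EuclideanSpace ℝ (Fin k)) 1) := by
  rw [simply_connected_iff_loops_nullhomotopic]
  refine ⟨isPathConnected_iff_pathConnectedSpace.1 (isPathConnected_sphere ?_ 0 zero_le_one),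
    fun x γ => loop_homotopic_refl hk γ⟩
  rw [← Module.finrank_eq_rank, finrank_euclideanSpace, Fintype.card_fin]
  exact_mod_cast (by omega : 1 < k)

instance {k : ℕ} : LocallyPathConnectedSpace (sphere (0 : EuclideanSpace ℝ (Fin (k + 1))) 1) :=
  ChartedSpace.locallyPathConnectedSpace (EuclideanSpace ℝ (Fin k)) _

end SimplyConnected

/-- On an odd-dimensional sphere the antipodal map is homotopic to the identity. -/
lemma exists_antipodal_homotopy {n : ℕ} (hodd : Odd n) :
    ∃ H : C(I × sphere (0 : EuclideanSpace ℝ (Fin (n + 1))) 1,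
      sphere (0 : EuclideanSpace ℝ (Fin (n + 1))) 1),
      (∀ x, H (0, x) = x) ∧ ∀ x, H (1, x) = -x := by
  obtain ⟨k, hk⟩ := hodd
  have hfin : Module.finrank ℝ (EuclideanSpace ℝ (Fin (n + 1))) =
      Module.finrank ℝ (Fin (k + 1) → ℂ) := by
    rw [finrank_euclideanSpace, Fintype.card_fin, Module.finrank_pi_fintype]
    simp [Complex.finrank_real_complex]
    omega
  let e := ContinuousLinearEquiv.ofFinrankEq hfin
  let Φ : I × sphere (0 : EuclideanSpace ℝ (Fin (n + 1))) 1 → EuclideanSpace ℝ (Fin (n + 1)) :=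
    fun p => e.symm (Complex.exp (Real.pi * (p.1 : ℝ) * Complex.I) • e p.2)
  have hΦ : Continuous Φ := by fun_prop
  have hne : ∀ p, Φ p ≠ 0 := by
    intro p h
    have h1 : Complex.exp (Real.pi * (p.1 : ℝ) * Complex.I) • e p.2 = 0 := by
      simpa [Φ] using h
    rcases smul_eq_zero.1 h1 with h2 | h2
    · exact Complex.exp_ne_zero _ h2
    · exact sphere_ne_zero p.2 (by simpa using h2)
  refine ⟨sphereProj Φ hΦ hne, fun x => sphereProj_eq_of_eq _ _ _ (by simp [Φ]),
    fun x => sphereProj_eq_of_eq _ _ _ (by simp [Φ])⟩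

section PiecewiseAffine

/-- A continuous map which is affine on the closures of finitely many open convex cells that
cover the space. -/
structure PiecewiseAffine (P V : Type) [NormedAddCommGroup P] [NormedSpace ℝ P]
    [NormedAddCommGroup V] [NormedSpace ℝ V] extends C(P, V) where
  /-- The index set of the cells. -/
  ι : Type
  finite_ι : Finite ι
  /-- The linear part on each cell. -/
  lin : ι → P →L[ℝ] V
  /-- The constant part on each cell. -/
  cst : ι → V
  /-- The open cells. -/
  cell : ι → Set P
  isOpen_cell : ∀ i, IsOpen (cell i)
  convex_cell : ∀ i, Convex ℝ (cell i)
  iUnion_closure_cell : ⋃ i, closure (cell i) = univ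
  apply_eq : ∀ i, ∀ x ∈ closure (cell i), toFun x = lin i x + cst i

variable {P : Type} [NormedAddCommGroup P] [InnerProductSpace ℝ P]

/-- A continuous function which agrees everywhere with one of finitely many affine functions. -/
def IsAffineSelection (h : P → ℝ) : Prop :=
  Continuous h ∧ ∃ S : Set ((P →L[ℝ] ℝ) × ℝ), S.Finite ∧ ∀ x, ∃ a ∈ S, h x = a.1 x + a.2

lemma exists_isAffineSelection_near {K : Set P} (hK : IsCompact K) (φ : C(K, ℝ)) {ε : ℝ}
    (hε : 0 < ε) : ∃ h : P → ℝ, IsAffineSelection h ∧ ∀ x : K, |h x - φ x| < ε := by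
  have : CompactSpace K := isCompact_iff_compactSpace.1 hK
  let L : Set C(K, ℝ) := {f | ∃ h : P → ℝ, IsAffineSelection h ∧ ∀ x : K, f x = h x}
  have hL : closure L = ⊤ := by
    refine ContinuousMap.sublattice_closure_eq_top L ?_ ?_ ?_ ?_
    · exact ⟨0, fun _ => 0, ⟨continuous_const, {0}, finite_singleton _, fun x => ⟨0, by simp⟩⟩,
        fun x => rfl⟩
    · rintro f ⟨h, ⟨hc, S, hS, hh⟩, hf⟩ g ⟨h', ⟨hc', S', hS', hh'⟩, hg⟩
      refine ⟨fun x => min (h x) (h' x), ⟨hc.min hc', S ∪ S', hS.union hS', fun x => ?_⟩,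
        fun x => by simp [hf, hg]⟩
      rcases min_choice (h x) (h' x) with hm | hm
      · obtain ⟨a, ha, hax⟩ := hh x
        exact ⟨a, Or.inl ha, hm.trans hax⟩
      · obtain ⟨a, ha, hax⟩ := hh' x
        exact ⟨a, Or.inr ha, hm.trans hax⟩
    · rintro f ⟨h, ⟨hc, S, hS, hh⟩, hf⟩ g ⟨h', ⟨hc', S', hS', hh'⟩, hg⟩
      refine ⟨fun x => max (h x) (h' x), ⟨hc.max hc', S ∪ S', hS.union hS', fun x => ?_⟩,
        fun x => by simp [hf, hg]⟩
      rcases max_choice (h x) (h' x) with hm | hm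
      · obtain ⟨a, ha, hax⟩ := hh x
        exact ⟨a, Or.inl ha, hm.trans hax⟩
      · obtain ⟨a, ha, hax⟩ := hh' x
        exact ⟨a, Or.inr ha, hm.trans hax⟩
    · intro v x y
      let s : ℝ := (v y - v x) / ‖(y : P) - x‖ ^ 2
      let ℓ : P →L[ℝ] ℝ := s • innerSL ℝ ((y : P) - x)
      have hc : Continuous fun z : P => ℓ z + (v x - ℓ x) := by fun_prop
      refine ⟨⟨fun z => ℓ z + (v x - ℓ x), by fun_prop⟩, ⟨_, ⟨hc, {(ℓ, v x - ℓ x)},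
        finite_singleton _, fun z => ⟨_, rfl, rfl⟩⟩, fun z => rfl⟩, by simp, ?_⟩
      by_cases hxy : x = y
      · subst hxy; simp
      · have h1 : ‖(y : P) - x‖ ≠ 0 := norm_ne_zero_iff.2
          (sub_ne_zero.2 fun h => hxy (Subtype.ext h.symm))
        have h2 : ℓ y - ℓ x = v y - v x := by
          rw [← map_sub]
          simp only [ℓ, s, smul_apply, innerSL_apply_apply,
            real_inner_self_eq_norm_sq, smul_eq_mul]
          field_simp
        simp only [ContinuousMap.coe_mk]
        linarith
  have hφ : φ ∈ closure L := hL ▸ mem_univ φ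
  obtain ⟨f, ⟨h, hh, hf⟩, hd⟩ := Metric.mem_closure_iff.1 hφ ε hε
  refine ⟨h, hh, fun x => ?_⟩
  rw [← hf, ← Real.dist_eq, dist_comm]
  exact (ContinuousMap.dist_apply_le_dist x).trans_lt hd

lemma dense_affine_ne {a b : (P →L[ℝ] ℝ) × ℝ} (hab : a ≠ b) :
    Dense {x : P | a.1 x + a.2 ≠ b.1 x + b.2} := by
  obtain ⟨y, hy⟩ : ∃ y : P, a.1 y + a.2 ≠ b.1 y + b.2 := by
    by_contra! h
    have h0 : a.2 = b.2 := by simpa using h 0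
    exact hab (Prod.ext (ContinuousLinearMap.ext fun y => by have := h y; linarith) h0)
  intro x
  by_cases hx : a.1 x + a.2 = b.1 x + b.2
  · have ht : Tendsto (fun t : ℝ => x + t • (y - x)) (𝓝[≠] 0) (𝓝 x) := by
      have : Continuous fun t : ℝ => x + t • (y - x) := by fun_prop
      simpa using (this.tendsto 0).mono_left nhdsWithin_le_nhds
    refine mem_closure_of_tendsto ht ?_
    filter_upwards [self_mem_nhdsWithin] with t ht0 h
    have ht0 : t ≠ 0 := ht0
    apply hy
    simp only [map_add, map_smul, map_sub, smul_eq_mul] at h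
    have h3 : t * ((a.1 y + a.2) - (b.1 y + b.2)) = 0 := by linear_combination h + (t - 1) * hx
    have := (mul_eq_zero.1 h3).resolve_left ht0
    linarith
  · exact subset_closure hx

lemma isAffineSelection_eqOn {h : P → ℝ} (hc : Continuous h) {S : Set ((P →L[ℝ] ℝ) × ℝ)}
    (hS : S.Finite) (hh : ∀ x, ∃ a ∈ S, h x = a.1 x + a.2) {Q : Set P} (hQ : IsPreconnected Q)
    (hne : ∀ x ∈ Q, ∀ a ∈ S, ∀ b ∈ S, a ≠ b → a.1 x + a.2 ≠ b.1 x + b.2) :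
    ∃ a : (P →L[ℝ] ℝ) × ℝ, ∀ x ∈ Q, h x = a.1 x + a.2 := by
  rcases Q.eq_empty_or_nonempty with rfl | ⟨z, hz⟩
  · exact ⟨0, by simp⟩
  obtain ⟨a, ha, haz⟩ := hh z
  refine ⟨a, fun x hx => by_contra fun hxa => ?_⟩
  have hclosed : ∀ b : (P →L[ℝ] ℝ) × ℝ, IsClosed {x | h x = b.1 x + b.2} := fun b =>
    isClosed_eq hc (by fun_prop)
  obtain ⟨y, hyQ, hya, hyb⟩ := isPreconnected_closed_iff.1 hQ {x | h x = a.1 x + a.2}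
    (⋃ b ∈ S \ {a}, {x | h x = b.1 x + b.2}) (hclosed a)
    ((hS.subset sdiff_subset).isClosed_biUnion fun b _ => hclosed b)
    (fun y _ => by
      obtain ⟨b, hb, hyb⟩ := hh y
      by_cases hba : b = a
      · exact Or.inl (hba ▸ hyb)
      · exact Or.inr (mem_biUnion ⟨hb, hba⟩ hyb)) ⟨z, hz, haz⟩
    (by
      obtain ⟨b, hb, hxb⟩ := hh x
      refine ⟨x, hx, mem_biUnion ⟨hb, ?_⟩ hxb⟩
      rintro rfl
      exact hxa hxb)
  obtain ⟨b, ⟨hb, hba⟩, hyb⟩ := mem_iUnion₂.1 hyb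
  exact hne y hyQ a ha b hb (Ne.symm hba) (hya.symm.trans hyb)

/-- Piecewise affine approximation on compact sets. -/
lemma exists_piecewiseAffine_near {n : ℕ} {K : Set P} (hK : IsCompact K)
    (φ : C(K, EuclideanSpace ℝ (Fin n))) {ε : ℝ} (hε : 0 < ε) :
    ∃ Φ : PiecewiseAffine P (EuclideanSpace ℝ (Fin n)),
      ∀ x : K, ‖Φ.toContinuousMap x - φ x‖ < ε := by
  have hpos : 0 < ε / (n + 1) := by positivity
  choose h hh hnear using fun i : Fin n => exists_isAffineSelection_near hK
    (⟨fun x => φ x i, by fun_prop⟩ : C(K, ℝ)) hpos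
  choose hc S hS hsel using hh
  set T : Set ((P →L[ℝ] ℝ) × ℝ) := ⋃ i, S i with hT
  have hTfin : T.Finite := finite_iUnion hS
  have : Finite T := hTfin
  let val : (P →L[ℝ] ℝ) × ℝ → P → ℝ := fun a x => a.1 x + a.2
  have hval : ∀ a, Continuous (val a) := fun a => by fun_prop
  let Q : Set (T × T) → Set P := fun τ =>
    ⋂ p : T × T, {x | p.1 ≠ p.2 → (p ∈ τ → val p.1 x < val p.2 x) ∧
      (p ∉ τ → val p.2 x < val p.1 x)}
  have hconv : ∀ a b : (P →L[ℝ] ℝ) × ℝ, Convex ℝ {x | val a x < val b x} := by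
    intro a b x hx y hy s t hs ht hst
    simp only [mem_ofPred_eq, val, map_add, map_smul, smul_eq_mul] at *
    rcases hs.eq_or_lt with rfl | hs'
    · have : t = 1 := by linarith
      subst this; linarith
    · have e : ∀ u : (P →L[ℝ] ℝ) × ℝ, s * u.1 x + t * u.1 y + u.2 =
          s * (u.1 x + u.2) + t * (u.1 y + u.2) := fun u => by
        linear_combination -(u.2) * hst
      rw [e a, e b]
      nlinarith
  have hpiece : ∀ (τ : Set (T × T)) (p : T × T), ∃ C : Set P, IsOpen C ∧ Convex ℝ C ∧
      {x | p.1 ≠ p.2 → (p ∈ τ → val p.1 x < val p.2 x) ∧ (p ∉ τ → val p.2 x < val p.1 x)} = C := by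
    intro τ p
    by_cases hp : p.1 = p.2
    · exact ⟨univ, isOpen_univ, convex_univ, by simp [hp]⟩
    by_cases hpτ : p ∈ τ
    · refine ⟨{x | val p.1 x < val p.2 x}, isOpen_lt (hval _) (hval _), hconv _ _, ?_⟩
      ext x; simp [hp, hpτ]
    · refine ⟨{x | val p.2 x < val p.1 x}, isOpen_lt (hval _) (hval _), hconv _ _, ?_⟩
      ext x; simp [hp, hpτ]
  have hQo : ∀ τ, IsOpen (Q τ) := fun τ => isOpen_iInter_of_finite fun p => by
    obtain ⟨C, h1, h2, h3⟩ := hpiece τ p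
    rw [h3]; exact h1
  have hQc : ∀ τ, Convex ℝ (Q τ) := fun τ => convex_iInter fun p => by
    obtain ⟨C, h1, h2, h3⟩ := hpiece τ p
    rw [h3]; exact h2
  have hQne : ∀ τ, ∀ x ∈ Q τ, ∀ a ∈ T, ∀ b ∈ T, a ≠ b → val a x ≠ val b x := by
    intro τ x hx a ha b hb hab
    have hx := mem_iInter.1 hx (⟨a, ha⟩, ⟨b, hb⟩) (fun h => hab (congrArg Subtype.val h))
    by_cases hτ : ((⟨a, ha⟩, ⟨b, hb⟩) : T × T) ∈ τ
    · exact (hx.1 hτ).ne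
    · exact (hx.2 hτ).ne'
  have hcover : ⋃ τ, closure (Q τ) = univ := by
    rw [← closure_iUnion_of_finite]
    have hd : Dense (⋂ p : {p : T × T // p.1 ≠ p.2},
        {x : P | val p.1.1 x ≠ val p.1.2 x}) := by
      have hd' : ∀ s : Set {p : T × T // p.1 ≠ p.2}, s.Finite →
          Dense (⋂ p ∈ s, {x : P | val p.1.1 x ≠ val p.1.2 x}) ∧
          IsOpen (⋂ p ∈ s, {x : P | val p.1.1 x ≠ val p.1.2 x}) := by
        intro s hs
        induction s, hs using Set.Finite.induction_on with
        | empty => simp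
        | insert _ _ ih =>
          rename_i p s _ _
          rw [biInter_insert]
          have ho : IsOpen {x : P | val p.1.1 x ≠ val p.1.2 x} :=
            isOpen_ne_fun (hval _) (hval _)
          exact ⟨(dense_affine_ne fun h => p.2 (Subtype.ext h)).inter_of_isOpen_left ih.1 ho,
            ho.inter ih.2⟩
      simpa using (hd' univ (toFinite _)).1
    refine univ_subset_iff.1 (hd.closure_eq ▸ closure_mono fun x hx => ?_)
    refine mem_iUnion.2 ⟨{p | val p.1 x < val p.2 x}, mem_iInter.2 fun p hp => ?_⟩
    have h1 : val p.1 x ≠ val p.2 x := mem_iInter.1 hx ⟨p, hp⟩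
    exact ⟨fun h => h, fun h => lt_of_le_of_ne (not_lt.1 h) h1.symm⟩
  have haff : ∀ τ i, ∃ a : (P →L[ℝ] ℝ) × ℝ, ∀ x ∈ Q τ, h i x = a.1 x + a.2 := fun τ i =>
    isAffineSelection_eqOn (hc i) (hS i) (hsel i) (hQc τ).isPreconnected
      fun x hx a ha b hb => hQne τ x hx a (mem_iUnion_of_mem i ha) b (mem_iUnion_of_mem i hb)
  choose A hA using haff
  let F : C(P, EuclideanSpace ℝ (Fin n)) := ⟨fun x => WithLp.toLp 2 fun i => h i x, by fun_prop⟩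
  refine ⟨{ toContinuousMap := F
            ι := ULift (Set (T × T))
            finite_ι := inferInstance
            lin := fun τ => (EuclideanSpace.equiv (Fin n) ℝ).symm.toContinuousLinearMap ∘L
              ContinuousLinearMap.pi fun i => (A τ.down i).1
            cst := fun τ => WithLp.toLp 2 fun i => (A τ.down i).2
            cell := fun τ => Q τ.down
            isOpen_cell := fun τ => hQo _
            convex_cell := fun τ => hQc _
            iUnion_closure_cell := ?_
            apply_eq := ?_ }, fun x => ?_⟩
  · rw [← hcover]
    ext x
    simp [ULift.exists]
  · rintro ⟨τ⟩
    have hcl : IsClosed {x : P | F x = (EuclideanSpace.equiv (Fin n) ℝ).symm.toContinuousLinearMap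
        (ContinuousLinearMap.pi (fun i => (A τ i).1) x) + WithLp.toLp 2 fun i => (A τ i).2} :=
      isClosed_eq F.continuous (by fun_prop)
    refine fun x hx => closure_minimal (fun y hy => ?_) hcl hx
    ext i
    exact hA τ i y hy
  · set w := F x - φ x with hw
    have h1 : w = ∑ i, w i • EuclideanSpace.single i (1 : ℝ) := by
      have := (EuclideanSpace.basisFun (Fin n) ℝ).sum_repr w
      simpa using this.symm
    have h2 : ‖w‖ ≤ ∑ i : Fin n, ε / (n + 1) := by
      rw [h1]
      refine (norm_sum_le _ _).trans (Finset.sum_le_sum fun i _ => ?_)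
      rw [norm_smul]
      simp only [PiLp.norm_single, norm_one, mul_one]
      exact (hnear i x).le
    refine h2.trans_lt ?_
    rw [Finset.sum_const, Finset.card_univ, Fintype.card_fin, nsmul_eq_mul, mul_div_assoc',
      div_lt_iff₀ (by positivity)]
    nlinarith

end PiecewiseAffine

section Hubs

variable {P : Type} [NormedAddCommGroup P] [InnerProductSpace ℝ P]

/-- Every nonempty open set contains a point from which finitely many points can be joined by
segments that avoid finitely many affine subspaces of codimension at least two. -/
lemma exists_hub [FiniteDimensional ℝ P] {S : Set P} (hS : S.Finite)
    {B : Set (P × Submodule ℝ P)} (hB : B.Finite)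
    (hcodim : ∀ b ∈ B, Module.finrank ℝ b.2 + 2 ≤ Module.finrank ℝ P) {O : Set P}
    (hO : IsOpen O) (hne : O.Nonempty) :
    ∃ h ∈ O, ∀ p ∈ S, ∀ b ∈ B, ∀ z ∈ segment ℝ p h, z - b.1 ∈ b.2 → z = p := by
  borelize P
  let bad : P → P × Submodule ℝ P → Set P := fun p b =>
    (fun x => x - p) ⁻¹' ((b.2 ⊔ Submodule.span ℝ {b.1 - p} : Submodule ℝ P) : Set P)
  have hnull : ∀ p, ∀ b ∈ B, MeasureTheory.volume (bad p b) = 0 := by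
    intro p b hb
    have h1 : bad p b = (fun x => x + -p) ⁻¹'
        ((b.2 ⊔ Submodule.span ℝ {b.1 - p} : Submodule ℝ P) : Set P) := by
      simp only [bad, sub_eq_add_neg]
    rw [h1, MeasureTheory.measure_preimage_add_right]
    refine MeasureTheory.Measure.addHaar_submodule _ _ fun htop => ?_
    have h2 := Submodule.finrank_add_le_finrank_add_finrank b.2 (Submodule.span ℝ {b.1 - p})
    have h3 := finrank_span_le_card (R := ℝ) ({b.1 - p} : Set P)
    rw [Set.toFinset_singleton, Finset.card_singleton] at h3
    have h4 := hcodim b hb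
    rw [htop, finrank_top] at h2
    omega
  have hU : MeasureTheory.volume (⋃ p ∈ S, ⋃ b ∈ B, bad p b) = 0 :=
    (MeasureTheory.measure_biUnion_null_iff hS.countable).2 fun p _ =>
      (MeasureTheory.measure_biUnion_null_iff hB.countable).2 fun b hb => hnull p b hb
  obtain ⟨h, hhO, hh⟩ : ∃ h ∈ O, h ∉ ⋃ p ∈ S, ⋃ b ∈ B, bad p b := by
    by_contra! hcon
    exact (hO.measure_pos MeasureTheory.volume hne).ne'
      (MeasureTheory.measure_mono_null hcon hU)
  refine ⟨h, hhO, fun p hp b hb z hz hzb => by_contra fun hzp => hh ?_⟩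
  refine mem_biUnion hp (mem_biUnion hb ?_)
  rw [segment_eq_image'] at hz
  obtain ⟨t, -, rfl⟩ := hz
  have ht : t ≠ 0 := by rintro rfl; simp at hzp
  change h - p ∈ b.2 ⊔ Submodule.span ℝ {b.1 - p}
  have h1 : t • (h - p) ∈ b.2 ⊔ Submodule.span ℝ {b.1 - p} := by
    have : t • (h - p) = (p + t • (h - p) - b.1) + (b.1 - p) := by abel
    rw [this]
    exact Submodule.add_mem_sup hzb (Submodule.mem_span_singleton_self _)
  exact (Submodule.smul_mem_iff _ ht).1 h1

lemma sub_mem_span_of_mem_segment {p h z : P} (hz : z ∈ segment ℝ p h) :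
    z - p ∈ Submodule.span ℝ {h - p} := by
  rw [segment_eq_image'] at hz
  obtain ⟨t, -, rfl⟩ := hz
  simpa using Submodule.smul_mem _ t (Submodule.mem_span_singleton_self (h - p))

/-- A family version of `exists_hub` in which the stars of different hubs are disjoint. -/
lemma exists_hubs [FiniteDimensional ℝ P] (hdim : 3 ≤ Module.finrank ℝ P) {J : Type*} [Finite J]
    {S : J → Set P} (hS : ∀ j, (S j).Finite) (hdisj : ∀ i j, i ≠ j → Disjoint (S i) (S j))
    {B : Set (P × Submodule ℝ P)} (hB : B.Finite)
    (hcodim : ∀ b ∈ B, Module.finrank ℝ b.2 + 2 ≤ Module.finrank ℝ P) {O : Set P}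
    (hO : IsOpen O) (hne : O.Nonempty) :
    ∃ h : J → P, (∀ j, h j ∈ O) ∧
      (∀ j, ∀ p ∈ S j, ∀ b ∈ B, ∀ z ∈ segment ℝ p (h j), z - b.1 ∈ b.2 → z = p) ∧
      (∀ j, ∀ p ∈ S j, ∀ i, i ≠ j → ∀ q ∈ S i, q ∉ segment ℝ p (h j)) ∧
      ∀ i j, i ≠ j → ∀ p ∈ S i, ∀ q ∈ S j, Disjoint (segment ℝ p (h i)) (segment ℝ q (h j)) := by
  classical
  have : Fintype J := Fintype.ofFinite J
  let B₁ : Set (P × Submodule ℝ P) := B ∪ ⋃ j, (fun p => (p, ⊥)) '' S j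
  have hB₁ : B₁.Finite := hB.union (finite_iUnion fun j => (hS j).image _)
  have hcodim₁ : ∀ b ∈ B₁, Module.finrank ℝ b.2 + 2 ≤ Module.finrank ℝ P := by
    rintro b (hb | hb)
    · exact hcodim b hb
    · obtain ⟨j, p, -, rfl⟩ := mem_iUnion.1 hb
      simp only [finrank_bot]
      omega
  suffices H : ∀ s : Finset J, ∃ h : J → P, (∀ j ∈ s, h j ∈ O) ∧
      (∀ j ∈ s, ∀ p ∈ S j, ∀ b ∈ B₁, ∀ z ∈ segment ℝ p (h j), z - b.1 ∈ b.2 → z = p) ∧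
      ∀ i ∈ s, ∀ j ∈ s, i ≠ j → ∀ p ∈ S i, ∀ q ∈ S j,
        Disjoint (segment ℝ p (h i)) (segment ℝ q (h j)) by
    obtain ⟨h, h1, h2, h3⟩ := H Finset.univ
    refine ⟨h, fun j => h1 j (Finset.mem_univ _), fun j p hp b hb =>
      h2 j (Finset.mem_univ _) p hp b (Or.inl hb), fun j p hp i hij q hq hqs => ?_,
      fun i j => h3 i (Finset.mem_univ _) j (Finset.mem_univ _)⟩
    have := h2 j (Finset.mem_univ _) p hp (q, ⊥) (Or.inr (mem_iUnion_of_mem i ⟨q, hq, rfl⟩)) q hqs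
      (by simp)
    exact disjoint_left.1 (hdisj i j hij) hq (this ▸ hp)
  intro s
  induction s using Finset.induction_on with
  | empty => exact ⟨fun _ => 0, by simp, by simp, by simp⟩
  | insert j s hj ih =>
    obtain ⟨h, h1, h2, h3⟩ := ih
    let B₂ : Set (P × Submodule ℝ P) :=
      B₁ ∪ ⋃ i : J, (fun q => (q, Submodule.span ℝ {h i - q})) '' S i
    have hB₂ : B₂.Finite := hB₁.union (finite_iUnion fun j => (hS j).image _)
    have hcodim₂ : ∀ b ∈ B₂, Module.finrank ℝ b.2 + 2 ≤ Module.finrank ℝ P := by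
      rintro b (hb | hb)
      · exact hcodim₁ b hb
      · obtain ⟨i, p, -, rfl⟩ := mem_iUnion.1 hb
        have := finrank_span_le_card (R := ℝ) ({h i - p} : Set P)
        rw [Set.toFinset_singleton, Finset.card_singleton] at this
        simp only
        omega
    obtain ⟨w, hwO, hw⟩ := exists_hub (hS j) hB₂ hcodim₂ hO hne
    have hns : ∀ i ∈ s, i ≠ j := fun i hi hij => hj (hij ▸ hi)
    have key : ∀ i ∈ s, ∀ q ∈ S i, ∀ p ∈ S j,
        Disjoint (segment ℝ p w) (segment ℝ q (h i)) := by
      intro i hi q hq p hp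
      rw [disjoint_left]
      intro z hz hzi
      have hzp : z = p := hw p hp _ (Or.inr (mem_iUnion_of_mem i ⟨q, hq, rfl⟩)) z hz
        (sub_mem_span_of_mem_segment hzi)
      have := h2 i hi q hq (p, ⊥) (Or.inr (mem_iUnion_of_mem j ⟨p, hp, rfl⟩)) z hzi (by simp [hzp])
      exact disjoint_left.1 (hdisj i j (hns i hi)) hq (this ▸ hzp ▸ hp)
    refine ⟨Function.update h j w, ?_, ?_, ?_⟩
    · intro i hi
      rcases Finset.mem_insert.1 hi with rfl | hi
      · simpa using hwO
      · rw [Function.update_of_ne (hns i hi)]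
        exact h1 i hi
    · intro i hi
      rcases Finset.mem_insert.1 hi with rfl | hi
      · rw [Function.update_self]
        exact fun p hp b hb => hw p hp b (Or.inl hb)
      · rw [Function.update_of_ne (hns i hi)]
        exact h2 i hi
    · intro i hi k hk hik p hp q hq
      rcases Finset.mem_insert.1 hi with hi' | hi' <;> rcases Finset.mem_insert.1 hk with hk' | hk'
      · exact absurd (hi'.trans hk'.symm) hik
      · subst hi'
        rw [Function.update_self, Function.update_of_ne (hns k hk')]
        exact key k hk' q hq p hp
      · subst hk'
        rw [Function.update_self, Function.update_of_ne (hns i hi')]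
        exact (key i hi' p hp q hq).symm
      · rw [Function.update_of_ne (hns i hi'), Function.update_of_ne (hns k hk')]
        exact h3 i hi' k hk' hik p hp q hq

end Hubs

namespace PiecewiseAffine

variable {P V : Type} [NormedAddCommGroup P] [InnerProductSpace ℝ P]
  [NormedAddCommGroup V] [InnerProductSpace ℝ V]

lemma exists_mem_closure_cell (Φ : PiecewiseAffine P V) (x : P) :
    ∃ i, x ∈ closure (Φ.cell i) :=
  mem_iUnion.1 (Φ.iUnion_closure_cell ▸ mem_univ x)

/-- A piecewise affine map has regular values in every ball. -/
lemma exists_regular_value [FiniteDimensional ℝ V] (Φ : PiecewiseAffine P V) (c : V) {ρ : ℝ}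
    (hρ : 0 < ρ) : ∃ b ∈ ball c ρ, ∀ i, ∀ x ∈ closure (Φ.cell i), Φ.lin i x + Φ.cst i = b →
      (∃ x' ∈ Φ.cell i, Φ.lin i x' + Φ.cst i = b) ∧ Function.Surjective (Φ.lin i) := by
  borelize V
  have := Φ.finite_ι
  let M : Φ.ι → Set V := fun i => (fun x => Φ.lin i x + Φ.cst i) '' Φ.cell i
  have hconv : ∀ i, Convex ℝ (M i) := by
    intro i
    have h1 : M i = (fun y => Φ.cst i + y) '' (Φ.lin i '' Φ.cell i) := by
      simp only [M, image_image, add_comm]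
    have h2 : Convex ℝ (Φ.lin i '' Φ.cell i) :=
      (Φ.convex_cell i).linear_image (Φ.lin i).toLinearMap
    rw [h1]
    exact h2.translate _
  have hnull : MeasureTheory.volume (⋃ i, frontier (M i)) = 0 :=
    MeasureTheory.measure_iUnion_null fun i => (hconv i).addHaar_frontier _
  obtain ⟨b, hb, hbM⟩ : ∃ b ∈ ball c ρ, b ∉ ⋃ i, frontier (M i) := by
    by_contra! hcon
    exact (isOpen_ball.measure_pos MeasureTheory.volume (nonempty_ball.2 hρ)).ne'
      (MeasureTheory.measure_mono_null hcon hnull)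
  refine ⟨b, hb, fun i x hx hxb => ?_⟩
  have hcl : b ∈ closure (M i) :=
    hxb ▸ image_closure_subset_closure_image (by fun_prop) ⟨x, hx, rfl⟩
  have hbint : b ∈ interior (M i) := by
    by_contra h
    exact hbM (mem_iUnion_of_mem i ⟨hcl, h⟩)
  refine ⟨(interior_subset hbint : b ∈ M i), ?_⟩
  have hrange : LinearMap.range (Φ.lin i).toLinearMap = ⊤ := by
    refine Submodule.eq_top_of_nonempty_interior' _ ⟨b - Φ.cst i, ?_⟩
    have hopen : IsOpen ((fun y => y + Φ.cst i) ⁻¹' interior (M i)) :=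
      isOpen_interior.preimage (by fun_prop)
    refine mem_interior.2 ⟨_, fun y hy => ?_, hopen, by simpa using hbint⟩
    obtain ⟨z, -, hz⟩ := interior_subset hy
    exact ⟨z, add_right_cancel hz⟩
  exact LinearMap.range_eq_top.1 hrange

/-- The part of the fibre over `y` in the closure of a cell. -/
def fiber (Φ : PiecewiseAffine P V) (i : Φ.ι) (y : V) : Set P :=
  {x | x ∈ closure (Φ.cell i) ∧ Φ.lin i x + Φ.cst i = y}

lemma isClosed_fiber (Φ : PiecewiseAffine P V) (i : Φ.ι) (y : V) : IsClosed (Φ.fiber i y) :=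
  isClosed_closure.inter (isClosed_eq (by fun_prop) continuous_const)

lemma convex_fiber (Φ : PiecewiseAffine P V) (i : Φ.ι) (y : V) : Convex ℝ (Φ.fiber i y) := by
  refine (Φ.convex_cell i).closure.inter ?_
  intro x hx z hz s t _ _ hst
  change Φ.lin i (s • x + t • z) + Φ.cst i = y
  have hx : Φ.lin i x + Φ.cst i = y := hx
  have hz : Φ.lin i z + Φ.cst i = y := hz
  rw [map_add, map_smul, map_smul, eq_sub_of_add_eq hx, eq_sub_of_add_eq hz, ← add_smul, hst,
    one_smul, sub_add_cancel]

lemma apply_of_mem_fiber (Φ : PiecewiseAffine P V) {i : Φ.ι} {y : V} {x : P}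
    (hx : x ∈ Φ.fiber i y) : Φ.toContinuousMap x = y :=
  (Φ.apply_eq i x hx.1).trans hx.2

lemma fiber_subset (Φ : PiecewiseAffine P V) {D Ω : Set P} (hD : IsClosed D) (hΩ : IsOpen Ω)
    (hΩD : Ω ⊆ D) {y : V} (hy : ∀ x ∈ D, Φ.toContinuousMap x = y → x ∈ Ω) {i : Φ.ι} {x : P}
    (hx : x ∈ Φ.fiber i y) (hxD : x ∈ D) : Φ.fiber i y ⊆ Ω := by
  refine (Φ.convex_fiber i y).isPreconnected.subset_left_of_subset_union hΩ hD.isOpen_compl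
    (disjoint_left.2 fun z hz hz' => hz' (hΩD hz)) (fun z hz => ?_)
    ⟨x, hx, hy x hxD (Φ.apply_of_mem_fiber hx)⟩
  by_cases hzD : z ∈ D
  · exact Or.inl (hy z hzD (Φ.apply_of_mem_fiber hz))
  · exact Or.inr hzD

end PiecewiseAffine

lemma smul_unit_eq {V : Type*} [NormedAddCommGroup V] [NormedSpace ℝ V] {e e' : V}
    (he : ‖e‖ = 1) (he' : ‖e'‖ = 1) {s t : ℝ} (hs : 0 < s) (ht : 0 < t) (h : s • e = t • e') :
    s = t ∧ e = e' := by
  have h1 : s = t := by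
    have := congrArg norm h
    rwa [norm_smul, norm_smul, he, he', mul_one, mul_one, Real.norm_of_nonneg hs.le,
      Real.norm_of_nonneg ht.le] at this
  exact ⟨h1, smul_right_injective V ht.ne' (h1 ▸ h)⟩

lemma exists_pos_lt_norm_sub {P V : Type*} [TopologicalSpace P] [NormedAddCommGroup V]
    {K : Set P} (hK : IsCompact K) {f : P → V} (hf : Continuous f) {b : V}
    (h : ∀ x ∈ K, f x ≠ b) : ∃ r > 0, ∀ x ∈ K, r < ‖f x - b‖ := by
  obtain ⟨r, hr, h⟩ := hK.exists_forall_le' (f := fun x => ‖f x - b‖) (a := 0)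
    (by fun_prop) (fun x hx => norm_pos_iff.2 (sub_ne_zero.2 (h x hx)))
  exact ⟨r / 2, half_pos hr, fun x hx => (half_lt_self hr).trans_le (h x hx)⟩

set_option maxHeartbeats 1000000 in
/-- The preimages of the points `b + r • e j` on a small sphere around a regular value `b` can be
enlarged to disjoint connected compact sets, one of which contains the unit sphere, without
adding further points near the preimage of the ball around `b`. -/
lemma exists_connecting_sets {P V : Type} [NormedAddCommGroup P] [InnerProductSpace ℝ P]
    [FiniteDimensional ℝ P] [NormedAddCommGroup V] [InnerProductSpace ℝ V] [FiniteDimensional ℝ V]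
    (hP : 2 ≤ Module.finrank ℝ P) (hV : 3 ≤ Module.finrank ℝ V)
    (Φ : PiecewiseAffine P V) {D Ω : Set P} (hD : IsCompact D) (hDball : D ⊆ ball 0 1)
    (hΩ : IsOpen Ω) (hΩD : Ω ⊆ D) {c : V} {ρ : ℝ} (hρ : 0 < ρ)
    (hcρ : ∀ x ∈ D, Φ.toContinuousMap x ∈ ball c ρ → x ∈ Ω)
    {J : Type*} [Finite J] (j₀ : J) {e : J → V} (he : ∀ j, ‖e j‖ = 1)
    (hinj : Function.Injective e) :
    ∃ (b : V) (r : ℝ), 0 < r ∧ closedBall b r ⊆ ball c ρ ∧ ∃ Z : J → Set P,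
      (∀ j, IsCompact (Z j)) ∧ (∀ j, Z j ⊆ closedBall 0 1) ∧
      (∀ i j, i ≠ j → Disjoint (Z i) (Z j)) ∧ (∀ j, IsPreconnected (Z j)) ∧
      sphere 0 1 ⊆ Z j₀ ∧
      (∀ j, ∀ x ∈ Z j, x ∈ D → Φ.toContinuousMap x ∈ closedBall b r →
        Φ.toContinuousMap x = b + r • e j) ∧
      ∀ j, ∀ x ∈ D, Φ.toContinuousMap x = b + r • e j → x ∈ Z j := by
  classical
  have := Φ.finite_ι
  obtain ⟨b, hbc, hreg⟩ := Φ.exists_regular_value c hρ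
  -- the cells which meet the relevant part of the fibre over `b`
  let Q : Type := {i : Φ.ι // ∃ x ∈ Φ.cell i ∩ Ω, Φ.lin i x + Φ.cst i = b}
  have hQ : ∀ i x, x ∈ Φ.fiber i b → x ∈ D →
      ∃ y ∈ Φ.cell i ∩ Ω, Φ.lin i y + Φ.cst i = b := by
    intro i x hx hxD
    obtain ⟨⟨y, hy, hyb⟩, -⟩ := hreg i x hx.1 hx.2
    have hsub := Φ.fiber_subset hD.isClosed hΩ hΩD
      (fun z hz hzb => hcρ z hz (hzb ▸ hbc)) hx hxD
    exact ⟨y, ⟨hy, hsub ⟨subset_closure hy, hyb⟩⟩, hyb⟩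
  choose a ha hab using fun i : Q => i.2
  have hsurj : ∀ i : Q, Function.Surjective (Φ.lin i.1) := fun i =>
    (hreg i.1 (a i) (subset_closure (ha i).1) (hab i)).2
  choose v hv using fun (i : Q) (j : J) => hsurj i (e j)
  have hray : ∀ (i : Q) (j : J) (t : ℝ), a i + t • v i j ∈ Φ.cell i.1 →
      Φ.lin i.1 (a i + t • v i j) + Φ.cst i.1 = b + t • e j := by
    intro i j t _
    rw [map_add, map_smul, hv, add_right_comm, hab i]
  obtain ⟨δ, hδ, hδray⟩ : ∃ δ : ℝ, 0 < δ ∧ ∀ (i : Q) (j : J), ∀ t ∈ Icc 0 δ,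
      a i + t • v i j ∈ Φ.cell i.1 ∩ Ω := by
    have h1 : ∀ᶠ t : ℝ in 𝓝 0, ∀ (i : Q) (j : J), a i + t • v i j ∈ Φ.cell i.1 ∩ Ω := by
      refine eventually_all.2 fun i => eventually_all.2 fun j => ?_
      have hc : Continuous fun t : ℝ => a i + t • v i j := by fun_prop
      refine hc.continuousAt.eventually (((Φ.isOpen_cell _).inter hΩ).mem_nhds ?_)
      simpa using ha i
    obtain ⟨ε, hε, h2⟩ := Metric.eventually_nhds_iff.1 h1
    refine ⟨ε / 2, half_pos hε, fun i j t ht => h2 ?_ i j⟩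
    rw [Real.dist_eq, sub_zero, abs_of_nonneg ht.1]
    linarith [ht.2]
  have hrayΦ : ∀ (i : Q) (j : J), ∀ t ∈ Icc 0 δ,
      Φ.toContinuousMap (a i + t • v i j) = b + t • e j := fun i j t ht =>
    (Φ.apply_eq i.1 _ (subset_closure (hδray i j t ht).1)).trans (hray i j t (hδray i j t ht).1)
  have hδδ : δ ∈ Icc 0 δ := ⟨hδ.le, le_rfl⟩
  -- a point of the unit sphere
  have : Nontrivial P := Module.nontrivial_of_finrank_pos (R := ℝ) (by omega)
  obtain ⟨p₀, hp₀⟩ : (sphere (0 : P) 1).Nonempty := NormedSpace.sphere_nonempty.2 zero_le_one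
  have hp₀D : p₀ ∉ D := fun h => by
    have h1 := hDball h
    rw [mem_ball_zero_iff] at h1
    rw [mem_sphere_zero_iff_norm] at hp₀
    linarith
  let S : J → Set P := fun j => (range fun i : Q => a i + δ • v i j) ∪ {p | j = j₀ ∧ p = p₀}
  have hSfin : ∀ j, (S j).Finite := fun j => (finite_range _).union
    ((finite_singleton p₀).subset fun p hp => hp.2)
  have hSD : ∀ j, ∀ p ∈ S j, p ∈ D → Φ.toContinuousMap p = b + δ • e j := by
    rintro j p (⟨i, rfl⟩ | ⟨-, rfl⟩) hpD
    · exact hrayΦ i j δ hδδ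
    · exact absurd hpD hp₀D
  have hSnD : ∀ j, ∀ p ∈ S j, p ∉ D → j = j₀ ∧ p = p₀ := by
    rintro j p (⟨i, rfl⟩ | h) hpD
    · exact absurd (hΩD (hδray i j δ hδδ).2) hpD
    · exact h
  have hSdisj : ∀ i j, i ≠ j → Disjoint (S i) (S j) := by
    intro i j hij
    rw [disjoint_left]
    intro p hpi hpj
    by_cases hpD : p ∈ D
    · have h1 := (hSD i p hpi hpD).symm.trans (hSD j p hpj hpD)
      exact hij (hinj (smul_unit_eq (he i) (he j) hδ hδ (add_left_cancel h1)).2)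
    · exact hij ((hSnD i p hpi hpD).1.trans (hSnD j p hpj hpD).1.symm)
  let B : Set (P × Submodule ℝ P) :=
    (range fun i : Q => (a i, LinearMap.ker (Φ.lin i.1).toLinearMap)) ∪
      range fun i : Q × J => (a i.1, Submodule.span ℝ {v i.1 i.2})
  have hBfin : B.Finite := (finite_range _).union (finite_range _)
  have hrank : ∀ i : Q, Module.finrank ℝ (LinearMap.ker (Φ.lin i.1).toLinearMap) +
      Module.finrank ℝ V = Module.finrank ℝ P := by
    intro i
    have h1 := LinearMap.finrank_range_add_finrank_ker (Φ.lin i.1).toLinearMap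
    rw [LinearMap.range_eq_top.2 (hsurj i), finrank_top] at h1
    omega
  have hcodim : ∀ x ∈ B, Module.finrank ℝ x.2 + 2 ≤ Module.finrank ℝ P := by
    rintro x (⟨i, rfl⟩ | ⟨⟨i, j⟩, rfl⟩)
    · have := hrank i
      simp only
      omega
    · have h1 := hrank i
      have h2 := finrank_span_le_card (R := ℝ) ({v i j} : Set P)
      rw [Set.toFinset_singleton, Finset.card_singleton] at h2
      simp only
      omega
  obtain ⟨h, hball, hobst, hdisj⟩ : ∃ h : J → P, (∀ j, h j ∈ ball (0 : P) 1) ∧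
      (∀ j, ∀ p ∈ S j, ∀ x ∈ B, ∀ z ∈ segment ℝ p (h j), z - x.1 ∈ x.2 → z = p) ∧
      ∀ i j, i ≠ j → ∀ p ∈ S i, ∀ q ∈ S j,
        Disjoint (segment ℝ p (h i)) (segment ℝ q (h j)) := by
    by_cases h3 : 3 ≤ Module.finrank ℝ P
    · obtain ⟨h, h1, h2, -, h4⟩ := exists_hubs h3 hSfin hSdisj hBfin hcodim isOpen_ball
        (nonempty_ball.2 (zero_lt_one' ℝ))
      exact ⟨h, h1, h2, h4⟩
    · have hempty : IsEmpty Q := ⟨fun i => h3 (by have := hrank i; omega)⟩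
      have hS' : ∀ j, ∀ p ∈ S j, j = j₀ := by
        rintro j p (⟨i, -⟩ | hp)
        · exact hempty.elim i
        · exact hp.1
      refine ⟨fun _ => 0, fun _ => mem_ball_self one_pos, ?_, fun i j hij p hp q hq =>
        absurd ((hS' i p hp).trans (hS' j q hq).symm) hij⟩
      rintro j p hp x (⟨i, -⟩ | ⟨⟨i, -⟩, -⟩)
      · exact hempty.elim i
      · exact hempty.elim i
  -- the segments avoid the fibre over `b`
  have hsegb : ∀ j, ∀ p ∈ S j, ∀ z ∈ segment ℝ p (h j), z ∈ D → Φ.toContinuousMap z ≠ b := by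
    intro j p hp z hz hzD hzb
    obtain ⟨i, hi⟩ := Φ.exists_mem_closure_cell z
    have hzi : z ∈ Φ.fiber i b := ⟨hi, (Φ.apply_eq i z hi).symm.trans hzb⟩
    let i' : Q := ⟨i, hQ i z hzi hzD⟩
    have hzp : z = p := by
      refine hobst j p hp _ (Or.inl ⟨i', rfl⟩) z hz ?_
      change Φ.lin i (z - a i') = 0
      rw [map_sub, sub_eq_zero]
      exact add_right_cancel (hzi.2.trans (hab i').symm)
    subst hzp
    have h1 := hSD j z hp hzD
    rw [hzb, left_eq_add, smul_eq_zero] at h1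
    rcases h1 with h1 | h1
    · exact hδ.ne' h1
    · have := he j
      rw [h1, norm_zero] at this
      exact zero_ne_one this
  obtain ⟨r, hr, hrδ, hrc, hrQ, hrseg⟩ : ∃ r : ℝ, 0 < r ∧ r ≤ δ ∧ closedBall b r ⊆ ball c ρ ∧
      (∀ i, ∀ x ∈ closure (Φ.cell i), x ∈ D → Φ.toContinuousMap x ∈ closedBall b r →
        ∃ x ∈ Φ.cell i ∩ Ω, Φ.lin i x + Φ.cst i = b) ∧
      ∀ j, ∀ p ∈ S j, ∀ z ∈ segment ℝ p (h j), z ∈ D →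
        Φ.toContinuousMap z ∉ closedBall b r := by
    have h1 : ∀ᶠ r : ℝ in 𝓝[>] 0, closedBall b r ⊆ ball c ρ := by
      have h2 : 0 < ρ - dist b c := sub_pos.2 hbc
      filter_upwards [Ioo_mem_nhdsGT h2] with r hr
      exact closedBall_subset_ball' (by linarith [hr.2])
    have h2 : ∀ᶠ r : ℝ in 𝓝[>] 0, ∀ i, ∀ x ∈ closure (Φ.cell i), x ∈ D →
        Φ.toContinuousMap x ∈ closedBall b r →
        ∃ x ∈ Φ.cell i ∩ Ω, Φ.lin i x + Φ.cst i = b := by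
      refine eventually_all.2 fun i => ?_
      by_cases hi : ∃ x ∈ Φ.cell i ∩ Ω, Φ.lin i x + Φ.cst i = b
      · exact Eventually.of_forall fun r x _ _ _ => hi
      · obtain ⟨s, hs, hs'⟩ := exists_pos_lt_norm_sub (K := closure (Φ.cell i) ∩ D)
          (hD.inter_left isClosed_closure) Φ.continuous_toFun (b := b) (fun x hx hxb => hi
            (hQ i x ⟨hx.1, (Φ.apply_eq i x hx.1).symm.trans hxb⟩ hx.2))
        filter_upwards [Ioo_mem_nhdsGT hs] with r hr x hx hxD hxr
        have := hs' x ⟨hx, hxD⟩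
        rw [mem_closedBall_iff_norm] at hxr
        exact absurd (hxr.trans hr.2.le) (not_le.2 this)
    have h3 : ∀ᶠ r : ℝ in 𝓝[>] 0, ∀ j, ∀ p ∈ S j, ∀ z ∈ segment ℝ p (h j), z ∈ D →
        Φ.toContinuousMap z ∉ closedBall b r := by
      refine eventually_all.2 fun j => (Filter.eventually_all_finite (hSfin j)).2 fun p hp => ?_
      have hseg : IsCompact (segment ℝ p (h j)) := by
        rw [segment_eq_image']
        exact isCompact_Icc.image (by fun_prop)
      obtain ⟨s, hs, hs'⟩ := exists_pos_lt_norm_sub (hseg.inter hD) Φ.continuous_toFun (b := b)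
        fun z hz => hsegb j p hp z hz.1 hz.2
      filter_upwards [Ioo_mem_nhdsGT hs] with r hr z hz hzD hzr
      have := hs' z ⟨hz, hzD⟩
      rw [mem_closedBall_iff_norm] at hzr
      exact absurd (hzr.trans hr.2.le) (not_le.2 this)
    obtain ⟨r, h1, h2, h3, h4⟩ :=
      (h1.and (h2.and (h3.and (Ioo_mem_nhdsGT hδ)))).exists
    exact ⟨r, h4.1, h4.2.le, h1, h2, h3⟩
  have hrr : r ∈ Icc 0 δ := ⟨hr.le, hrδ⟩
  have hyr : ∀ j, b + r • e j ∈ closedBall b r := fun j => by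
    rw [mem_closedBall_iff_norm, add_sub_cancel_left, norm_smul, he, mul_one,
      Real.norm_of_nonneg hr.le]
  have hmem : ∀ (i : Q) (j : J), a i + r • v i j ∈ Φ.fiber i.1 (b + r • e j) := fun i j =>
    ⟨subset_closure (hδray i j r hrr).1, hray i j r (hδray i j r hrr).1⟩
  have hfib : ∀ (i : Q) (j : J), Φ.fiber i.1 (b + r • e j) ⊆ Ω := fun i j =>
    Φ.fiber_subset hD.isClosed hΩ hΩD (fun z hz hzb => hcρ z hz (hzb ▸ hrc (hyr j))) (hmem i j)
      (hΩD (hδray i j r hrr).2)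
  let ray : Q → J → Set P := fun i j => (fun t : ℝ => a i + t • v i j) '' Icc r δ
  let N : Q → J → Set P := fun i j => Φ.fiber i.1 (b + r • e j) ∪ ray i j
  have hNΩ : ∀ i j, N i j ⊆ Ω := by
    rintro i j x (hx | ⟨t, ht, rfl⟩)
    · exact hfib i j hx
    · exact (hδray i j t ⟨hr.le.trans ht.1, ht.2⟩).2
  have hNΦ : ∀ i j, ∀ x ∈ N i j, ∃ t, r ≤ t ∧ Φ.toContinuousMap x = b + t • e j := by
    rintro i j x (hx | ⟨t, ht, rfl⟩)
    · exact ⟨r, le_rfl, Φ.apply_of_mem_fiber hx⟩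
    · exact ⟨t, ht.1, hrayΦ i j t ⟨hr.le.trans ht.1, ht.2⟩⟩
  have hNseg : ∀ i j k, j ≠ k → ∀ x ∈ N i j, ∀ p ∈ S k, x ∉ segment ℝ p (h k) := by
    intro i j k hjk x hx p hp hxs
    have hxD : x ∈ D := hΩD (hNΩ i j hx)
    rcases hx with hx | ⟨t, ht, rfl⟩
    · exact hrseg k p hp x hxs hxD (Φ.apply_of_mem_fiber hx ▸ hyr j)
    · have hxp := hobst k p hp _ (Or.inr ⟨(i, j), rfl⟩) _ hxs
        (by simpa using Submodule.smul_mem _ t (Submodule.mem_span_singleton_self (v i j)))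
      simp only at hxp hxD
      have h1 := hrayΦ i j t ⟨hr.le.trans ht.1, ht.2⟩
      rw [hxp] at h1 hxD
      have h2 := (hSD k p hp hxD).symm.trans h1
      exact hjk (hinj (smul_unit_eq (he k) (he j) hδ (hr.trans_le ht.1)
        (add_left_cancel h2)).2.symm)
  let Z : J → Set P := fun j => ((⋃ i, N i j) ∪ ⋃ p ∈ S j, segment ℝ p (h j)) ∪
    {x | j = j₀ ∧ x ∈ sphere (0 : P) 1}
  have hDsphere : ∀ x ∈ sphere (0 : P) 1, x ∉ D := fun x hx hxD => by
    have h1 := hDball hxD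
    rw [mem_ball_zero_iff] at h1
    rw [mem_sphere_zero_iff_norm] at hx
    linarith
  have hSball : ∀ j, j ≠ j₀ → ∀ p ∈ S j, segment ℝ p (h j) ⊆ ball 0 1 := by
    intro j hj p hp
    have hpD : p ∈ D := by
      by_contra hpD
      exact hj (hSnD j p hp hpD).1
    exact (convex_ball (0 : P) 1).segment_subset (hDball hpD) (hball j)
  have hScball : ∀ j, ∀ p ∈ S j, segment ℝ p (h j) ⊆ closedBall 0 1 := by
    intro j p hp
    refine (convex_closedBall (0 : P) 1).segment_subset ?_ (ball_subset_closedBall (hball j))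
    by_cases hpD : p ∈ D
    · exact ball_subset_closedBall (hDball hpD)
    · rw [(hSnD j p hp hpD).2]
      exact sphere_subset_closedBall hp₀
  have hsegc : ∀ p q : P, IsCompact (segment ℝ p q) := fun p q => by
    rw [segment_eq_image']
    exact isCompact_Icc.image (by fun_prop)
  refine ⟨b, r, hr, hrc, Z, fun j => ?_, fun j => ?_, fun i j hij => ?_, fun j => ?_, ?_, ?_, ?_⟩
  · refine ((isCompact_iUnion fun i => ?_).union ((hSfin j).isCompact_biUnion fun p _ =>
      hsegc _ _)).union ?_
    · refine IsCompact.union ?_ (isCompact_Icc.image (by fun_prop))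
      exact hD.of_isClosed_subset (Φ.isClosed_fiber _ _) ((hfib i j).trans hΩD)
    · by_cases hj : j = j₀
      · simp only [hj, true_and]
        exact isCompact_sphere (0 : P) 1
      · simp [hj]
  · rintro x ((hx | hx) | hx)
    · obtain ⟨i, hi⟩ := mem_iUnion.1 hx
      exact ball_subset_closedBall (hDball (hΩD (hNΩ i j hi)))
    · obtain ⟨p, hp, hxp⟩ := mem_iUnion₂.1 hx
      exact hScball j p hp hxp
    · exact sphere_subset_closedBall hx.2
  · rw [disjoint_left]
    have hns : ∀ j, ∀ x ∈ ⋃ i, N i j, x ∉ sphere (0 : P) 1 := fun j x hx hxs => by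
      obtain ⟨i, hi⟩ := mem_iUnion.1 hx
      exact hDsphere x hxs (hΩD (hNΩ i j hi))
    have hss : ∀ j, j ≠ j₀ → ∀ x ∈ ⋃ p ∈ S j, segment ℝ p (h j), x ∉ sphere (0 : P) 1 := by
      intro j hj x hx hxs
      obtain ⟨p, hp, hxp⟩ := mem_iUnion₂.1 hx
      have h1 := hSball j hj p hp hxp
      rw [mem_ball_zero_iff] at h1
      rw [mem_sphere_zero_iff_norm] at hxs
      linarith
    rintro x ((hx | hx) | hx) ((hy | hy) | hy)
    · obtain ⟨k, hk⟩ := mem_iUnion.1 hx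
      obtain ⟨l, hl⟩ := mem_iUnion.1 hy
      obtain ⟨s, hs, hxs⟩ := hNΦ k i x hk
      obtain ⟨t, ht, hxt⟩ := hNΦ l j x hl
      exact hij (hinj (smul_unit_eq (he i) (he j) (hr.trans_le hs) (hr.trans_le ht)
        (add_left_cancel (hxs.symm.trans hxt))).2)
    · obtain ⟨k, hk⟩ := mem_iUnion.1 hx
      obtain ⟨p, hp, hxp⟩ := mem_iUnion₂.1 hy
      exact hNseg k i j hij x hk p hp hxp
    · exact hns i x hx hy.2
    · obtain ⟨k, hk⟩ := mem_iUnion.1 hy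
      obtain ⟨p, hp, hxp⟩ := mem_iUnion₂.1 hx
      exact hNseg k j i hij.symm x hk p hp hxp
    · obtain ⟨p, hp, hxp⟩ := mem_iUnion₂.1 hx
      obtain ⟨q, hq, hxq⟩ := mem_iUnion₂.1 hy
      exact disjoint_left.1 (hdisj i j hij p hp q hq) hxp hxq
    · exact hss i (fun h => hij (h.trans hy.1.symm)) x hx hy.2
    · exact hns j x hy hx.2
    · exact hss j (fun h => hij (hx.1.trans h.symm)) x hy hx.2
    · exact hij (hx.1.trans hy.1.symm)
  · have hsegpre : ∀ p q : P, IsPreconnected (segment ℝ p q) := fun p q =>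
      (convex_segment p q).isPreconnected
    refine isPreconnected_of_forall (h j) ?_
    rintro x ((hx | hx) | hx)
    · obtain ⟨i, hi⟩ := mem_iUnion.1 hx
      have hpS : a i + δ • v i j ∈ S j := Or.inl ⟨i, rfl⟩
      refine ⟨N i j ∪ segment ℝ (a i + δ • v i j) (h j), ?_, Or.inr (right_mem_segment _ _ _),
        Or.inl hi, ?_⟩
      · rintro y (hy | hy)
        · exact Or.inl (Or.inl (mem_iUnion_of_mem i hy))
        · exact Or.inl (Or.inr (mem_biUnion hpS hy))
      · refine IsPreconnected.union (a i + δ • v i j) (Or.inr ⟨δ, ⟨hrδ, le_rfl⟩, rfl⟩)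
          (left_mem_segment _ _ _) ?_ (hsegpre _ _)
        exact IsPreconnected.union (a i + r • v i j) (hmem i j) ⟨r, ⟨le_rfl, hrδ⟩, rfl⟩
          (Φ.convex_fiber _ _).isPreconnected (isPreconnected_Icc.image _ (by fun_prop))
    · obtain ⟨p, hp, hxp⟩ := mem_iUnion₂.1 hx
      exact ⟨segment ℝ p (h j), fun y hy => Or.inl (Or.inr (mem_biUnion hp hy)),
        right_mem_segment _ _ _, hxp, hsegpre _ _⟩
    · obtain ⟨rfl, hx⟩ := hx
      have hpS : p₀ ∈ S j := Or.inr ⟨rfl, rfl⟩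
      refine ⟨sphere 0 1 ∪ segment ℝ p₀ (h j), ?_, Or.inr (right_mem_segment _ _ _),
        Or.inl hx, ?_⟩
      · rintro y (hy | hy)
        · exact Or.inr ⟨rfl, hy⟩
        · exact Or.inl (Or.inr (mem_biUnion hpS hy))
      · refine IsPreconnected.union p₀ hp₀ (left_mem_segment _ _ _) ?_ (hsegpre _ _)
        refine isPreconnected_sphere ?_ 0 1
        rw [← Module.finrank_eq_rank]
        exact_mod_cast hP
  · exact fun x hx => Or.inr ⟨rfl, hx⟩
  · rintro j x ((hx | hx) | hx) hxD hxr
    · obtain ⟨i, hi⟩ := mem_iUnion.1 hx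
      obtain ⟨t, ht, hxt⟩ := hNΦ i j x hi
      rw [hxt, mem_closedBall_iff_norm, add_sub_cancel_left, norm_smul, he, mul_one,
        Real.norm_of_nonneg (hr.le.trans ht)] at hxr
      rw [hxt, le_antisymm hxr ht]
    · obtain ⟨p, hp, hxp⟩ := mem_iUnion₂.1 hx
      exact absurd hxr (hrseg j p hp x hxp hxD)
    · exact absurd hxD (hDsphere x hx.2)
  · intro j x hxD hxb
    obtain ⟨i, hi⟩ := Φ.exists_mem_closure_cell x
    let i' : Q := ⟨i, hrQ i x hi hxD (hxb ▸ hyr j)⟩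
    exact Or.inl (Or.inl (mem_iUnion_of_mem i' (Or.inl ⟨hi, (Φ.apply_eq i x hi).symm.trans hxb⟩)))

/-- Two continuous maps on closed sets covering a space can be glued. -/
lemma exists_glue {X Y : Type*} [TopologicalSpace X] [TopologicalSpace Y] {A B : Set X}
    (hA : IsClosed A) (hB : IsClosed B) (hAB : A ∪ B = univ) {f g : X → Y}
    (hf : ContinuousOn f A) (hg : ContinuousOn g B) (hfg : ∀ x ∈ A, x ∈ B → f x = g x) :
    ∃ F : C(X, Y), (∀ x ∈ A, F x = f x) ∧ ∀ x ∈ B, F x = g x := by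
  classical
  have hFA : ∀ x ∈ A, A.piecewise f g x = f x := fun x hx => piecewise_eq_of_mem _ _ _ hx
  have hFB : ∀ x ∈ B, A.piecewise f g x = g x := fun x hx => by
    by_cases hxA : x ∈ A
    · rw [hFA x hxA, hfg x hxA hx]
    · exact piecewise_eq_of_notMem _ _ _ hxA
  refine ⟨⟨A.piecewise f g, ?_⟩, hFA, hFB⟩
  rw [← continuousOn_univ, ← hAB]
  exact (hf.congr hFA).union_of_isClosed (hg.congr hFB) hA hB

section OnePoint

set_option linter.unusedSectionVars false

open OnePoint

variable {V : Type} [NormedAddCommGroup V] [InnerProductSpace ℝ V] [FiniteDimensional ℝ V]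

lemma tendsto_nhds_infty_of_norm {α : Type*} {l : Filter α} {f : α → OnePoint V}
    (h : ∀ R : ℝ, ∀ᶠ x in l, ∀ v : V, f x = v → R < ‖v‖) : Tendsto f l (𝓝 ∞) := by
  rw [hasBasis_nhds_infty.tendsto_right_iff]
  rintro s ⟨-, hs⟩
  obtain ⟨R, hR⟩ := hs.isBounded.exists_norm_le
  filter_upwards [h R] with x hx
  induction hfx : f x using OnePoint.rec with
  | infty => exact Or.inr rfl
  | coe v => exact Or.inl ⟨v, fun hv => (hR v hv).not_gt (hx v hfx), rfl⟩

lemma isClosed_coe_closedBall (b : V) (r : ℝ) :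
    IsClosed ((↑) '' closedBall b r : Set (OnePoint V)) :=
  isClosed_image_coe.2 ⟨isClosed_closedBall, isCompact_closedBall b r⟩

lemma isOpen_coe_ball (b : V) (r : ℝ) : IsOpen ((↑) '' ball b r : Set (OnePoint V)) :=
  isOpen_image_coe.2 isOpen_ball

lemma eventually_nhds_infty_lt_norm (R : ℝ) :
    ∀ᶠ z : OnePoint V in 𝓝 ∞, ∀ v : V, z = v → R < ‖v‖ := by
  filter_upwards [(isClosed_coe_closedBall (0 : V) R).isOpen_compl.mem_nhds
    infty_notMem_image_coe] with z hz v hzv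
  by_contra hv
  exact hz ⟨v, by simpa using hv, hzv.symm⟩

/-- The finite part of a point of the one-point compactification. -/
def finitePart (z : OnePoint V) : V := z.elim 0 id

@[simp] lemma finitePart_coe (v : V) : finitePart (v : OnePoint V) = v := rfl

lemma continuousAt_finitePart {z : OnePoint V} (hz : z ≠ ∞) : ContinuousAt finitePart z := by
  obtain ⟨v, rfl⟩ := ne_infty_iff_exists.1 hz
  exact continuousAt_coe.2 continuousAt_id

/-- Inversion at the point `b`. -/
noncomputable def inversionAt (b : V) (z : OnePoint V) : V :=
  z.elim 0 fun y => (‖y - b‖ ^ 2)⁻¹ • (y - b)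

/-- The inverse of inversion at the point `b`. -/
noncomputable def inversionSymm (b : V) (w : V) : OnePoint V :=
  open Classical in if w = 0 then ∞ else ((b + (‖w‖ ^ 2)⁻¹ • w : V) : OnePoint V)

lemma inversionAt_coe (b y : V) :
    inversionAt b (y : OnePoint V) = (‖y - b‖ ^ 2)⁻¹ • (y - b) := rfl

lemma inversionAt_infty (b : V) : inversionAt b (∞ : OnePoint V) = 0 := rfl

lemma norm_inv_sq_smul (w : V) : ‖(‖w‖ ^ 2)⁻¹ • w‖ = ‖w‖⁻¹ := by
  rw [norm_smul, norm_inv, norm_pow, norm_norm]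
  by_cases hw : ‖w‖ = 0
  · simp [hw]
  · field_simp

lemma inv_sq_smul_inv_sq_smul (w : V) : (‖(‖w‖ ^ 2)⁻¹ • w‖ ^ 2)⁻¹ • (‖w‖ ^ 2)⁻¹ • w = w := by
  rw [norm_inv_sq_smul, smul_smul]
  by_cases hw : ‖w‖ = 0
  · simp [norm_eq_zero.1 hw]
  · rw [show (‖w‖⁻¹ ^ 2)⁻¹ * (‖w‖ ^ 2)⁻¹ = 1 by field_simp, one_smul]

lemma norm_inversionAt_coe (b y : V) : ‖inversionAt b (y : OnePoint V)‖ = ‖y - b‖⁻¹ :=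
  norm_inv_sq_smul _

lemma inversionSymm_inversionAt {b : V} {z : OnePoint V} (hz : z ≠ b) :
    inversionSymm b (inversionAt b z) = z := by
  induction z using OnePoint.rec with
  | infty => simp [inversionSymm, inversionAt_infty]
  | coe y =>
    have hy : y - b ≠ 0 := sub_ne_zero.2 fun h => hz (by rw [h])
    have h1 : inversionAt b (y : OnePoint V) ≠ 0 := by
      rw [← norm_ne_zero_iff, norm_inversionAt_coe]
      exact inv_ne_zero (norm_ne_zero_iff.2 hy)
    rw [inversionSymm, if_neg h1, inversionAt_coe, inv_sq_smul_inv_sq_smul, add_sub_cancel]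

lemma inversionAt_inversionSymm (b w : V) : inversionAt b (inversionSymm b w) = w := by
  by_cases hw : w = 0
  · simp [hw, inversionSymm, inversionAt_infty]
  · rw [inversionSymm, if_neg hw, inversionAt_coe, add_sub_cancel_left, inv_sq_smul_inv_sq_smul]

lemma continuousAt_inversionAt {b : V} {z : OnePoint V} (hz : z ≠ b) :
    ContinuousAt (inversionAt b) z := by
  induction z using OnePoint.rec with
  | infty =>
    rw [continuousAt_infty', inversionAt_infty, coclosedCompact_eq_cocompact,
      tendsto_zero_iff_norm_tendsto_zero]
    simp only [Function.comp_def, norm_inversionAt_coe, ← dist_eq_norm]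
    exact tendsto_inv_atTop_zero.comp (tendsto_dist_right_cocompact_atTop b)
  | coe y =>
    have hy : y - b ≠ 0 := sub_ne_zero.2 fun h => hz (by rw [h])
    rw [continuousAt_coe]
    have h1 : (‖y - b‖ ^ 2) ≠ 0 := pow_ne_zero _ (norm_ne_zero_iff.2 hy)
    exact ContinuousAt.smul (ContinuousAt.inv₀ (by fun_prop) h1) (by fun_prop)

lemma inversionSymm_of_ne_zero (b : V) {w : V} (hw : w ≠ 0) :
    inversionSymm b w = ((b + (‖w‖ ^ 2)⁻¹ • w : V) : OnePoint V) := if_neg hw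

lemma continuous_inversionSymm (b : V) : Continuous (inversionSymm b) := by
  rw [continuous_iff_continuousAt]
  intro w
  by_cases hw : w = 0
  · subst hw
    rw [ContinuousAt, inversionSymm, if_pos rfl]
    refine tendsto_nhds_infty_of_norm fun R => ?_
    have hpos : 0 < (|R| + 1 + ‖b‖)⁻¹ := by positivity
    filter_upwards [ball_mem_nhds (0 : V) hpos] with w hw v hwv
    have hw0 : w ≠ 0 := by
      rintro rfl
      rw [inversionSymm, if_pos rfl] at hwv
      exact infty_ne_coe _ hwv
    rw [inversionSymm_of_ne_zero b hw0, coe_eq_coe] at hwv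
    rw [mem_ball_zero_iff] at hw
    have h1 := norm_sub_norm_le ((‖w‖ ^ 2)⁻¹ • w) (-b)
    rw [norm_inv_sq_smul, norm_neg, sub_neg_eq_add, add_comm _ b, hwv] at h1
    have h2 : |R| + 1 + ‖b‖ < ‖w‖⁻¹ := by
      rw [← inv_inv (|R| + 1 + ‖b‖)]
      exact inv_strictAnti₀ (norm_pos_iff.2 hw0) hw
    linarith [le_abs_self R]
  · have h1 : ContinuousAt (fun w : V => ((b + (‖w‖ ^ 2)⁻¹ • w : V) : OnePoint V)) w := by
      refine continuous_coe.continuousAt.comp ?_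
      have : (‖w‖ ^ 2) ≠ 0 := pow_ne_zero _ (norm_ne_zero_iff.2 hw)
      exact continuousAt_const.add
        (ContinuousAt.smul (ContinuousAt.inv₀ (by fun_prop) this) (by fun_prop))
    refine h1.congr ?_
    filter_upwards [isOpen_ne.mem_nhds hw] with u hu
    rw [inversionSymm_of_ne_zero b hu]

end OnePoint

/-- A continuous map is constant on the set `A`. -/
def ConstOn {X Y : Type*} [TopologicalSpace X] [TopologicalSpace Y] (A : Set X) (f : C(X, Y)) :
    Prop :=
  ∀ x ∈ A, ∀ x' ∈ A, f x = f x'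

lemma homotopicWith_constOn {X Y : Type*} [TopologicalSpace X] [TopologicalSpace Y] {A : Set X}
    {f g : C(X, Y)} (H : C(I × X, Y)) (h0 : ∀ x, H (0, x) = f x) (h1 : ∀ x, H (1, x) = g x)
    (hA : ∀ t, ∀ x ∈ A, ∀ x' ∈ A, H (t, x) = H (t, x')) : f.HomotopicWith g (ConstOn A) :=
  ⟨{ toContinuousMap := H
     map_zero_left := h0
     map_one_left := h1
     prop' := fun t x hx x' hx' => hA t x hx x' hx' }⟩

section OnePoint

open OnePoint

variable {V : Type} [NormedAddCommGroup V] [InnerProductSpace ℝ V] [FiniteDimensional ℝ V]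

/-- A map into a ball agreeing with `β` on `Y`, equal to `c j` exactly on `Z j` away from `Y`. -/
lemma exists_extension_closedBall {X J : Type*} [MetricSpace X] [Finite J] {Y : Set X}
    (hY : IsClosed Y) {β : X → V} (hβ : ContinuousOn β Y) {R : ℝ}
    (hβR : ∀ x ∈ Y, ‖β x‖ ≤ R) {Z : J → Set X} (hZ : ∀ j, IsClosed (Z j))
    (hdisj : ∀ i j, i ≠ j → Disjoint (Z i) (Z j)) (j₀ : J) (hne : (Z j₀).Nonempty)
    {c : J → V} (hc : ∀ j, ‖c j‖ = R) (hcinj : Function.Injective c) (hR : 0 < R)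
    (hβZ : ∀ j, ∀ x ∈ Z j, x ∈ Y → β x = c j) :
    ∃ T : C(X, V), (∀ x, ‖T x‖ ≤ R) ∧ (∀ x ∈ Y, T x = β x) ∧ (∀ j, ∀ x ∈ Z j, T x = c j) ∧
      ∀ j x, x ∉ Y → T x = c j → x ∈ Z j := by
  classical
  set g : X → V := fun x => if h : ∃ j, x ∈ Z j then c h.choose else β x with hg
  have hgZ : ∀ j, ∀ x ∈ Z j, g x = c j := by
    intro j x hx
    have h : ∃ j, x ∈ Z j := ⟨j, hx⟩
    have : h.choose = j := by
      by_contra hne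
      exact disjoint_left.1 (hdisj _ _ hne) h.choose_spec hx
    simp only [hg, dif_pos h, this]
  have hgY : ∀ x ∈ Y, g x = β x := by
    intro x hx
    by_cases h : ∃ j, x ∈ Z j
    · obtain ⟨j, hj⟩ := h
      rw [hgZ j x hj, hβZ j x hj hx]
    · simp only [hg, dif_neg h]
  have hUcl : IsClosed (⋃ j, Z j) := isClosed_iUnion_of_finite hZ
  set C : Set X := Y ∪ ⋃ j, Z j with hC
  have hCcl : IsClosed C := hY.union hUcl
  have hgC : ContinuousOn g C := by
    refine ContinuousOn.union_of_isClosed (hβ.congr hgY) ?_ hY hUcl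
    exact (locallyFinite_of_finite Z).continuousOn_iUnion hZ
      fun j => (continuousOn_const (c := c j)).congr (hgZ j)
  have hgR : ∀ x ∈ C, g x ∈ closedBall (0 : V) R := by
    rintro x (hx | hx)
    · rw [hgY x hx, mem_closedBall_zero_iff]
      exact hβR x hx
    · obtain ⟨j, hj⟩ := mem_iUnion.1 hx
      rw [hgZ j x hj, mem_closedBall_zero_iff, hc]
  have := Metric.instTietzeExtensionClosedBall ℝ (0 : V) hR
  obtain ⟨T₀, hT₀⟩ := ContinuousMap.exists_restrict_eq hCcl
    (⟨fun x => ⟨g x, hgR x x.2⟩,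
      (continuousOn_iff_continuous_domRestrict.1 hgC).subtype_mk _⟩ : C(C, closedBall (0 : V) R))
  have hT₀C : ∀ x ∈ C, (T₀ x : V) = g x := fun x hx =>
    congrArg Subtype.val (DFunLike.congr_fun hT₀ ⟨x, hx⟩)
  have hT₀R : ∀ x, ‖(T₀ x : V)‖ ≤ R := fun x => mem_closedBall_zero_iff.1 (T₀ x).2
  have hden : ∀ x, 0 < 1 + infDist x C := fun x => by linarith [infDist_nonneg (x := x) (s := C)]
  have hCne : C.Nonempty := hne.mono ((subset_iUnion Z j₀).trans subset_union_right)
  have hχC : ∀ x ∈ C, (1 + infDist x C)⁻¹ = 1 := fun x hx => by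
    rw [infDist_zero_of_mem hx, add_zero, inv_one]
  have hχ1 : ∀ x, (1 + infDist x C)⁻¹ ≤ 1 := fun x =>
    inv_le_one_of_one_le₀ (by linarith [infDist_nonneg (x := x) (s := C)])
  have hχlt : ∀ x, x ∉ C → (1 + infDist x C)⁻¹ < 1 := fun x hx =>
    inv_lt_one_of_one_lt₀ (by linarith [(hCcl.notMem_iff_infDist_pos hCne).1 hx])
  refine ⟨⟨fun x => (1 + infDist x C)⁻¹ • (T₀ x : V), ?_⟩, ?_, ?_, ?_, ?_⟩
  · refine Continuous.smul (Continuous.inv₀ ?_ fun x => (hden x).ne') (by fun_prop)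
    exact continuous_const.add (continuous_infDist_pt C)
  · intro x
    simp only [ContinuousMap.coe_mk, norm_smul, norm_inv, Real.norm_of_nonneg (hden x).le]
    exact (mul_le_mul (hχ1 x) (hT₀R x) (norm_nonneg _) zero_le_one).trans (one_mul R).le
  · intro x hx
    simp only [ContinuousMap.coe_mk]
    rw [hχC x (Or.inl hx), one_smul, hT₀C x (Or.inl hx), hgY x hx]
  · intro j x hx
    have hxC : x ∈ C := Or.inr (mem_iUnion.2 ⟨j, hx⟩)
    simp only [ContinuousMap.coe_mk]
    rw [hχC x hxC, one_smul, hT₀C x hxC, hgZ j x hx]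
  · intro j x hxY hx
    simp only [ContinuousMap.coe_mk] at hx
    by_cases hxC : x ∈ C
    · obtain ⟨i, hi⟩ := mem_iUnion.1 (hxC.resolve_left hxY)
      rw [hχC x hxC, one_smul, hT₀C x hxC, hgZ i x hi] at hx
      exact hcinj hx ▸ hi
    · exfalso
      have h1 : ‖(1 + infDist x C)⁻¹ • (T₀ x : V)‖ = R := by rw [hx, hc]
      rw [norm_smul, norm_inv, Real.norm_of_nonneg (hden x).le] at h1
      have h2 : (1 + infDist x C)⁻¹ * ‖(T₀ x : V)‖ ≤ (1 + infDist x C)⁻¹ * R :=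
        mul_le_mul_of_nonneg_left (hT₀R x) (inv_nonneg.2 (hden x).le)
      nlinarith [hχlt x hxC]

theorem exists_homotopicWith_preimage_eq {X J : Type*} [MetricSpace X] [Finite J]
    (F : C(X, OnePoint V)) {b : V} {r : ℝ} (hr : 0 < r) {e : J → V} (he : ∀ j, ‖e j‖ = 1)
    (hinj : Function.Injective e) {Z : J → Set X} (hZ : ∀ j, IsClosed (Z j))
    (hdisj : ∀ i j, i ≠ j → Disjoint (Z i) (Z j)) (j₀ : J) (hne : (Z j₀).Nonempty)
    (hZF : ∀ j, ∀ x ∈ Z j, F x ∈ ((↑) '' closedBall b r : Set (OnePoint V)) →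
      F x = ((b + r • e j : V) : OnePoint V))
    (hFZ : ∀ j x, F x = ((b + r • e j : V) : OnePoint V) → x ∈ Z j)
    {A : Set X} (hA : A ⊆ Z j₀) (hFA : ConstOn A F) :
    ∃ F' : C(X, OnePoint V), F.HomotopicWith F' (ConstOn A) ∧
      ∀ j x, F' x = ((b + r • e j : V) : OnePoint V) ↔ x ∈ Z j := by
  have hbe : ∀ j, ‖b + r • e j - b‖ = r := fun j => by
    rw [add_sub_cancel_left, norm_smul, he, mul_one, Real.norm_of_nonneg hr.le]
  set c : J → V := fun j => inversionAt b ((b + r • e j : V) : OnePoint V) with hcdef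
  have hc : ∀ j, ‖c j‖ = r⁻¹ := fun j => by rw [hcdef]; simp only [norm_inversionAt_coe, hbe]
  have hneb : ∀ j, ((b + r • e j : V) : OnePoint V) ≠ b := fun j h => by
    have := hbe j
    rw [coe_eq_coe.1 h, sub_self, norm_zero] at this
    exact hr.ne this
  have hsymm : ∀ j, inversionSymm b (c j) = ((b + r • e j : V) : OnePoint V) := fun j =>
    inversionSymm_inversionAt (hneb j)
  have hcinj : Function.Injective c := fun i j hij => by
    have h1 := hsymm i
    rw [hij, hsymm, coe_eq_coe, add_right_inj] at h1
    exact hinj (smul_right_injective V hr.ne' h1.symm)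
  set X₀ : Set X := F ⁻¹' ((↑) '' ball b r : Set (OnePoint V))ᶜ with hX₀
  set X₁ : Set X := F ⁻¹' ((↑) '' closedBall b r : Set (OnePoint V)) with hX₁
  have hX₀cl : IsClosed X₀ := (isOpen_coe_ball b r).isClosed_compl.preimage F.continuous
  have hX₁cl : IsClosed X₁ := (isClosed_coe_closedBall b r).preimage F.continuous
  have hcover : X₀ ∪ X₁ = univ := by
    refine eq_univ_of_forall fun x => ?_
    by_cases hx : F x ∈ ((↑) '' ball b r : Set (OnePoint V))
    · exact Or.inr (image_mono ball_subset_closedBall hx)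
    · exact Or.inl hx
  set β : X → V := fun x => inversionAt b (F x) with hβdef
  have hX₀b : ∀ x ∈ X₀, F x ≠ b := fun x hx h => hx ⟨b, mem_ball_self hr, h.symm⟩
  have hβ : ContinuousOn β X₀ := fun x hx =>
    ((continuousAt_inversionAt (hX₀b x hx)).comp F.continuous.continuousAt).continuousWithinAt
  have hβR : ∀ x ∈ X₀, ‖β x‖ ≤ r⁻¹ := by
    intro x hx
    simp only [hβdef]
    induction hFx : F x using OnePoint.rec with
    | infty => simp [inversionAt_infty, hr.le]
    | coe y =>
      rw [norm_inversionAt_coe]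
      refine inv_anti₀ hr ?_
      by_contra hlt
      exact hx ⟨y, by rwa [mem_ball, dist_eq_norm, ← not_le], hFx.symm⟩
  obtain ⟨T, hTR, hTY, hTZ, hTne⟩ := exists_extension_closedBall (hX₀cl.inter hX₁cl)
    (hβ.mono inter_subset_left) (R := r⁻¹) (fun x hx => hβR x hx.1) hZ hdisj j₀ hne hc hcinj
    (inv_pos.2 hr) (fun j x hx hxY => by
      simp only [hβdef, hcdef]
      rw [hZF j x hx hxY.2])
  have hX₁T : ∀ x ∈ X₀, x ∉ X₁ → ∀ j, T x = c j ↔ x ∈ Z j := fun x _ hx j =>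
    ⟨hTne j x (fun h => hx h.2), hTZ j x⟩
  obtain ⟨H, hH₀, hH₁⟩ := exists_glue (X := I × X) (A := Prod.snd ⁻¹' X₀) (B := Prod.snd ⁻¹' X₁)
    (hX₀cl.preimage continuous_snd) (hX₁cl.preimage continuous_snd)
    (by rw [← preimage_union, hcover, preimage_univ])
    (f := fun p => inversionSymm b ((1 - (p.1 : ℝ)) • β p.2 + (p.1 : ℝ) • T p.2))
    (g := fun p => F p.2)
    ((continuous_inversionSymm b).comp_continuousOn
      ((ContinuousOn.smul (by fun_prop) (hβ.comp continuousOn_snd fun p hp => hp)).add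
        (by fun_prop)))
    (by fun_prop) (by
      rintro ⟨t, x⟩ hx hx'
      simp only
      rw [hTY x ⟨hx, hx'⟩, ← add_smul, sub_add_cancel, one_smul]
      exact inversionSymm_inversionAt (hX₀b x hx))
  refine ⟨H.comp ((ContinuousMap.const X 1).prodMk (.id X)), homotopicWith_constOn H ?_ ?_ ?_, ?_⟩
  · intro x
    rcases (hcover ▸ mem_univ x : x ∈ X₀ ∪ X₁) with hx | hx
    · rw [hH₀ (0, x) hx]
      simp only [Icc.coe_zero, sub_zero, one_smul, zero_smul, add_zero]
      exact inversionSymm_inversionAt (hX₀b x hx)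
    · exact hH₁ (0, x) hx
  · exact fun x => rfl
  · intro t x hx x' hx'
    rcases (hcover ▸ mem_univ x : x ∈ X₀ ∪ X₁) with h | h
    · have h' : x' ∈ X₀ := by
        rw [hX₀, mem_preimage, ← hFA x hx x' hx']
        exact h
      rw [hH₀ (t, x) h, hH₀ (t, x') h']
      simp only [hβdef]
      rw [hFA x hx x' hx', hTZ j₀ x (hA hx), hTZ j₀ x' (hA hx')]
    · have h' : x' ∈ X₁ := by
        rw [hX₁, mem_preimage, ← hFA x hx x' hx']
        exact h
      rw [hH₁ (t, x) h, hH₁ (t, x') h', hFA x hx x' hx']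
  · intro j x
    change H (1, x) = _ ↔ _
    by_cases hx : x ∈ X₁
    · rw [hH₁ (1, x) hx]
      exact ⟨hFZ j x, fun h => hZF j x h hx⟩
    · have hx0 : x ∈ X₀ := (hcover ▸ mem_univ x : x ∈ X₀ ∪ X₁).resolve_right hx
      rw [hH₀ (1, x) hx0, ← hX₁T x hx0 hx j, ← hsymm]
      simp only [Icc.coe_one, sub_self, one_smul, zero_smul, zero_add]
      refine ⟨fun h => ?_, fun h => by rw [h]⟩
      rw [← inversionAt_inversionSymm b (T x), h, inversionAt_inversionSymm]

end OnePoint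

section OnePoint

set_option linter.unusedSectionVars false

open OnePoint

variable {V : Type} [NormedAddCommGroup V] [InnerProductSpace ℝ V] [FiniteDimensional ℝ V]

/-- Finitely many points are seen in distinct directions from a suitable point. -/
lemma exists_distinct_directions {J : Type*} [Finite J] (hV : 2 ≤ Module.finrank ℝ V)
    {y : J → V} (hy : Function.Injective y) :
    ∃ o : V, (∀ j, y j ≠ o) ∧ Function.Injective fun j => ‖y j - o‖⁻¹ • (y j - o) := by
  have hfin : (range y).Finite := finite_range y
  have : Nontrivial V := Module.nontrivial_of_finrank_pos (R := ℝ) (by omega)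
  have : Infinite V := Module.Free.infinite ℝ V
  obtain ⟨o, ho, hoy⟩ := exists_hub (P := V) hfin
    (B := range fun j => (y j, (⊥ : Submodule ℝ V))) (finite_range _)
    (by rintro _ ⟨j, rfl⟩; simpa using hV) hfin.isClosed.isOpen_compl
    hfin.infinite_compl.nonempty
  have hne : ∀ j, y j ≠ o := fun j h => ho ⟨j, h⟩
  have key : ∀ i j, ‖y j - o‖⁻¹ • (y j - o) = ‖y i - o‖⁻¹ • (y i - o) →
      ‖y j - o‖ ≤ ‖y i - o‖ → j = i := by
    intro i j hij hle
    have hi : 0 < ‖y i - o‖ := norm_pos_iff.2 (sub_ne_zero.2 (hne i))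
    have hj : 0 < ‖y j - o‖ := norm_pos_iff.2 (sub_ne_zero.2 (hne j))
    refine hy (hoy (y i) ⟨i, rfl⟩ _ ⟨j, rfl⟩ (y j) ?_ (by simp))
    have h1 : y j - o = (‖y j - o‖ / ‖y i - o‖) • (y i - o) := by
      rw [div_eq_mul_inv, mul_smul, ← hij, smul_smul, mul_inv_cancel₀ hj.ne', one_smul]
    refine ⟨‖y j - o‖ / ‖y i - o‖, 1 - ‖y j - o‖ / ‖y i - o‖, by positivity,
      sub_nonneg.2 ((div_le_one hi).2 hle), by ring, ?_⟩
    calc _ = (‖y j - o‖ / ‖y i - o‖) • (y i - o) + o := by module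
      _ = y j := by rw [← h1, sub_add_cancel]
  refine ⟨o, hne, fun j i hij => ?_⟩
  rcases le_total ‖y j - o‖ ‖y i - o‖ with h | h
  · exact key i j hij h
  · exact (key j i hij.symm h).symm

/-- A positive bounded continuous function with prescribed values at finitely many points. -/
lemma exists_continuous_bounded_interpolation {J : Type*} [Finite J] {e : J → V}
    (he : Function.Injective e) {d : J → ℝ} (hd : ∀ j, 0 < d j) :
    ∃ μ : C(V, ℝ), (∀ j, μ (e j) = d j) ∧ ∃ lo hi : ℝ, 0 < lo ∧ ∀ v, lo ≤ μ v ∧ μ v ≤ hi := by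
  obtain ⟨lo, hlo, hlod⟩ : ∃ lo, 0 < lo ∧ ∀ j, lo ≤ d j := by
    rcases isEmpty_or_nonempty J with hJ | hJ
    · exact ⟨1, one_pos, fun j => hJ.elim j⟩
    · obtain ⟨i, hi⟩ := Finite.exists_min d
      exact ⟨d i, hd i, hi⟩
  obtain ⟨hi, hhi⟩ := (finite_range d).bddAbove
  have hfin : (range e).Finite := finite_range e
  have : Finite (range e) := hfin
  obtain ⟨μ, hμ⟩ := ContinuousMap.exists_restrict_eq hfin.isClosed
    (⟨fun x => Function.extend e d 0 (x : V), continuous_of_discreteTopology⟩ : C(range e, ℝ))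
  have hμe : ∀ j, μ (e j) = d j := fun j => by
    have := DFunLike.congr_fun hμ ⟨e j, j, rfl⟩
    simpa [he.extend_apply] using this
  refine ⟨⟨fun v => max lo (min hi (μ v)), by fun_prop⟩, fun j => ?_, lo, max lo hi, hlo,
    fun v => ⟨le_max_left _ _, max_le_max le_rfl (min_le_left _ _)⟩⟩
  simp only [ContinuousMap.coe_mk, hμe]
  rw [min_eq_right (hhi ⟨j, rfl⟩), max_eq_right (hlod j)]

lemma continuous_extension_onePoint {k : I × V → V} (hk : Continuous k) {lo C : ℝ} (hlo : 0 < lo)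
    (hkn : ∀ p, lo * ‖p.2‖ - C ≤ ‖k p‖) :
    Continuous fun p : I × OnePoint V => p.2.elim ∞ fun x => ((k (p.1, x) : V) : OnePoint V) := by
  rw [continuous_iff_continuousAt]
  rintro ⟨t, z⟩
  induction z using OnePoint.rec with
  | infty =>
    refine tendsto_nhds_infty_of_norm fun R => ?_
    have h1 : Tendsto Prod.snd (𝓝 (t, (∞ : OnePoint V))) (𝓝 ∞) := continuous_snd.tendsto _
    filter_upwards [h1.eventually (eventually_nhds_infty_lt_norm ((R + C) / lo))]
    rintro ⟨s, z⟩ hz v hv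
    induction z using OnePoint.rec with
    | infty => exact absurd hv (infty_ne_coe _)
    | coe x =>
      have h2 : k (s, x) = v := coe_eq_coe.1 hv
      have h3 := (div_lt_iff₀ hlo).1 (hz x rfl)
      have h4 := hkn (s, x)
      rw [h2] at h4
      simp only at h4
      linarith
  | coe x =>
    have hopen : IsOpenEmbedding (Prod.map id ((↑) : V → OnePoint V) : I × V → I × OnePoint V) :=
      IsOpenEmbedding.id.prodMap isOpenEmbedding_coe
    change ContinuousAt _ (Prod.map id ((↑) : V → OnePoint V) (t, x))
    rw [← hopen.continuousAt_iff]
    exact (continuous_coe.comp hk).continuousAt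

/-- A radial homeomorphism moves points of a small sphere to prescribed points. -/
theorem exists_radial_homotopy {J : Type*} [Finite J] (hV : 2 ≤ Module.finrank ℝ V)
    {y : J → V} (hy : Function.Injective y) :
    ∃ e : J → V, (∀ j, ‖e j‖ = 1) ∧ Function.Injective e ∧ ∀ (b : V) (r : ℝ), 0 < r →
      ∃ K : C(I × OnePoint V, OnePoint V), (∀ z, K (0, z) = z) ∧
        ∀ j z, K (1, z) = y j ↔ z = ((b + r • e j : V) : OnePoint V) := by
  obtain ⟨o, ho, hinj⟩ := exists_distinct_directions hV hy
  set e : J → V := fun j => ‖y j - o‖⁻¹ • (y j - o) with hedef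
  have hpos : ∀ j, 0 < ‖y j - o‖ := fun j => norm_pos_iff.2 (sub_ne_zero.2 (ho j))
  have he : ∀ j, ‖e j‖ = 1 := fun j => by
    simp only [hedef, norm_smul, norm_inv, norm_norm, inv_mul_cancel₀ (hpos j).ne']
  have hed : ∀ j, y j - o = ‖y j - o‖ • e j := fun j => by
    simp only [hedef, smul_smul, mul_inv_cancel₀ (hpos j).ne', one_smul]
  refine ⟨e, he, hinj, fun b r hr => ?_⟩
  obtain ⟨μ, hμe, lo, hi, hlo, hμ⟩ := exists_continuous_bounded_interpolation hinj
    (d := fun j => ‖y j - o‖ / r) fun j => div_pos (hpos j) hr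
  set ψ : V → V := fun w => μ (‖w‖⁻¹ • w) • w with hψdef
  have hψ : Continuous ψ := by
    rw [continuous_iff_continuousAt]
    intro w
    by_cases hw : w = 0
    · subst hw
      have h0 : ψ 0 = 0 := by simp [hψdef]
      rw [ContinuousAt, h0]
      refine squeeze_zero_norm (a := fun w => hi * ‖w‖) (fun w => ?_) ?_
      · simp only [hψdef, norm_smul]
        rw [Real.norm_of_nonneg (hlo.le.trans (hμ _).1)]
        exact mul_le_mul_of_nonneg_right (hμ _).2 (norm_nonneg _)
      · have : Continuous fun w : V => hi * ‖w‖ := by fun_prop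
        simpa using this.tendsto 0
    · exact ContinuousAt.smul (μ.continuous.continuousAt.comp (ContinuousAt.smul
        (ContinuousAt.inv₀ (by fun_prop) (norm_ne_zero_iff.2 hw)) continuousAt_id)) continuousAt_id
  set k : I × V → V := fun p =>
    (1 - (p.1 : ℝ)) • p.2 + (p.1 : ℝ) • (o + ψ (p.2 - b)) with hkdef
  have hk : Continuous k := by fun_prop
  have hkn : ∀ p, min 1 lo * ‖p.2‖ - (min 1 lo * ‖b‖ + ‖b‖ + ‖o‖) ≤ ‖k p‖ := by
    rintro ⟨t, x⟩
    set s : ℝ := (1 - (t : ℝ)) + t * μ (‖x - b‖⁻¹ • (x - b)) with hs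
    have hks : k (t, x) = s • (x - b) + ((1 - (t : ℝ)) • b + (t : ℝ) • o) := by
      simp only [hkdef, hψdef, hs]
      module
    have ht0 := t.2.1
    have ht1 := t.2.2
    have hms : min 1 lo ≤ s := by
      have h1 := (hμ (‖x - b‖⁻¹ • (x - b))).1
      have h2 : min 1 lo ≤ μ (‖x - b‖⁻¹ • (x - b)) := (min_le_right _ _).trans h1
      have h3 := min_le_left 1 lo
      nlinarith
    have hm0 : 0 < min 1 lo := lt_min one_pos hlo
    have h1 : ‖(1 - (t : ℝ)) • b + (t : ℝ) • o‖ ≤ ‖b‖ + ‖o‖ := by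
      refine (norm_add_le _ _).trans (add_le_add ?_ ?_)
      · rw [norm_smul, Real.norm_of_nonneg (by linarith)]
        exact mul_le_of_le_one_left (norm_nonneg _) (by linarith)
      · rw [norm_smul, Real.norm_of_nonneg ht0]
        exact mul_le_of_le_one_left (norm_nonneg _) ht1
    have h2 : min 1 lo * (‖x‖ - ‖b‖) ≤ ‖s • (x - b)‖ := by
      rw [norm_smul, Real.norm_of_nonneg (hm0.le.trans hms)]
      exact (mul_le_mul_of_nonneg_left (norm_sub_norm_le x b) hm0.le).trans
        (mul_le_mul_of_nonneg_right hms (norm_nonneg _))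
    have h3 := norm_sub_norm_le (s • (x - b)) (-((1 - (t : ℝ)) • b + (t : ℝ) • o))
    rw [norm_neg, sub_neg_eq_add, ← hks] at h3
    simp only
    nlinarith
  refine ⟨⟨_, continuous_extension_onePoint hk (lt_min one_pos hlo) hkn⟩, fun z => ?_,
    fun j z => ?_⟩
  · induction z using OnePoint.rec with
    | infty => rfl
    | coe x => simp [hkdef]
  · induction z using OnePoint.rec with
    | infty => exact ⟨fun h => absurd h (infty_ne_coe _), fun h => absurd h (infty_ne_coe _)⟩
    | coe x =>
      have hk1 : k (1, x) = o + ψ (x - b) := by simp [hkdef]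
      change ((k (1, x) : V) : OnePoint V) = y j ↔ _
      rw [coe_eq_coe, coe_eq_coe, hk1, ← eq_sub_iff_add_eq', hed, ← sub_eq_iff_eq_add']
      constructor
      · intro h
        have hw : x - b ≠ 0 := fun h0 => by
          have h1 : ψ (x - b) = 0 := by simp [hψdef, h0]
          rw [h1] at h
          have h2 : ‖‖y j - o‖ • e j‖ = 0 := by rw [← h, norm_zero]
          rw [norm_smul, he, mul_one, norm_norm] at h2
          exact (hpos j).ne' h2
        have hwp : 0 < ‖x - b‖ := norm_pos_iff.2 hw
        have hunit : ‖‖x - b‖⁻¹ • (x - b)‖ = 1 := by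
          rw [norm_smul, norm_inv, norm_norm, inv_mul_cancel₀ hwp.ne']
        have hwe : x - b = ‖x - b‖ • ‖x - b‖⁻¹ • (x - b) := by
          rw [smul_smul, mul_inv_cancel₀ hwp.ne', one_smul]
        have h1 : (μ (‖x - b‖⁻¹ • (x - b)) * ‖x - b‖) • ‖x - b‖⁻¹ • (x - b) =
            ‖y j - o‖ • e j := by
          rw [mul_smul, ← hwe, ← h]
        obtain ⟨h2, h3⟩ := smul_unit_eq hunit (he j)
          (mul_pos (hlo.trans_le (hμ _).1) hwp) (hpos j) h1
        rw [h3, hμe] at h2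
        have h4 : ‖x - b‖ = r := by
          have := (hpos j).ne'
          field_simp at h2
          exact h2
        rw [hwe, h3, h4]
      · intro h
        have hn : ‖r • e j‖ = r := by rw [norm_smul, he, mul_one, Real.norm_of_nonneg hr.le]
        simp only [hψdef]
        rw [h, hn, inv_smul_smul₀ hr.ne', hμe, smul_smul,
          div_mul_cancel₀ _ hr.ne']

end OnePoint

section OnePoint

open OnePoint

variable {P : Type} [NormedAddCommGroup P] [InnerProductSpace ℝ P] [FiniteDimensional ℝ P] {n : ℕ}

/-- A map from a ball is homotopic to one which is piecewise affine over a given small ball. -/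
lemma exists_piecewiseAffine_homotopicWith
    (E : C(closedBall (0 : P) 1, OnePoint (EuclideanSpace ℝ (Fin n))))
    (c : EuclideanSpace ℝ (Fin n))
    (hE : ConstOn {x : closedBall (0 : P) 1 | ‖(x : P)‖ = 1} E)
    (hc : ∀ x : closedBall (0 : P) 1, ‖(x : P)‖ = 1 →
      E x ∉ ((↑) '' closedBall c 1 : Set (OnePoint (EuclideanSpace ℝ (Fin n))))) :
    ∃ (Φ : PiecewiseAffine P (EuclideanSpace ℝ (Fin n)))
      (F : C(closedBall (0 : P) 1, OnePoint (EuclideanSpace ℝ (Fin n)))) (D Ω : Set P),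
      E.HomotopicWith F (ConstOn {x : closedBall (0 : P) 1 | ‖(x : P)‖ = 1}) ∧
      ConstOn {x : closedBall (0 : P) 1 | ‖(x : P)‖ = 1} F ∧
      IsCompact D ∧ D ⊆ ball 0 1 ∧ IsOpen Ω ∧ Ω ⊆ D ∧
      (∀ x ∈ D, Φ.toContinuousMap x ∈ ball c (1 / 2) → x ∈ Ω) ∧
      ∀ x : closedBall (0 : P) 1, ∀ v ∈ ball c (1 / 2),
        F x = (v : OnePoint (EuclideanSpace ℝ (Fin n))) ↔
          (x : P) ∈ D ∧ Φ.toContinuousMap x = v := by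
  set X₁ : Set (closedBall (0 : P) 1) :=
    E ⁻¹' ((↑) '' closedBall c 1 : Set (OnePoint (EuclideanSpace ℝ (Fin n)))) with hX₁
  set X₀ : Set (closedBall (0 : P) 1) :=
    E ⁻¹' ((↑) '' ball c 1 : Set (OnePoint (EuclideanSpace ℝ (Fin n))))ᶜ with hX₀
  have hX₁cl : IsClosed X₁ := (isClosed_coe_closedBall c 1).preimage E.continuous
  have hX₀cl : IsClosed X₀ := (isOpen_coe_ball c 1).isClosed_compl.preimage E.continuous
  have hcover : X₁ ∪ X₀ = univ := by
    refine eq_univ_of_forall fun x => ?_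
    by_cases hx : E x ∈ ((↑) '' ball c 1 : Set (OnePoint (EuclideanSpace ℝ (Fin n))))
    · exact Or.inl (image_mono ball_subset_closedBall hx)
    · exact Or.inr hx
  have hX₁ball : ∀ x ∈ X₁, (x : P) ∈ ball (0 : P) 1 := by
    intro x hx
    rw [mem_ball_zero_iff]
    exact lt_of_le_of_ne (mem_closedBall_zero_iff.1 x.2) fun h => hc x h hx
  have hcpt : CompactSpace (closedBall (0 : P) 1) :=
    isCompact_iff_compactSpace.1 (isCompact_closedBall 0 1)
  set D : Set P := (↑) '' X₁ with hD
  have hDcpt : IsCompact D := hX₁cl.isCompact.image continuous_subtype_val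
  have hmemD : ∀ x : closedBall (0 : P) 1, (x : P) ∈ D ↔ x ∈ X₁ := fun x =>
    Subtype.val_injective.mem_set_image
  have hDle : ∀ x ∈ D, x ∈ closedBall (0 : P) 1 := by
    rintro _ ⟨x, -, rfl⟩
    exact x.2
  set φ : closedBall (0 : P) 1 → EuclideanSpace ℝ (Fin n) := fun x => finitePart (E x) with hφ
  have hfin : ∀ x ∈ X₁, E x = (φ x : OnePoint (EuclideanSpace ℝ (Fin n))) := by
    rintro x ⟨v, -, hv⟩
    simp only [hφ]
    rw [← hv, finitePart_coe]
  have hφcont : ContinuousOn φ X₁ := by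
    intro x hx
    refine (ContinuousAt.comp (continuousAt_finitePart ?_)
      E.continuous.continuousAt).continuousWithinAt
    rw [hfin x hx]
    exact coe_ne_infty _
  have hφmem : ∀ x ∈ X₁, ‖φ x - c‖ ≤ 1 := by
    rintro x ⟨v, hv, hv'⟩
    simp only [hφ]
    rw [← hv', finitePart_coe, ← dist_eq_norm]
    exact hv
  obtain ⟨Φ, hΦ⟩ := exists_piecewiseAffine_near hDcpt
    (⟨fun x : D => φ ⟨x, hDle x x.2⟩, hφcont.comp_continuous (by fun_prop)
      fun x => (hmemD _).1 x.2⟩ : C(D, EuclideanSpace ℝ (Fin n))) (ε := 1 / 4) (by norm_num)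
  have hΦ' : ∀ x ∈ X₁, ‖Φ.toContinuousMap x - φ x‖ < 1 / 4 := fun x hx =>
    hΦ ⟨x, (hmemD x).2 hx⟩
  set u : ℝ → ℝ := fun s => min 1 (max 0 (4 * (1 - s))) with hu
  have hu1 : ∀ s ≤ 3 / 4, u s = 1 := fun s hs => by
    simp only [hu]
    rw [max_eq_right (by linarith), min_eq_left (by linarith)]
  have hu0 : u 1 = 0 := by simp [hu]
  have hur : ∀ s, 0 ≤ u s ∧ u s ≤ 1 := fun s =>
    ⟨le_min zero_le_one (le_max_left _ _), min_le_left _ _⟩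
  have hucont : Continuous u := by fun_prop
  obtain ⟨H, hH₁, hH₀⟩ := exists_glue (X := I × closedBall (0 : P) 1)
    (A := Prod.snd ⁻¹' X₁) (B := Prod.snd ⁻¹' X₀)
    (hX₁cl.preimage continuous_snd) (hX₀cl.preimage continuous_snd)
    (by rw [← preimage_union, hcover, preimage_univ])
    (f := fun p => ((φ p.2 + ((p.1 : ℝ) * u ‖φ p.2 - c‖) • (Φ.toContinuousMap p.2 - φ p.2) :
      EuclideanSpace ℝ (Fin n)) : OnePoint (EuclideanSpace ℝ (Fin n))))
    (g := fun p => E p.2)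
    (by
      have h1 : ContinuousOn (fun p : I × closedBall (0 : P) 1 => φ p.2) (Prod.snd ⁻¹' X₁) :=
        hφcont.comp continuousOn_snd fun p hp => hp
      refine continuous_coe.comp_continuousOn (h1.add (ContinuousOn.smul (ContinuousOn.mul
        (by fun_prop) (hucont.comp_continuousOn (h1.sub continuousOn_const).norm))
        (ContinuousOn.sub (by fun_prop) h1))))
    (by fun_prop) (by
      rintro ⟨t, x⟩ hx hx'
      have h1 : ‖φ x - c‖ = 1 := by
        refine le_antisymm (hφmem x hx) ?_
        by_contra hlt
        exact hx' ⟨φ x, by rwa [mem_ball, dist_eq_norm, ← not_le], (hfin x hx).symm⟩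
      simp only [h1, hu0, mul_zero, zero_smul, add_zero]
      exact (hfin x hx).symm)
  have hbd : ∀ x : closedBall (0 : P) 1, ‖(x : P)‖ = 1 → x ∈ X₀ := fun x hx h =>
    hc x hx (image_mono ball_subset_closedBall h)
  have hmid : ∀ x ∈ X₁, Φ.toContinuousMap x ∈ ball c (1 / 2) → ‖φ x - c‖ < 3 / 4 := by
    intro x hx h
    rw [mem_ball, dist_eq_norm] at h
    have h1 := norm_sub_le (Φ.toContinuousMap x - c) (Φ.toContinuousMap x - φ x)
    rw [sub_sub_sub_cancel_left] at h1
    linarith [hΦ' x hx]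
  refine ⟨Φ, H.comp ((ContinuousMap.const _ 1).prodMk (.id _)), D,
    (↑) '' (E ⁻¹' ((↑) '' ball c (3 / 4) : Set (OnePoint (EuclideanSpace ℝ (Fin n))))),
    homotopicWith_constOn H ?_ ?_ ?_, ?_, hDcpt, ?_, ?_, ?_, ?_, ?_⟩
  · intro x
    rcases (hcover ▸ mem_univ x : x ∈ X₁ ∪ X₀) with hx | hx
    · rw [hH₁ (0, x) hx]
      simp only [Icc.coe_zero, zero_mul, zero_smul, add_zero]
      exact (hfin x hx).symm
    · exact hH₀ (0, x) hx
  · exact fun x => rfl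
  · intro t x hx x' hx'
    rw [hH₀ (t, x) (hbd x hx), hH₀ (t, x') (hbd x' hx')]
    exact hE x hx x' hx'
  · intro x hx x' hx'
    change H (1, x) = H (1, x')
    rw [hH₀ (1, x) (hbd x hx), hH₀ (1, x') (hbd x' hx')]
    exact hE x hx x' hx'
  · rintro _ ⟨x, hx, rfl⟩
    exact hX₁ball x hx
  · obtain ⟨U, hU, hUE⟩ := isOpen_induced_iff.1 ((isOpen_coe_ball c (3 / 4)).preimage E.continuous)
    have h34 : ∀ x, E x ∈ ((↑) '' ball c (3 / 4) : Set (OnePoint (EuclideanSpace ℝ (Fin n)))) →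
        x ∈ X₁ := fun x hx => image_mono
      ((ball_subset_ball (by norm_num)).trans ball_subset_closedBall) hx
    convert hU.inter (isOpen_ball (x := (0 : P)) (ε := 1)) using 1
    rw [← hUE]
    ext x
    constructor
    · rintro ⟨z, hz, rfl⟩
      refine ⟨hz, hX₁ball z (h34 z ?_)⟩
      rw [hUE] at hz
      exact hz
    · rintro ⟨hxU, hxb⟩
      exact ⟨⟨x, ball_subset_closedBall hxb⟩, hxU, rfl⟩
  · refine image_mono (preimage_mono (image_mono ?_))
    exact (ball_subset_ball (by norm_num)).trans ball_subset_closedBall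
  · rintro _ ⟨x, hx, rfl⟩ h
    refine ⟨x, ⟨φ x, ?_, (hfin x hx).symm⟩, rfl⟩
    rw [mem_ball, dist_eq_norm]
    exact hmid x hx h
  · intro x v hv
    change H (1, x) = _ ↔ _
    rw [hmemD]
    by_cases hx : x ∈ X₁
    · rw [hH₁ (1, x) hx, coe_eq_coe]
      simp only [Icc.coe_one, one_mul, hx, true_and]
      constructor
      · intro h
        have h1 : ‖φ x - c‖ ≤ 3 / 4 := by
          have h2 : φ x - c = (v - c) - u ‖φ x - c‖ • (Φ.toContinuousMap x - φ x) := by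
            rw [← h]
            abel
          have h3 : ‖u ‖φ x - c‖ • (Φ.toContinuousMap x - φ x)‖ ≤ 1 / 4 := by
            rw [norm_smul, Real.norm_of_nonneg (hur _).1]
            exact (mul_le_of_le_one_left (norm_nonneg _) (hur _).2).trans (hΦ' x hx).le
          have h4 := norm_sub_le (v - c) (u ‖φ x - c‖ • (Φ.toContinuousMap x - φ x))
          rw [← h2] at h4
          rw [mem_ball, dist_eq_norm] at hv
          linarith
        rw [hu1 _ h1, one_smul, add_sub_cancel] at h
        exact h
      · intro h
        rw [hu1 _ (hmid x hx (h ▸ hv)).le, one_smul, add_sub_cancel, h]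
    · have hx0 : x ∈ X₀ := (hcover ▸ mem_univ x : x ∈ X₁ ∪ X₀).resolve_left hx
      simp only [hx, false_and, iff_false]
      rw [hH₀ (1, x) hx0]
      exact fun h => hx0 ⟨v, ball_subset_ball (by norm_num) hv, h.symm⟩

/-- A map from a ball sending the boundary to `y j₀` can be deformed so that all preimages of the
points `y j` become connected. -/
theorem exists_homotopicWith_isPreconnected_preimage {J : Type*} [Finite J]
    (hP : 2 ≤ Module.finrank ℝ P) (hn : 3 ≤ n) {y : J → EuclideanSpace ℝ (Fin n)}
    (hy : Function.Injective y) (j₀ : J)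
    (E : C(closedBall (0 : P) 1, OnePoint (EuclideanSpace ℝ (Fin n))))
    (hE : ∀ x : closedBall (0 : P) 1, ‖(x : P)‖ = 1 → E x = y j₀) :
    ∃ E' : C(closedBall (0 : P) 1, OnePoint (EuclideanSpace ℝ (Fin n))),
      E.HomotopicWith E' (ConstOn {x : closedBall (0 : P) 1 | ‖(x : P)‖ = 1}) ∧
      (∀ x : closedBall (0 : P) 1, ‖(x : P)‖ = 1 → E' x = y j₀) ∧
      ∀ j, IsPreconnected {x | E' x = y j} := by
  have hV : Module.finrank ℝ (EuclideanSpace ℝ (Fin n)) = n := by simp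
  obtain ⟨e, he, hinj, hK⟩ := exists_radial_homotopy (by omega) hy
  have hEA : ConstOn {x : closedBall (0 : P) 1 | ‖(x : P)‖ = 1} E := fun x hx x' hx' => by
    rw [hE x hx, hE x' hx']
  obtain ⟨Φ, F, D, Ω, hEF, hFA, hD, hDball, hΩ, hΩD, hΦΩ, hF⟩ :=
    exists_piecewiseAffine_homotopicWith E (y j₀ + (2 : ℝ) • e j₀) hEA (by
      rintro x hx ⟨v, hv, hvx⟩
      rw [hE x hx, coe_eq_coe] at hvx
      rw [hvx, mem_closedBall, dist_self_add_right, norm_smul, he] at hv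
      norm_num at hv)
  obtain ⟨b, r, hr, hbr, Z, hZc, hZ1, hZd, hZp, hZs, hZΦ, hΦZ⟩ :=
    exists_connecting_sets hP (by omega) Φ hD hDball hΩ hΩD (by norm_num : (0 : ℝ) < 1 / 2) hΦΩ
      j₀ he hinj
  have hbe : ∀ j, b + r • e j ∈ closedBall b r := fun j => by
    rw [mem_closedBall, dist_self_add_left, norm_smul, he, mul_one, Real.norm_of_nonneg hr.le]
  obtain ⟨F', hFF', hF'⟩ := exists_homotopicWith_preimage_eq F hr he hinj
    (Z := fun j => ((↑) ⁻¹' Z j : Set (closedBall (0 : P) 1)))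
    (fun j => (hZc j).isClosed.preimage continuous_subtype_val)
    (fun i j hij => (hZd i j hij).preimage _) j₀
    (by
      have : Nontrivial P := Module.nontrivial_of_finrank_pos (R := ℝ) (by omega)
      obtain ⟨x, hx⟩ := (NormedSpace.sphere_nonempty (x := (0 : P)) (r := 1)).2 zero_le_one
      exact ⟨⟨x, sphere_subset_closedBall hx⟩, hZs hx⟩)
    (fun j x hx => by
      rintro ⟨v, hv, hvx⟩
      obtain ⟨hxD, hxv⟩ := (hF x v (hbr hv)).1 hvx.symm
      rw [← hvx, coe_eq_coe, ← hxv]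
      exact hZΦ j x hx hxD (hxv ▸ hv))
    (fun j x hx => by
      obtain ⟨hxD, hxv⟩ := (hF x _ (hbr (hbe j))).1 hx
      exact hΦZ j x hxD hxv)
    (A := {x : closedBall (0 : P) 1 | ‖(x : P)‖ = 1})
    (fun x (hx : ‖(x : P)‖ = 1) => hZs (mem_sphere_zero_iff_norm.2 hx)) hFA
  obtain ⟨K, hK0, hK1⟩ := hK b r hr
  have hF'A : ConstOn {x : closedBall (0 : P) 1 | ‖(x : P)‖ = 1} F' := by
    obtain ⟨H⟩ := hFF'
    have h1 := H.prop' 1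
    intro x hx x' hx'
    have := h1 x hx x' hx'
    simpa using this
  have hE' : ∀ j (x : closedBall (0 : P) 1), K (1, F' x) = y j ↔ (x : P) ∈ Z j := fun j x =>
    (hK1 j _).trans (hF' j x)
  refine ⟨K.comp ((ContinuousMap.const _ 1).prodMk F'), (hEF.trans hFF').trans
    (homotopicWith_constOn (K.comp (.prodMap (.id I) F')) (fun x => hK0 _) (fun x => rfl) ?_),
    fun x hx => (hE' j₀ x).2 (hZs (mem_sphere_zero_iff_norm.2 hx)), fun j => ?_⟩
  · intro t x hx x' hx'
    change K (t, F' x) = K (t, F' x')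
    rw [hF'A x hx x' hx']
  · have h1 : {x : closedBall (0 : P) 1 | K (1, F' x) = y j} = (↑) ⁻¹' Z j := ext fun x => hE' j x
    change IsPreconnected {x : closedBall (0 : P) 1 | K (1, F' x) = y j}
    rw [h1, ← IsInducing.subtypeVal.isPreconnected_image, image_preimage_eq_of_subset]
    · exact hZp j
    · rw [Subtype.range_coe]
      exact hZ1 j

end OnePoint

/-- In a simply connected sphere, a homotopy through maps constant on `A` between two maps which
agree on `A` can be made relative to `A`. -/
lemma homotopicRel_of_homotopicWith_constOn {k : ℕ} (hk : 3 ≤ k) {X : Type*} [TopologicalSpace X]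
    [CompactSpace X] [T2Space X] {A : Set X} (hA : IsClosed A) {a₀ : X} (ha₀ : a₀ ∈ A)
    {f g : C(X, sphere (0 : EuclideanSpace ℝ (Fin k)) 1)}
    {q : sphere (0 : EuclideanSpace ℝ (Fin k)) 1}
    (h : f.HomotopicWith g (ConstOn A)) (hf : ∀ a ∈ A, f a = q) (hg : ∀ a ∈ A, g a = q) :
    f.HomotopicRel g A := by
  classical
  obtain ⟨H⟩ := h
  have hHA : ∀ t, ∀ a ∈ A, ∀ a' ∈ A, H (t, a) = H (t, a') := fun t => H.prop' t
  have hH0 : ∀ x, H (0, x) = f x := H.map_zero_left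
  have hH1 : ∀ x, H (1, x) = g x := H.map_one_left
  let ℓ : Path q q :=
    { toFun := fun t => H (t, a₀)
      continuous_toFun := by fun_prop
      source' := by rw [hH0, hf a₀ ha₀]
      target' := by rw [hH1, hg a₀ ha₀] }
  obtain ⟨Γ⟩ := loop_homotopic_refl hk ℓ
  have hΓ0 : ∀ t, Γ (0, t) = H (t, a₀) := fun t => Γ.map_zero_left t
  have hΓ1 : ∀ t, Γ (1, t) = q := fun t => Γ.map_one_left t
  have hΓs : ∀ s, Γ (s, 0) = q := fun s => Γ.source s
  have hΓt : ∀ s, Γ (s, 1) = q := fun s => Γ.target s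
  set T : Set (I × X) := {p | p.1 = 0 ∨ p.1 = 1} with hT
  have hTcl : IsClosed T :=
    (isClosed_eq continuous_fst continuous_const).union
      (isClosed_eq continuous_fst continuous_const)
  have hAcl : IsClosed (Prod.snd ⁻¹' A : Set (I × X)) := hA.preimage continuous_snd
  set K : (I × X) × I → sphere (0 : EuclideanSpace ℝ (Fin k)) 1 := fun p =>
    if p.1.2 ∈ A then Γ (p.2, p.1.1) else H p.1 with hK
  have hKA : ∀ t s, ∀ x ∈ A, K ((t, x), s) = Γ (s, t) := fun t s x hx => if_pos hx
  have hKT : ∀ t s x, (t = 0 ∨ t = 1) → K ((t, x), s) = H (t, x) := by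
    intro t s x ht
    by_cases hx : x ∈ A
    · rw [hKA t s x hx]
      rcases ht with rfl | rfl
      · rw [hΓs, hH0, hf x hx]
      · rw [hΓt, hH1, hg x hx]
    · exact if_neg hx
  obtain ⟨F, hF0, hFK⟩ := exists_homotopy_extension (hAcl.union hTcl) H.toContinuousMap K (by
    rw [union_prod]
    refine ContinuousOn.union_of_isClosed ?_ ?_ (hAcl.prod isClosed_univ) (hTcl.prod isClosed_univ)
    · refine ContinuousOn.congr (f := fun p => Γ (p.2, p.1.1)) (by fun_prop) ?_
      rintro ⟨⟨t, x⟩, s⟩ ⟨hx, -⟩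
      exact hKA t s x hx
    · refine ContinuousOn.congr (f := fun p => H p.1) (by fun_prop) ?_
      rintro ⟨⟨t, x⟩, s⟩ ⟨hx, -⟩
      exact hKT t s x hx) (by
    rintro ⟨t, x⟩ (hx | hx)
    · rw [hKA t 0 x hx, hΓ0]
      exact hHA t a₀ ha₀ x hx
    · exact hKT t 0 x hx)
  refine ⟨{ toFun := fun p => F (p, 1)
            continuous_toFun := by fun_prop
            map_zero_left := fun x => ?_
            map_one_left := fun x => ?_
            prop' := fun t x hx => ?_ }⟩
  · rw [hFK (0, x) (Or.inr (Or.inl rfl)), hKT 0 1 x (Or.inl rfl), hH0]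
  · rw [hFK (1, x) (Or.inr (Or.inr rfl)), hKT 1 1 x (Or.inr rfl), hH1]
  · change F ((t, x), 1) = f x
    rw [hFK (t, x) (Or.inl hx), hKA t 1 x hx, hΓ1, hf x hx]

/-- The sphere is the one-point compactification of Euclidean space, with any given point at
infinity. -/
lemma exists_homeomorph_onePoint {n : ℕ} (v : sphere (0 : EuclideanSpace ℝ (Fin (n + 1))) 1) :
    ∃ h : sphere (0 : EuclideanSpace ℝ (Fin (n + 1))) 1 ≃ₜ OnePoint (EuclideanSpace ℝ (Fin n)),
      h v = OnePoint.infty := by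
  have hv : ‖(v : EuclideanSpace ℝ (Fin (n + 1)))‖ = 1 := norm_eq_of_mem_sphere v
  have : Fact (Module.finrank ℝ (EuclideanSpace ℝ (Fin (n + 1))) = n + 1) := ⟨by simp⟩
  let e := (OrthonormalBasis.fromOrthogonalSpanSingleton (𝕜 := ℝ) n
    (ne_zero_of_mem_unit_sphere v)).repr.toHomeomorph
  refine ⟨(onePointHyperplaneHomeoUnitSphere hv).symm.trans e.onePointCongr, ?_⟩
  have h1 : (onePointHyperplaneHomeoUnitSphere hv).symm v = OnePoint.infty := by
    rw [Homeomorph.symm_apply_eq]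
    exact (OnePoint.equivOfIsEmbeddingOfRangeEq_apply_infty _ _ _ _).symm
  change e.onePointCongr ((onePointHyperplaneHomeoUnitSphere hv).symm v) = _
  rw [h1]
  rfl

lemma infinite_sphere {n : ℕ} (hn : 1 ≤ n) :
    Infinite (sphere (0 : EuclideanSpace ℝ (Fin (n + 1))) 1) := by
  have : Nontrivial (EuclideanSpace ℝ (Fin n)) :=
    Module.nontrivial_of_finrank_pos (R := ℝ) (by
      rw [finrank_euclideanSpace_fin]
      omega)
  have : Infinite (EuclideanSpace ℝ (Fin n)) := Module.Free.infinite ℝ _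
  exact Infinite.of_injective _ ((onePointEquivSphereOfFinrankEq (ι := Fin (n + 1))
    (V := EuclideanSpace ℝ (Fin n)) (by simp)).injective.comp OnePoint.coe_injective)

/-- A map from a ball to a sphere sending the boundary to `y j₀` can be deformed relative to the
boundary so that the preimages of the points `y j` become connected. -/
theorem exists_homotopicRel_isPreconnected_preimage {P : Type} [NormedAddCommGroup P]
    [InnerProductSpace ℝ P] [FiniteDimensional ℝ P] {J : Type*} [Finite J]
    (hP : 2 ≤ Module.finrank ℝ P) {n : ℕ} (hn : 3 ≤ n)
    {y : J → sphere (0 : EuclideanSpace ℝ (Fin (n + 1))) 1} (hy : Function.Injective y) (j₀ : J)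
    (E : C(closedBall (0 : P) 1, sphere (0 : EuclideanSpace ℝ (Fin (n + 1))) 1))
    (hE : ∀ x : closedBall (0 : P) 1, ‖(x : P)‖ = 1 → E x = y j₀) :
    ∃ E' : C(closedBall (0 : P) 1, sphere (0 : EuclideanSpace ℝ (Fin (n + 1))) 1),
      E.HomotopicRel E' {x | ‖(x : P)‖ = 1} ∧ ∀ j, IsPreconnected {x | E' x = y j} := by
  have := infinite_sphere (n := n) (by omega)
  obtain ⟨v, hv⟩ := (finite_range y).infinite_compl.nonempty
  obtain ⟨h, hh⟩ := exists_homeomorph_onePoint v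
  have hyv : ∀ j, h (y j) ≠ OnePoint.infty := fun j hj =>
    hv ⟨j, h.injective (hj.trans hh.symm)⟩
  choose y' hy' using fun j => OnePoint.ne_infty_iff_exists.1 (hyv j)
  have hy'inj : Function.Injective y' := fun i j hij => hy (h.injective (by
    rw [← hy' i, ← hy' j, hij]))
  obtain ⟨E', hEE', hE', hpre⟩ := exists_homotopicWith_isPreconnected_preimage hP hn hy'inj j₀
    ((h : C(_, _)).comp E) (fun x hx => by
      rw [hy']
      exact congrArg h (hE x hx))
  have hiff : ∀ j x, h.symm (E' x) = y j ↔ E' x = y' j := fun j x => by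
    rw [Homeomorph.symm_apply_eq, hy']
  have hcpt : CompactSpace (closedBall (0 : P) 1) :=
    isCompact_iff_compactSpace.1 (isCompact_closedBall 0 1)
  have : Nontrivial P := Module.nontrivial_of_finrank_pos (R := ℝ) (by omega)
  obtain ⟨a, ha⟩ := (NormedSpace.sphere_nonempty (x := (0 : P)) (r := 1)).2 zero_le_one
  refine ⟨(h.symm : C(_, _)).comp E', ?_, fun j => ?_⟩
  · refine homotopicRel_of_homotopicWith_constOn (by omega) (q := y j₀)
      (A := {x : closedBall (0 : P) 1 | ‖(x : P)‖ = 1})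
      (isClosed_eq (by fun_prop) continuous_const) (a₀ := ⟨a, sphere_subset_closedBall ha⟩)
      (mem_sphere_zero_iff_norm.1 ha) ?_ hE (fun x hx => (hiff j₀ x).2 (hE' x hx))
    obtain ⟨H⟩ := hEE'
    refine homotopicWith_constOn ⟨fun p => h.symm (H p), by fun_prop⟩ (fun x => ?_)
      (fun x => ?_) fun t x hx x' hx' => congrArg h.symm (H.prop' t x hx x' hx')
    · change h.symm (H (0, x)) = E x
      rw [H.apply_zero]
      exact h.symm_apply_apply _
    · change h.symm (H (1, x)) = h.symm (E' x)
      rw [H.apply_one]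
  · change IsPreconnected {x | h.symm (E' x) = y j}
    simp only [hiff]
    exact hpre j

/-- The decomposition of a sphere into two hemispheres, each parametrised by a ball. -/
lemma exists_hemispheres {E : Type*} [NormedAddCommGroup E] [InnerProductSpace ℝ E] {v : E}
    (hv : ‖v‖ = 1) :
    ∃ (s₁ s₂ : C(closedBall (0 : (Submodule.span ℝ {v})ᗮ) 1, sphere (0 : E) 1))
      (π : C(sphere (0 : E) 1, closedBall (0 : (Submodule.span ℝ {v})ᗮ) 1)),
      (∀ x, π (s₁ x) = x) ∧ (∀ x, π (s₂ x) = x) ∧ (∀ z, s₁ (π z) = z ∨ s₂ (π z) = z) ∧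
      ∀ x, s₁ x = s₂ x ↔ ‖(x : (Submodule.span ℝ {v})ᗮ)‖ = 1 := by
  have horth : ∀ x : (Submodule.span ℝ {v})ᗮ, inner ℝ v (x : E) = 0 := fun x =>
    Submodule.mem_orthogonal_singleton_iff_inner_right.1 x.2
  have hvv : inner ℝ v v = (1 : ℝ) := by rw [real_inner_self_eq_norm_sq, hv, one_pow]
  have hv0 : v ≠ 0 := fun h => by simp [h] at hv
  have hnorm : ∀ (x : (Submodule.span ℝ {v})ᗮ) (c : ℝ),
      ‖(x : E) + c • v‖ ^ 2 = ‖x‖ ^ 2 + c ^ 2 := by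
    intro x c
    rw [norm_add_sq_real, inner_smul_right, real_inner_comm, horth, norm_smul, hv,
      Submodule.coe_norm, Real.norm_eq_abs, mul_one, sq_abs]
    ring
  have hsq : ∀ x : closedBall (0 : (Submodule.span ℝ {v})ᗮ) 1,
      Real.sqrt (1 - ‖(x : (Submodule.span ℝ {v})ᗮ)‖ ^ 2) ^ 2 =
        1 - ‖(x : (Submodule.span ℝ {v})ᗮ)‖ ^ 2 := fun x => by
    refine Real.sq_sqrt (sub_nonneg.2 ?_)
    exact pow_le_one₀ (norm_nonneg _) (mem_closedBall_zero_iff.1 x.2)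
  have hsphere : ∀ (x : closedBall (0 : (Submodule.span ℝ {v})ᗮ) 1) (c : ℝ),
      c ^ 2 = 1 - ‖(x : (Submodule.span ℝ {v})ᗮ)‖ ^ 2 →
      ((x : (Submodule.span ℝ {v})ᗮ) : E) + c • v ∈ sphere (0 : E) 1 := fun x c hc => by
    rw [mem_sphere_zero_iff_norm, ← pow_eq_one_iff_of_nonneg (norm_nonneg _) two_ne_zero, hnorm,
      hc, add_sub_cancel]
  have hmem : ∀ z : E, z - inner ℝ v z • v ∈ (Submodule.span ℝ {v})ᗮ := fun z => by
    rw [Submodule.mem_orthogonal_singleton_iff_inner_right, inner_sub_right, inner_smul_right,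
      hvv, mul_one, sub_self]
  have hpn : ∀ z : sphere (0 : E) 1,
      ‖(⟨z - inner ℝ v (z : E) • v, hmem z⟩ : (Submodule.span ℝ {v})ᗮ)‖ ^ 2 =
        1 - inner ℝ v (z : E) ^ 2 := fun z => by
    have h1 := hnorm ⟨z - inner ℝ v (z : E) • v, hmem z⟩ (inner ℝ v (z : E))
    rw [sub_add_cancel, norm_eq_of_mem_sphere] at h1
    linarith
  have hball : ∀ z : sphere (0 : E) 1,
      (⟨z - inner ℝ v (z : E) • v, hmem z⟩ : (Submodule.span ℝ {v})ᗮ) ∈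
        closedBall (0 : (Submodule.span ℝ {v})ᗮ) 1 := fun z => by
    rw [mem_closedBall_zero_iff, ← sq_le_one_iff₀ (norm_nonneg _), hpn]
    linarith [sq_nonneg (inner ℝ v (z : E))]
  have hπ : ∀ (x : closedBall (0 : (Submodule.span ℝ {v})ᗮ) 1) (c : ℝ),
      ((x : (Submodule.span ℝ {v})ᗮ) : E) + c • v -
        inner ℝ v (((x : (Submodule.span ℝ {v})ᗮ) : E) + c • v) • v = x := fun x c => by
    rw [inner_add_right, horth, inner_smul_right, hvv, zero_add, mul_one, add_sub_cancel_right]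
  refine ⟨⟨fun x => ⟨_, hsphere x _ (hsq x)⟩, by fun_prop⟩,
    ⟨fun x => ⟨_, hsphere x (-Real.sqrt (1 - ‖(x : (Submodule.span ℝ {v})ᗮ)‖ ^ 2))
      (by rw [neg_sq, hsq x])⟩, by fun_prop⟩,
    ⟨fun z => ⟨⟨z - inner ℝ v (z : E) • v, hmem z⟩, hball z⟩, by fun_prop⟩, ?_, ?_, ?_, ?_⟩
  · exact fun x => Subtype.ext (Subtype.ext (hπ x _))
  · exact fun x => Subtype.ext (Subtype.ext (hπ x _))
  · intro z
    rcases le_total 0 (inner ℝ v (z : E)) with hz | hz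
    · refine Or.inl (Subtype.ext ?_)
      simp only [ContinuousMap.coe_mk, hpn]
      rw [sub_sub_cancel, Real.sqrt_sq hz, sub_add_cancel]
    · refine Or.inr (Subtype.ext ?_)
      simp only [ContinuousMap.coe_mk, hpn]
      rw [sub_sub_cancel, Real.sqrt_sq_eq_abs, abs_of_nonpos hz, neg_neg, sub_add_cancel]
  · intro x
    simp only [ContinuousMap.coe_mk, Subtype.mk.injEq, add_right_inj]
    have h1 := hsq x
    have h2 : Real.sqrt (1 - ‖(x : (Submodule.span ℝ {v})ᗮ)‖ ^ 2) •
        v = -Real.sqrt (1 - ‖(x : (Submodule.span ℝ {v})ᗮ)‖ ^ 2) • v ↔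
        Real.sqrt (1 - ‖(x : (Submodule.span ℝ {v})ᗮ)‖ ^ 2) = 0 := by
      rw [(smul_left_injective ℝ hv0).eq_iff]
      exact self_eq_neg
    rw [h2, ← pow_eq_zero_iff two_ne_zero, h1, sub_eq_zero, eq_comm,
      pow_eq_one_iff_of_nonneg (norm_nonneg _) two_ne_zero]

lemma homotopic_of_contractibleSpace {X Y : Type*} [TopologicalSpace X] [TopologicalSpace Y]
    [ContractibleSpace X] [PathConnectedSpace Y] (f g : C(X, Y)) : f.Homotopic g := by
  obtain ⟨a, ha⟩ := (id_nullhomotopic X).comp_right f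
  obtain ⟨b, hb⟩ := (id_nullhomotopic X).comp_right g
  have hab : (ContinuousMap.const X a).Homotopic (ContinuousMap.const X b) := by
    obtain ⟨γ⟩ := PathConnectedSpace.joined a b
    exact ⟨{ toFun := fun p => γ p.1
             continuous_toFun := by fun_prop
             map_zero_left := fun _ => γ.source
             map_one_left := fun _ => γ.target }⟩
  exact (ha.trans hab).trans hb.symm

/-- Let `X` be a union of two balls glued along their boundaries. Then two maps from `X` to a
sphere can be deformed so that all the sets `F₁ = g • F₂` are connected. -/
theorem exists_homotopic_isPreconnected_coincidence_of_hemispheres {X : Type*}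
    [TopologicalSpace X] [T2Space X] [CompactSpace X] {P : Type} [NormedAddCommGroup P]
    [InnerProductSpace ℝ P] [FiniteDimensional ℝ P] (hPm : 2 ≤ Module.finrank ℝ P)
    {s₁ s₂ : C(closedBall (0 : P) 1, X)} {π : C(X, closedBall (0 : P) 1)}
    (hπ₁ : ∀ x, π (s₁ x) = x) (hπ₂ : ∀ x, π (s₂ x) = x)
    (hcov : ∀ z, s₁ (π z) = z ∨ s₂ (π z) = z) (heq : ∀ x, s₁ x = s₂ x ↔ ‖(x : P)‖ = 1)
    {n : ℕ} (hn : 3 ≤ n) {G : Type*} [Group G] [Finite G]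
    [MulAction G (sphere (0 : EuclideanSpace ℝ (Fin (n + 1))) 1)]
    (hfree : ∀ (g : G) (x : sphere (0 : EuclideanSpace ℝ (Fin (n + 1))) 1), g • x = x → g = 1)
    (F₁ F₂ : C(X, sphere (0 : EuclideanSpace ℝ (Fin (n + 1))) 1)) :
    ∃ F₁' F₂' : C(X, sphere (0 : EuclideanSpace ℝ (Fin (n + 1))) 1),
      F₁.Homotopic F₁' ∧ F₂.Homotopic F₂' ∧ ∀ g : G, IsPreconnected {x | F₁' x = g • F₂' x} := by
  have hpath : PathConnectedSpace (sphere (0 : EuclideanSpace ℝ (Fin (n + 1))) 1) :=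
    have := simplyConnectedSpace_sphere (k := n + 1) (by omega)
    inferInstance
  have hconv : Convex ℝ (closedBall (0 : P) 1) := convex_closedBall 0 1
  have hcontr : ContractibleSpace (closedBall (0 : P) 1) :=
    hconv.contractibleSpace ⟨0, mem_closedBall_self zero_le_one⟩
  have : Nontrivial P := Module.nontrivial_of_finrank_pos (R := ℝ) (by omega)
  obtain ⟨a, ha⟩ := (NormedSpace.sphere_nonempty (x := (0 : P)) (r := 1)).2 zero_le_one
  set U : Set X := {z | s₁ (π z) = z} with hU
  set L : Set X := {z | s₂ (π z) = z} with hL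
  have hUcl : IsClosed U := isClosed_eq (by fun_prop) continuous_id
  have hLcl : IsClosed L := isClosed_eq (by fun_prop) continuous_id
  have hUL : U ∪ L = univ := eq_univ_of_forall hcov
  have hsU : ∀ x, s₁ x ∈ U := fun x => congrArg s₁ (hπ₁ x)
  have hsL : ∀ x, s₂ x ∈ L := fun x => congrArg s₂ (hπ₂ x)
  have hbd : ∀ z ∈ U, z ∈ L → ‖((π z : closedBall (0 : P) 1) : P)‖ = 1 := fun z hzU hzL =>
    (heq _).1 (hzU.trans (Eq.symm hzL))
  -- make the second map constant on the upper hemisphere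
  obtain ⟨K₂, hK₂0, hK₂U⟩ := exists_homotopy_extension hUcl F₂
    (fun p => F₂ (s₁ ⟨(1 - (p.2 : ℝ)) • ((π p.1 : closedBall (0 : P) 1) : P), by
      rw [mem_closedBall_zero_iff, norm_smul, Real.norm_of_nonneg (sub_nonneg.2 p.2.2.2)]
      exact mul_le_one₀ (by linarith [p.2.2.1]) (norm_nonneg _)
        (mem_closedBall_zero_iff.1 (π p.1).2)⟩))
    (by fun_prop) (fun z hz => by
      simp only [Icc.coe_zero, sub_zero, one_smul, Subtype.coe_eta]
      exact congrArg F₂ hz)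
  set F₂' : C(X, sphere (0 : EuclideanSpace ℝ (Fin (n + 1))) 1) :=
    K₂.comp ((ContinuousMap.id _).prodMk (.const _ 1)) with hF₂'
  set q := F₂ (s₁ ⟨0, mem_closedBall_self zero_le_one⟩) with hq
  have hF₂q : ∀ z ∈ U, F₂' z = q := fun z hz => by
    change K₂ (z, 1) = q
    rw [hK₂U z hz 1]
    simp only [Icc.coe_one, sub_self, zero_smul, hq]
  have hhom₂ : F₂.Homotopic F₂' :=
    ⟨{ toFun := fun p => K₂ (p.2, p.1)
       continuous_toFun := by fun_prop
       map_zero_left := hK₂0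
       map_one_left := fun z => rfl }⟩
  -- make the two maps agree on the lower hemisphere
  obtain ⟨h⟩ := homotopic_of_contractibleSpace (F₁.comp s₂) (F₂'.comp s₂)
  obtain ⟨K₁, hK₁0, hK₁L⟩ := exists_homotopy_extension hLcl F₁ (fun p => h (p.2, π p.1))
    (by fun_prop) (fun z hz => by
      rw [h.apply_zero]
      exact congrArg F₁ hz)
  set F₁' : C(X, sphere (0 : EuclideanSpace ℝ (Fin (n + 1))) 1) :=
    K₁.comp ((ContinuousMap.id _).prodMk (.const _ 1)) with hF₁'
  have hF₁L : ∀ z ∈ L, F₁' z = F₂' z := fun z hz => by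
    change K₁ (z, 1) = F₂' z
    rw [hK₁L z hz 1, h.apply_one]
    exact congrArg F₂' hz
  have hhom₁ : F₁.Homotopic F₁' :=
    ⟨{ toFun := fun p => K₁ (p.2, p.1)
       continuous_toFun := by fun_prop
       map_zero_left := hK₁0
       map_one_left := fun z => rfl }⟩
  -- deform the first map on the upper hemisphere
  have hyinj : Function.Injective fun g : G => g • q := fun g₁ g₂ h12 => by
    have h1 : (g₂⁻¹ * g₁) • q = q := by
      rw [mul_smul, show g₁ • q = g₂ • q from h12, inv_smul_smul]
    exact (inv_mul_eq_one.1 (hfree _ _ h1)).symm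
  obtain ⟨E', ⟨H⟩, hE'⟩ := exists_homotopicRel_isPreconnected_preimage (P := P) hPm hn hyinj
    1 (F₁'.comp s₁) (fun x hx => by
      have h1 : s₁ x ∈ L := (heq x).2 hx ▸ hsL x
      change F₁' (s₁ x) = (1 : G) • q
      rw [one_smul, hF₁L _ h1, hF₂q _ (hsU x)])
  have hHbd : ∀ t, ∀ z ∈ U, z ∈ L → H (t, π z) = F₁' z := fun t z hz hz' => by
    have h1 : H (t, π z) = F₁' (s₁ (π z)) := H.prop' t (π z) (hbd z hz hz')
    rw [h1]
    exact congrArg F₁' hz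
  obtain ⟨K, hKU, hKL⟩ := exists_glue (X := I × X)
    (hUcl.preimage continuous_snd) (hLcl.preimage continuous_snd)
    (by rw [← preimage_union, hUL, preimage_univ])
    (f := fun p => H (p.1, π p.2)) (g := fun p => F₁' p.2) (by fun_prop) (by fun_prop)
    (fun p hp hp' => hHbd p.1 p.2 hp hp')
  set F₁'' : C(X, sphere (0 : EuclideanSpace ℝ (Fin (n + 1))) 1) :=
    K.comp ((ContinuousMap.const _ 1).prodMk (.id _)) with hF₁''
  have hF₁''U : ∀ z ∈ U, F₁'' z = E' (π z) := fun z hz => (hKU (1, z) hz).trans (H.apply_one _)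
  have hF₁''L : ∀ z ∈ L, F₁'' z = F₂' z := fun z hz => (hKL (1, z) hz).trans (hF₁L z hz)
  have hhom₁' : F₁'.Homotopic F₁'' :=
    ⟨{ toContinuousMap := K
       map_zero_left := fun z => by
         rcases hcov z with hz | hz
         · refine (hKU (0, z) hz).trans ((H.apply_zero _).trans ?_)
           exact congrArg F₁' hz
         · exact hKL (0, z) hz
       map_one_left := fun z => rfl }⟩
  refine ⟨F₁'', F₂', hhom₁.trans hhom₁', hhom₂, fun g => ?_⟩
  have himg : IsPreconnected (s₁ '' {x | E' x = g • q}) :=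
    (hE' g).image _ s₁.continuous.continuousOn
  have hUiff : ∀ z ∈ U, (F₁'' z = g • F₂' z ↔ z ∈ s₁ '' {x | E' x = g • q}) := fun z hz => by
    rw [hF₁''U z hz, hF₂q z hz]
    refine ⟨fun h1 => ⟨π z, h1, hz⟩, ?_⟩
    rintro ⟨x, hx, rfl⟩
    rw [hπ₁]
    exact hx
  by_cases hg : g = 1
  · have hset : {x | F₁'' x = g • F₂' x} = range s₂ ∪ s₁ '' {x | E' x = g • q} := by
      ext z
      rw [mem_union]
      refine ⟨fun hz => ?_, ?_⟩
      · rcases hcov z with hzU | hzL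
        · exact Or.inr ((hUiff z hzU).1 hz)
        · exact Or.inl ⟨π z, hzL⟩
      · rintro (⟨x, rfl⟩ | hz)
        · change F₁'' (s₂ x) = g • F₂' (s₂ x)
          rw [hg, one_smul, hF₁''L _ (hsL x)]
        · have hzU : z ∈ U := by
            obtain ⟨x, -, rfl⟩ := hz
            exact hsU x
          exact (hUiff z hzU).2 hz
    rw [hset]
    have hpre : PreconnectedSpace (closedBall (0 : P) 1) := inferInstance
    set a' : closedBall (0 : P) 1 := ⟨a, sphere_subset_closedBall ha⟩ with ha'
    have ha1 : s₁ a' = s₂ a' := (heq a').2 (mem_sphere_zero_iff_norm.1 ha)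
    refine (isPreconnected_range s₂.continuous).union (s₁ a') ⟨a', ha1.symm⟩ ?_ himg
    rw [← hUiff _ (hsU a'), hg, one_smul, ha1, hF₁''L _ (hsL a')]
  · have hset : {x | F₁'' x = g • F₂' x} = s₁ '' {x | E' x = g • q} := by
      ext z
      refine ⟨fun hz => ?_, fun hz => ?_⟩
      · rcases hcov z with hzU | hzL
        · exact (hUiff z hzU).1 hz
        · refine absurd (hfree g (F₂' z) ?_) hg
          rw [← hF₁''L z hzL]
          nth_rewrite 1 [hF₁''L z hzL]
          exact hz.symm
      · have hzU : z ∈ U := by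
          obtain ⟨x, -, rfl⟩ := hz
          exact hsU x
        exact (hUiff z hzU).2 hz
    rw [hset]
    exact himg

/-- Two maps between spheres can be deformed so that all the sets `F₁ = g • F₂` are connected. -/
theorem exists_homotopic_isPreconnected_coincidence {m n : ℕ} (hm : 2 ≤ m) (hn : 3 ≤ n)
    {G : Type*} [Group G] [Finite G]
    [MulAction G (sphere (0 : EuclideanSpace ℝ (Fin (n + 1))) 1)]
    (hfree : ∀ (g : G) (x : sphere (0 : EuclideanSpace ℝ (Fin (n + 1))) 1), g • x = x → g = 1)
    (F₁ F₂ : C(sphere (0 : EuclideanSpace ℝ (Fin (m + 1))) 1,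
      sphere (0 : EuclideanSpace ℝ (Fin (n + 1))) 1)) :
    ∃ F₁' F₂' : C(sphere (0 : EuclideanSpace ℝ (Fin (m + 1))) 1,
      sphere (0 : EuclideanSpace ℝ (Fin (n + 1))) 1), F₁.Homotopic F₁' ∧ F₂.Homotopic F₂' ∧
      ∀ g : G, IsPreconnected {x | F₁' x = g • F₂' x} := by
  have hv : ‖(EuclideanSpace.single 0 1 : EuclideanSpace ℝ (Fin (m + 1)))‖ = 1 := by simp
  generalize (EuclideanSpace.single 0 1 : EuclideanSpace ℝ (Fin (m + 1))) = v at hv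
  have hv0 : v ≠ 0 := fun h => by simp [h] at hv
  have hPm : Module.finrank ℝ (Submodule.span ℝ {v})ᗮ = m := by
    have : Fact (Module.finrank ℝ (EuclideanSpace ℝ (Fin (m + 1))) = m + 1) := ⟨by simp⟩
    exact Submodule.finrank_orthogonal_span_singleton hv0
  obtain ⟨s₁, s₂, π, hπ₁, hπ₂, hcov, heq⟩ := exists_hemispheres hv
  exact exists_homotopic_isPreconnected_coincidence_of_hemispheres (hm.trans_eq hPm.symm)
    hπ₁ hπ₂ hcov heq hn hfree F₁ F₂

lemma natCard_le_card_connectedComponents {X ι : Type*} [TopologicalSpace X] [Finite ι]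
    {C : ι → Set X} (hcl : ∀ i, IsClosed (C i)) (hne : ∀ i, (C i).Nonempty)
    (hdisj : ∀ i j x, x ∈ C i → x ∈ C j → i = j) (hcov : ∀ x, ∃ i, x ∈ C i) :
    (Nat.card ι : ℕ∞) ≤ ENat.card (ConnectedComponents X) := by
  choose x hx using hne
  have hclopen : ∀ i, IsClopen (C i) := fun i => by
    refine ⟨hcl i, isClosed_compl_iff.1 ?_⟩
    have hcompl : (C i)ᶜ = ⋃ j : {j // j ≠ i}, C j := by
      ext z
      rw [mem_compl_iff, mem_iUnion]
      constructor
      · intro hz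
        obtain ⟨j, hj⟩ := hcov z
        exact ⟨⟨j, fun h => hz (h ▸ hj)⟩, hj⟩
      · rintro ⟨⟨j, hji⟩, hj⟩ hz
        exact hji (hdisj _ _ z hj hz)
    rw [hcompl]
    exact isClosed_iUnion_of_finite fun j => hcl j
  rw [← ENat.card_eq_coe_natCard]
  refine ENat.card_le_card_of_injective (f := fun i => (x i : ConnectedComponents X))
    fun i j hij => hdisj i j (x j) ?_ (hx j)
  refine (hclopen i).connectedComponent_subset (hx i) ?_
  rw [ConnectedComponents.coe_eq_coe.1 hij]
  exact mem_connectedComponent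

lemma card_connectedComponents_le_natCard {X ι : Type*} [TopologicalSpace X] [Finite ι]
    {C : ι → Set X} (hC : ∀ i, IsPreconnected (C i)) (hcov : ∀ x, ∃ i, x ∈ C i) :
    ENat.card (ConnectedComponents X) ≤ (Nat.card ι : ℕ∞) := by
  choose i hi using hcov
  rw [← ENat.card_eq_coe_natCard]
  refine ENat.card_le_card_of_injective (f := fun c : ConnectedComponents X => i c.out)
    fun c c' hcc' => ?_
  dsimp only at hcc'
  rw [← Quotient.out_eq c, ← Quotient.out_eq c']
  refine ConnectedComponents.coe_eq_coe'.2 ?_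
  exact (hC (i c'.out)).subset_connectedComponent (hi _) (hcc' ▸ hi c.out)

/-- Any two maps from a simply connected space to the circle are homotopic. -/
lemma homotopic_sphere_one {X : Type*} [TopologicalSpace X] [SimplyConnectedSpace X]
    [LocallyPathConnectedSpace X] (F₁ F₂ : C(X, sphere (0 : EuclideanSpace ℝ (Fin 2)) 1)) :
    F₁.Homotopic F₂ := by
  let e : EuclideanSpace ℝ (Fin 2) ≃ₗᵢ[ℝ] ℂ := Complex.orthonormalBasisOneI.repr.symm
  let c : C(sphere (0 : EuclideanSpace ℝ (Fin 2)) 1, Circle) :=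
    ⟨fun x => ⟨e x, by simp [Submonoid.unitSphere]⟩, by fun_prop⟩
  let d : C(Circle, sphere (0 : EuclideanSpace ℝ (Fin 2)) 1) :=
    ⟨fun z => ⟨e.symm z, by simp [Circle.norm_coe]⟩, by fun_prop⟩
  have hlift : ∀ F : C(X, sphere (0 : EuclideanSpace ℝ (Fin 2)) 1),
      ∃ φ : C(X, ℝ), (d.comp (Circle.exp : C(ℝ, Circle))).comp φ = F := fun F => by
    obtain ⟨a⟩ : Nonempty X := inferInstance
    obtain ⟨t, ht⟩ := Circle.isAddQuotientCoveringMap_exp.surjective (c (F a))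
    obtain ⟨φ, ⟨-, hφ⟩, -⟩ :=
      Circle.isCoveringMap_exp.existsUnique_continuousMap_lifts (c.comp F) a t ht
    refine ⟨φ, ContinuousMap.ext fun x => ?_⟩
    have h1 : Circle.exp (φ x) = c (F x) := congrFun hφ x
    change d (Circle.exp (φ x)) = F x
    rw [h1]
    exact Subtype.ext (e.symm_apply_apply _)
  obtain ⟨φ₁, rfl⟩ := hlift F₁
  obtain ⟨φ₂, rfl⟩ := hlift F₂
  exact .comp (.refl _) ⟨ContinuousMap.Homotopy.affine φ₁ φ₂⟩

section Action

variable {n : ℕ} {G : Type*} [Group G]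
  [MulAction G (sphere (0 : EuclideanSpace ℝ (Fin (n + 1))) 1)]

/-- Maps from a simply connected space to a spherical space form lift to the sphere. -/
lemma exists_lift [Finite G]
    (hcont : ∀ g : G, Continuous fun x : sphere (0 : EuclideanSpace ℝ (Fin (n + 1))) 1 => g • x)
    (hfree : ∀ (g : G) (x : sphere (0 : EuclideanSpace ℝ (Fin (n + 1))) 1), g • x = x → g = 1)
    {X : Type*} [TopologicalSpace X] [SimplyConnectedSpace X] [LocallyPathConnectedSpace X]
    (f : C(X, Quotient (MulAction.orbitRel G (sphere (0 : EuclideanSpace ℝ (Fin (n + 1))) 1)))) :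
    ∃ F : C(X, sphere (0 : EuclideanSpace ℝ (Fin (n + 1))) 1),
      ContinuousMap.comp ⟨Quotient.mk _, continuous_quotient_mk'⟩ F = f := by
  have : ContinuousConstSMul G (sphere (0 : EuclideanSpace ℝ (Fin (n + 1))) 1) := ⟨hcont⟩
  have : IsCancelSMul G (sphere (0 : EuclideanSpace ℝ (Fin (n + 1))) 1) :=
    isCancelSMul_iff_eq_one_of_smul_eq.2 hfree
  have : ProperlyDiscontinuousSMul G (sphere (0 : EuclideanSpace ℝ (Fin (n + 1))) 1) :=
    ⟨fun _ _ => toFinite _⟩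
  have hcov : IsCoveringMap
      (Quotient.mk (MulAction.orbitRel G (sphere (0 : EuclideanSpace ℝ (Fin (n + 1))) 1))) :=
    isQuotientCoveringMap_quotientMk_of_properlyDiscontinuousSMul.isCoveringMap
  obtain ⟨a⟩ : Nonempty X := inferInstance
  obtain ⟨e, he⟩ := Quotient.mk_surjective (f a)
  obtain ⟨F, ⟨-, hF⟩, -⟩ := hcov.existsUnique_continuousMap_lifts f a e he
  exact ⟨F, ContinuousMap.ext fun x => congrFun hF x⟩

/-- If `F₁` and `g • F₂` have no coincidence, then `F₁` and `F₂` are homotopic after projection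
to the orbit space. -/
lemma homotopic_comp_mk_of_ne (hodd : Odd n)
    (hcont : ∀ g : G, Continuous fun x : sphere (0 : EuclideanSpace ℝ (Fin (n + 1))) 1 => g • x)
    {X : Type*} [TopologicalSpace X]
    {F₁ F₂ : C(X, sphere (0 : EuclideanSpace ℝ (Fin (n + 1))) 1)} {g : G}
    (hne : ∀ x, F₁ x ≠ g • F₂ x) :
    (ContinuousMap.comp (⟨Quotient.mk (MulAction.orbitRel G _), continuous_quotient_mk'⟩ : C(_, _))
      F₁).Homotopic (ContinuousMap.comp ⟨Quotient.mk _, continuous_quotient_mk'⟩ F₂) := by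
  obtain ⟨H, hH0, hH1⟩ := exists_antipodal_homotopy hodd
  let K : C(X, sphere (0 : EuclideanSpace ℝ (Fin (n + 1))) 1) :=
    ContinuousMap.comp ⟨fun x => g • x, hcont g⟩ F₂
  have hK : K.Homotopic ⟨fun x => -K x, by fun_prop⟩ :=
    ⟨{ toFun := fun p => H (p.1, K p.2)
       continuous_toFun := by fun_prop
       map_zero_left := fun x => hH0 _
       map_one_left := fun x => hH1 _ }⟩
  obtain ⟨h⟩ := homotopicRel_of_ne_neg (f := F₁) (g := ⟨fun x => -K x, by fun_prop⟩) fun x hx => by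
    simp only [ContinuousMap.coe_mk, coe_neg_sphere, neg_neg] at hx
    exact hne x (Subtype.ext hx)
  have hF : F₁.Homotopic K := .trans ⟨h.toHomotopy⟩ hK.symm
  have hp : ContinuousMap.comp
      (⟨Quotient.mk (MulAction.orbitRel G _), continuous_quotient_mk'⟩ : C(_, _)) K =
      ContinuousMap.comp ⟨Quotient.mk _, continuous_quotient_mk'⟩ F₂ :=
    ContinuousMap.ext fun x => Quotient.sound ⟨g, rfl⟩
  rw [← hp]
  exact .comp (.refl _) hF

end Action

end SpaceForm

open SpaceForm in
theorem mcc_eq_card_of_not_homotopic_sphere_space_form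
    (n : ℕ) (hn : 1 ≤ n) (hodd : Odd n)
    (G : Type*) [Group G] [Finite G]
    [MulAction G (Metric.sphere (0 : EuclideanSpace ℝ (Fin (n + 1))) 1)]
    (hcont : ∀ g : G,
      Continuous fun x : Metric.sphere (0 : EuclideanSpace ℝ (Fin (n + 1))) 1 => g • x)
    (hfree : ∀ (g : G) (x : Metric.sphere (0 : EuclideanSpace ℝ (Fin (n + 1))) 1),
      g • x = x → g = 1)
    (m : ℕ) (hm : 1 < m)
    (f₁ f₂ : C(Metric.sphere (0 : EuclideanSpace ℝ (Fin (m + 1))) 1,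
      Quotient (MulAction.orbitRel G (Metric.sphere (0 : EuclideanSpace ℝ (Fin (n + 1))) 1))))
    (h : ¬ f₁.Homotopic f₂) :
    MCC f₁ f₂ = (Nat.card G : ℕ∞) := by
  have hsc : SimplyConnectedSpace (Metric.sphere (0 : EuclideanSpace ℝ (Fin (m + 1))) 1) :=
    simplyConnectedSpace_sphere (by omega)
  have hiff : ∀ x y : Metric.sphere (0 : EuclideanSpace ℝ (Fin (n + 1))) 1,
      (Quotient.mk (MulAction.orbitRel G _) x = Quotient.mk _ y) ↔ ∃ g : G, x = g • y :=
    fun x y => by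
      rw [Quotient.eq, MulAction.orbitRel_apply, MulAction.mem_orbit_iff]
      exact exists_congr fun g => eq_comm
  have huniq : ∀ (g g' : G) (y : Metric.sphere (0 : EuclideanSpace ℝ (Fin (n + 1))) 1),
      g • y = g' • y → g = g' := fun g g' y hg => by
    refine (inv_mul_eq_one.1 (hfree (g'⁻¹ * g) y ?_)).symm
    rw [mul_smul, hg, inv_smul_smul]
  refine le_antisymm ?_ ?_
  · obtain ⟨F₁, rfl⟩ := exists_lift hcont hfree f₁
    obtain ⟨F₂, rfl⟩ := exists_lift hcont hfree f₂
    have hn3 : 3 ≤ n := by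
      by_contra hlt
      obtain rfl : n = 1 := by
        obtain ⟨k, rfl⟩ := hodd
        omega
      exact h (.comp (.refl _) (homotopic_sphere_one F₁ F₂))
    obtain ⟨F₁', F₂', h₁, h₂, hconn⟩ :=
      exists_homotopic_isPreconnected_coincidence hm hn3 hfree F₁ F₂
    refine (iInf₂_le _ (.comp (.refl _) h₁.symm)).trans
      ((iInf₂_le _ (.comp (.refl _) h₂.symm)).trans ?_)
    refine card_connectedComponents_le_natCard (C := fun g : G => {x | F₁' x = g • F₂' x})
      (fun g => ?_) fun x => (hiff _ _).1 x.2
    refine Topology.IsInducing.subtypeVal.isPreconnected_image.1 ?_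
    convert hconn g using 1
    ext x
    refine ⟨?_, fun hx => ⟨⟨x, (hiff _ _).2 ⟨g, hx⟩⟩, hx, rfl⟩⟩
    rintro ⟨x, hx, rfl⟩
    exact hx
  · refine le_iInf₂ fun g₁ h₁ => le_iInf₂ fun g₂ h₂ => ?_
    obtain ⟨F₁, rfl⟩ := exists_lift hcont hfree g₁
    obtain ⟨F₂, rfl⟩ := exists_lift hcont hfree g₂
    refine natCard_le_card_connectedComponents (C := fun g : G => {x | F₁ x = g • F₂ x})
      (fun g => ?_) (fun g => ?_) (fun g g' x hg hg' => huniq g g' (F₂ x) (hg.symm.trans hg'))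
      fun x => (hiff _ _).1 x.2
    · exact isClosed_eq (by fun_prop) ((hcont g).comp (by fun_prop))
    · by_contra hempty
      refine h ((h₁.symm.trans
        (homotopic_comp_mk_of_ne hodd hcont (g := g) fun x hx => ?_)).trans h₂)
      exact hempty ⟨⟨x, (hiff _ _).2 ⟨g, hx⟩⟩, hx⟩
end

section
/- Let n ≥ 1 be odd, let G be a finite group acting freely and continuously on the unit sphere Sⁿ ⊂ ℝⁿ⁺¹, and let N = Sⁿ/G be the orbit space with the quotient topology. Let m > 1 and let f₁, f₂ : Sᵐ → N be continuous maps that are NOT homotopic to each other. Then for EVERY pair of continuous maps f₁' homotopic to f₁ and f₂' homotopic to f₂, the coincidence set C(f₁', f₂') = {x ∈ Sᵐ | f₁'(x) = f₂'(x)} is nonempty and has at least |G| connected components. -/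
open Metric Module Topology

section Sphere

variable {V : Type*} [NormedAddCommGroup V] [InnerProductSpace ℝ V]

/-- A sphere of dimension at least two with two distinct points removed is connected. -/
theorem isConnected_sphere_compl_pair {m : ℕ} [Fact (finrank ℝ V = m + 1)] (hm : 1 < m)
    {v w : sphere (0 : V) 1} (hvw : w ≠ v) :
    IsConnected ({v}ᶜ ∩ {w}ᶜ : Set (sphere (0 : V) 1)) := by
  set φ := stereographic' m v
  have hsource : φ.source = {v}ᶜ := stereographic'_source v
  have htarget : φ.target = Set.univ := stereographic'_target v
  have hrank : 1 < Module.rank ℝ (EuclideanSpace ℝ (Fin m)) :=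
    one_lt_rank_of_one_lt_finrank (by simpa using hm)
  have hcont : Continuous φ.symm := by
    simpa [htarget, ← continuousOn_univ] using φ.continuousOn_symm
  have himage : φ.symm '' {φ w}ᶜ = {v}ᶜ ∩ {w}ᶜ := by
    ext x
    constructor
    · rintro ⟨y, hy, rfl⟩
      have hmem := φ.map_target (x := y) (by simp [htarget])
      refine ⟨hsource ▸ hmem, fun h ↦ hy ?_⟩
      rw [Set.mem_singleton_iff] at h ⊢
      rw [← h, φ.right_inv (by simp [htarget])]
    · rintro ⟨hxv, hxw⟩
      refine ⟨φ x, fun h ↦ hxw ?_, φ.left_inv (hsource ▸ hxv)⟩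
      exact φ.injOn (hsource ▸ hxv) (by simpa [hsource] using hvw) h
  exact himage ▸ (isConnected_compl_singleton_of_one_lt_rank hrank (φ w)).image _
    hcont.continuousOn

/-- A continuous map out of a sphere can be lifted along a covering map on the complement of any
point. -/
theorem IsCoveringMap.exists_lift_sphere_compl_singleton {E X : Type*} [TopologicalSpace E]
    [TopologicalSpace X] {p : E → X} (hp : IsCoveringMap p) {m : ℕ} [Fact (finrank ℝ V = m + 1)]
    (f : C(sphere (0 : V) 1, X)) (v : sphere (0 : V) 1) {a : sphere (0 : V) 1} (ha : a ≠ v)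
    {e : E} (he : p e = f a) :
    ∃ F : sphere (0 : V) 1 → E, ContinuousOn F {v}ᶜ ∧ F a = e ∧ ∀ x ≠ v, p (F x) = f x := by
  set φ := stereographic' m v
  have hsource : φ.source = {v}ᶜ := stereographic'_source v
  have htarget : φ.target = Set.univ := stereographic'_target v
  have hcont : Continuous φ.symm := by
    simpa [htarget, ← continuousOn_univ] using φ.continuousOn_symm
  have hleft : ∀ x ≠ v, φ.symm (φ x) = x := fun x hx ↦ φ.left_inv (by simpa [hsource] using hx)
  obtain ⟨L, ⟨hLa, hL⟩, -⟩ := hp.existsUnique_continuousMap_lifts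
    (f.comp ⟨φ.symm, hcont⟩) (φ a) e (by simpa [hleft a ha] using he)
  refine ⟨L ∘ φ, L.continuous.comp_continuousOn (hsource ▸ φ.continuousOn), hLa, fun x hx ↦ ?_⟩
  simpa [hleft x hx] using congrFun hL (φ x)

/-- A continuous map out of a sphere of dimension at least two lifts along any surjective covering
map. -/
theorem IsCoveringMap.exists_lift_sphere {E X : Type*} [TopologicalSpace E] [TopologicalSpace X]
    {p : E → X} (hp : IsCoveringMap p) (hsurj : p.Surjective) {m : ℕ}
    [Fact (finrank ℝ V = m + 1)] (hm : 1 < m) (f : C(sphere (0 : V) 1, X)) :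
    ∃ F : C(sphere (0 : V) 1, E), ∀ x, p (F x) = f x := by
  classical
  have : Nontrivial V := nontrivial_of_finrank_pos (R := ℝ)
    (by rw [Fact.out (p := finrank ℝ V = m + 1)]; exact m.succ_pos)
  obtain ⟨v, hv⟩ := (NormedSpace.sphere_nonempty (x := (0 : V)) (r := 1)).2 zero_le_one
  lift v to sphere (0 : V) 1 using hv
  have hneg : -v ≠ v := (ne_neg_of_mem_unit_sphere ℝ v).symm
  have hconn := isConnected_sphere_compl_pair hm hneg
  obtain ⟨a, hav, haw⟩ := hconn.nonempty
  obtain ⟨e, he⟩ := hsurj (f a)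
  obtain ⟨F, hF, hFa, hpF⟩ := hp.exists_lift_sphere_compl_singleton (m := m) f v hav he
  obtain ⟨F', hF', hFa', hpF'⟩ := hp.exists_lift_sphere_compl_singleton (m := m) f (-v) haw he
  have heq : Set.EqOn F F' ({v}ᶜ ∩ {-v}ᶜ) :=
    hp.eqOn_of_comp_eqOn hconn.isPreconnected (hF.mono Set.inter_subset_left)
      (hF'.mono Set.inter_subset_right)
      (fun x hx ↦ (hpF x hx.1).trans (hpF' x hx.2).symm) ⟨hav, haw⟩ (hFa.trans hFa'.symm)
  let H : sphere (0 : V) 1 → E := fun x ↦ if x = v then F' x else F x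
  have hHF : ∀ x ≠ v, H x = F x := fun x hx ↦ if_neg hx
  have hHF' : ∀ x ≠ -v, H x = F' x := fun x hx ↦ by
    by_cases hxv : x = v
    · exact if_pos hxv
    · exact (hHF x hxv).trans (heq ⟨hxv, hx⟩)
  refine ⟨⟨H, continuous_iff_continuousAt.2 fun x ↦ ?_⟩, fun x ↦ ?_⟩
  · by_cases hx : x = v
    · have hmem : ({-v}ᶜ : Set (sphere (0 : V) 1)) ∈ 𝓝 x :=
        isOpen_compl_singleton.mem_nhds (hx ▸ hneg.symm)
      exact (hF'.congr hHF').continuousAt hmem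
    · exact (hF.congr hHF).continuousAt (isOpen_compl_singleton.mem_nhds hx)
  · by_cases hx : x = v
    · exact (congrArg p (hHF' x (hx ▸ hneg.symm))).trans (hpF' x (hx ▸ hneg.symm))
    · exact (congrArg p (hHF x hx)).trans (hpF x hx)

/-- Two maps into a unit sphere which are nowhere antipodal are homotopic. -/
theorem ContinuousMap.homotopic_of_forall_ne_neg {X : Type*} [TopologicalSpace X]
    (f g : C(X, sphere (0 : V) 1)) (h : ∀ x, f x ≠ -g x) : f.Homotopic g := by
  let L : unitInterval × X → V := fun q ↦ (1 - (q.1 : ℝ)) • (f q.2 : V) + (q.1 : ℝ) • (g q.2 : V)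
  have hL : Continuous L := by fun_prop
  have hL0 : ∀ q, L q ≠ 0 := by
    rintro ⟨t, x⟩ hq
    have hq' : (1 - (t : ℝ)) • (f x : V) = -((t : ℝ) • (g x : V)) := eq_neg_of_add_eq_zero_left hq
    have hnorm : 1 - (t : ℝ) = t := by
      have := congrArg norm hq'
      simpa [norm_smul, abs_of_nonneg (sub_nonneg.2 t.2.2), abs_of_nonneg t.2.1] using this
    refine h x (Subtype.ext ?_)
    rw [hnorm, ← smul_neg] at hq'
    exact smul_right_injective V (show (t : ℝ) ≠ 0 by intro h0; simp [h0] at hnorm) hq'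
  exact ⟨{
    toFun := fun q ↦ ⟨‖L q‖⁻¹ • L q, by simp [norm_smul, hL0 q]⟩
    continuous_toFun := continuous_induced_rng.2
      ((hL.norm.inv₀ fun q ↦ norm_ne_zero_iff.2 (hL0 q)).smul hL)
    map_zero_left := fun x ↦ Subtype.ext (by simp [L])
    map_one_left := fun x ↦ Subtype.ext (by simp [L]) }⟩

/-- The antipodal map of an odd-dimensional sphere is homotopic to the identity. -/
theorem ContinuousMap.homotopic_neg_sphere_of_even [FiniteDimensional ℝ V]
    (hV : Even (finrank ℝ V)) :
    (ContinuousMap.id (sphere (0 : V) 1)).Homotopic ⟨Neg.neg, continuous_neg⟩ := by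
  obtain ⟨k, hk⟩ := hV
  have hfin : finrank ℝ (EuclideanSpace ℂ (Fin k)) = finrank ℝ V := by
    rw [← finrank_mul_finrank ℝ ℂ, Complex.finrank_real_complex, finrank_euclideanSpace_fin]
    omega
  let e : V ≃ₗᵢ[ℝ] EuclideanSpace ℂ (Fin k) :=
    (stdOrthonormalBasis ℝ V).equiv (stdOrthonormalBasis ℝ _) (finCongr hfin.symm)
  let J : C(sphere (0 : V) 1, sphere (0 : V) 1) :=
    ⟨fun x ↦ ⟨e.symm (Complex.I • e x), by simp [norm_smul]⟩, by fun_prop⟩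
  have hJ : ∀ (x : sphere (0 : V) 1) (c : ℝ), (J x : V) ≠ c • (x : V) := fun x c h ↦ by
    have h' : Complex.I • e x = (c : ℂ) • e x := by
      simpa [J] using congrArg e h
    have hx : e x ≠ 0 := by simpa using ne_zero_of_mem_unit_sphere x
    simpa using congrArg Complex.im (smul_left_injective ℂ hx h')
  have hid : (ContinuousMap.id (sphere (0 : V) 1)).Homotopic J :=
    ContinuousMap.homotopic_of_forall_ne_neg _ _ fun x h ↦
      hJ x (-1) (by rw [← neg_eq_iff_eq_neg] at h; simp [← h])
  exact hid.trans (ContinuousMap.homotopic_of_forall_ne_neg _ _ fun x h ↦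
    hJ x 1 (by rw [h]; simp))

end Sphere

/-- If a space is partitioned into finitely many nonempty closed subsets, then it has at least as
many connected components as there are parts. -/
theorem card_le_card_connectedComponents_of_isClosed_fiber {X ι : Type*} [TopologicalSpace X]
    [Finite ι] (φ : X → ι) (hφ : ∀ i, IsClosed (φ ⁻¹' {i})) (hsurj : φ.Surjective) :
    (Nat.card ι : ℕ∞) ≤ ENat.card (ConnectedComponents X) := by
  let : TopologicalSpace ι := ⊥
  have : DiscreteTopology ι := ⟨rfl⟩
  have hcont : Continuous φ := continuous_iff_isClosed.2 fun s _ ↦ by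
    rw [← Set.biUnion_preimage_singleton]
    exact s.toFinite.isClosed_biUnion fun i _ ↦ hφ i
  have hlift : hcont.connectedComponentsLift.Surjective :=
    .of_comp (g := ((↑) : X → ConnectedComponents X)) hsurj
  rw [← ENat.card_eq_coe_natCard]
  exact ENat.card_le_card_of_injective (Function.injective_surjInv hlift)

theorem coincidence_set_lower_bound_of_not_homotopic_sphere_space_form
    (n : ℕ) (hn : 1 ≤ n) (hodd : Odd n)
    (G : Type*) [Group G] [Finite G]
    [MulAction G (Metric.sphere (0 : EuclideanSpace ℝ (Fin (n + 1))) 1)]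
    (hcont : ∀ g : G,
      Continuous fun x : Metric.sphere (0 : EuclideanSpace ℝ (Fin (n + 1))) 1 => g • x)
    (hfree : ∀ (g : G) (x : Metric.sphere (0 : EuclideanSpace ℝ (Fin (n + 1))) 1),
      g • x = x → g = 1)
    (m : ℕ) (hm : 1 < m)
    (f₁ f₂ f₁' f₂' : C(Metric.sphere (0 : EuclideanSpace ℝ (Fin (m + 1))) 1,
      Quotient (MulAction.orbitRel G (Metric.sphere (0 : EuclideanSpace ℝ (Fin (n + 1))) 1))))
    (h : ¬ f₁.Homotopic f₂)
    (h₁ : f₁'.Homotopic f₁) (h₂ : f₂'.Homotopic f₂) :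
    {x | f₁' x = f₂' x}.Nonempty ∧
      (Nat.card G : ℕ∞) ≤
        ENat.card (ConnectedComponents
          {x : Metric.sphere (0 : EuclideanSpace ℝ (Fin (m + 1))) 1 // f₁' x = f₂' x}) := by
  have : ContinuousConstSMul G (sphere (0 : EuclideanSpace ℝ (Fin (n + 1))) 1) := ⟨hcont⟩
  have hcancel : IsCancelSMul G (sphere (0 : EuclideanSpace ℝ (Fin (n + 1))) 1) :=
    { left_cancel' := fun g x y hxy ↦ smul_left_cancel g hxy
      right_cancel' := fun a b x hab ↦
        inv_mul_eq_one.1 (hfree (a⁻¹ * b) x (by rw [mul_smul, ← hab, inv_smul_smul])) }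
  have hq := isQuotientCoveringMap_quotientMk_of_properlyDiscontinuousSMul
    (G := G) (E := sphere (0 : EuclideanSpace ℝ (Fin (n + 1))) 1)
  have : Fact (finrank ℝ (EuclideanSpace ℝ (Fin (m + 1))) = m + 1) :=
    ⟨finrank_euclideanSpace_fin⟩
  obtain ⟨F₁, hF₁⟩ := hq.isCoveringMap.exists_lift_sphere hq.surjective hm f₁'
  obtain ⟨F₂, hF₂⟩ := hq.isCoveringMap.exists_lift_sphere hq.surjective hm f₂'
  have hmeet : ∀ g : G, ∃ x, F₁ x = g • F₂ x := by
    intro g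
    by_contra! hne
    let A : C(sphere (0 : EuclideanSpace ℝ (Fin (n + 1))) 1,
      sphere (0 : EuclideanSpace ℝ (Fin (n + 1))) 1) := ⟨Neg.neg, continuous_neg⟩
    let K : C(sphere (0 : EuclideanSpace ℝ (Fin (m + 1))) 1,
      sphere (0 : EuclideanSpace ℝ (Fin (n + 1))) 1) := ⟨fun x ↦ g • F₂ x, by fun_prop⟩
    have hA : (ContinuousMap.id _).Homotopic A :=
      ContinuousMap.homotopic_neg_sphere_of_even
        (by rw [finrank_euclideanSpace_fin]; exact hodd.add_one)
    have hF₁K : F₁.Homotopic K :=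
      (ContinuousMap.homotopic_of_forall_ne_neg F₁ (A.comp K) fun x ↦ by
        simpa [A, K] using hne x).trans (hA.symm.comp (.refl K))
    have hf : f₁'.Homotopic f₂' := by
      convert! (ContinuousMap.Homotopic.refl ⟨_, hq.isCoveringMap.continuous⟩).comp hF₁K using 1
      · ext x
        exact (hF₁ x).symm
      · ext x
        exact (hF₂ x).symm.trans (hq.map_smul g).symm
    exact h (h₁.symm.trans (hf.trans h₂))
  have hcoin : ∀ (g : G) x, F₁ x = g • F₂ x → f₁' x = f₂' x := fun g x hx ↦ by
    rw [← hF₁, ← hF₂, hx]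
    exact hq.map_smul g
  obtain ⟨x₀, hx₀⟩ := hmeet 1
  refine ⟨⟨x₀, hcoin 1 x₀ hx₀⟩, ?_⟩
  have hexists : ∀ x : {x // f₁' x = f₂' x}, ∃ g : G, g • F₂ x = F₁ x := fun x ↦
    hq.apply_eq_iff_mem_orbit.1 ((hF₁ x).trans (x.2.trans (hF₂ x).symm))
  choose φ hφ using hexists
  have hφ_iff : ∀ x g, φ x = g ↔ F₁ x = g • F₂ x := fun x g ↦
    ⟨fun hg ↦ hg ▸ (hφ x).symm, fun hg ↦ hcancel.right_cancel' _ _ _ ((hφ x).trans hg)⟩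
  refine card_le_card_connectedComponents_of_isClosed_fiber φ (fun g ↦ ?_) fun g ↦ ?_
  · have : φ ⁻¹' {g} = {x : {x // f₁' x = f₂' x} | F₁ x = g • F₂ x} := Set.ext fun x ↦ hφ_iff x g
    rw [this]
    exact isClosed_eq (by fun_prop) (by fun_prop)
  · obtain ⟨x, hx⟩ := hmeet g
    exact ⟨⟨x, hcoin g x hx⟩, (hφ_iff _ _).2 hx⟩
end

section
/- Let f₁, f₂ : S¹ → S¹ be continuous self-maps of the circle (the unit circle in ℂ) such that f₁ is homotopic to the map z ↦ z^{d₁} and f₂ is homotopic to the map z ↦ z^{d₂}, where d₁, d₂ ∈ ℤ (so d₁, d₂ are the degrees of f₁ and f₂). Then MCC(f₁, f₂) = |d₁ − d₂|. -/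
/-- Homotopic circle-valued maps differ by the exponential of a real-valued function. -/
theorem exists_eq_mul_exp_of_homotopic {X : Type*} [TopologicalSpace X] {f g : C(X, Circle)}
    (h : f.Homotopic g) : ∃ φ : C(X, ℝ), ∀ x, f x = g x * Circle.exp (φ x) := by
  obtain ⟨H⟩ := h.symm
  let K : C(unitInterval × X, Circle) :=
    ⟨fun p => H p / g p.2, by fun_prop⟩
  have hK : ∀ x, K (0, x) = Circle.exp ((0 : C(X, ℝ)) x) := fun x => by simp [K]
  let L := Circle.isCoveringMap_exp.liftHomotopy K 0 hK
  refine ⟨L.comp ((ContinuousMap.const X 1).prodMk (ContinuousMap.id X)), fun x => ?_⟩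
  have hL : Circle.exp (L (1, x)) = K (1, x) :=
    congr_fun (Circle.isCoveringMap_exp.liftHomotopy_lifts K 0 hK) (1, x)
  simp [hL, K]

/-- A self-map of the circle which differs from the identity by the exponential of a real-valued
function is surjective. -/
theorem surjective_mul_exp (φ : C(Circle, ℝ)) :
    Function.Surjective fun z : Circle => z * Circle.exp (φ z) := by
  obtain ⟨b, hb⟩ := (isCompact_range φ.continuous).bddAbove
  obtain ⟨a, ha⟩ := (isCompact_range φ.continuous).bddBelow
  intro w
  obtain ⟨s, rfl⟩ : ∃ s, Circle.exp s = w := ⟨_, Circle.exp_arg w⟩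
  have hcont : Continuous fun t : ℝ => t + φ (Circle.exp t) := by fun_prop
  have hbot : (s - b) + φ (Circle.exp (s - b)) ≤ s := by
    linarith [hb (Set.mem_range_self (Circle.exp (s - b)))]
  have htop : s ≤ (s - a) + φ (Circle.exp (s - a)) := by
    linarith [ha (Set.mem_range_self (Circle.exp (s - a)))]
  obtain ⟨t, ht⟩ := mem_range_of_exists_le_of_exists_ge hcont ⟨_, hbot⟩ ⟨_, htop⟩
  exact ⟨Circle.exp t, by simp only [← Circle.exp_add, ht]⟩

theorem circle_zpow_eq_one_iff (d : ℤ) (z : Circle) : z ^ d = 1 ↔ z ^ d.natAbs = 1 := by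
  rcases d.natAbs_eq with h | h <;> rw [h] <;> simp

/-- For nonzero `d`, the circle has exactly `|d|` solutions of `z ^ d = 1`. -/
theorem enatCard_circle_zpow_eq_one {d : ℤ} (hd : d ≠ 0) :
    ENat.card {z : Circle // z ^ d = 1} = (d.natAbs : ℕ∞) := by
  have : NeZero d.natAbs := ⟨Int.natAbs_ne_zero.mpr hd⟩
  let e : {z : Circle // z ^ d = 1} ≃ rootsOfUnity d.natAbs Circle :=
    (toUnits.toEquiv.subtypeEquiv fun z => by
      rw [circle_zpow_eq_one_iff, mem_rootsOfUnity', MulEquiv.toEquiv_eq_coe,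
        MulEquiv.coe_toEquiv, val_toUnits_apply])
  rw [ENat.card_congr (e.trans (rootsOfUnityCircleEquiv d.natAbs).toEquiv),
    ENat.card_eq_coe_natCard, Complex.card_rootsOfUnity]

/-- A space surjecting continuously onto a totally disconnected space `Y` has at least as many
connected components as `Y` has points. -/
theorem enatCard_le_enatCard_connectedComponents {X Y : Type*} [TopologicalSpace X]
    [TopologicalSpace Y] [TotallyDisconnectedSpace Y] {f : X → Y} (hf : Continuous f)
    (hs : Function.Surjective f) : ENat.card Y ≤ ENat.card (ConnectedComponents X) := by
  have hsurj : Function.Surjective hf.connectedComponentsLift := fun y => by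
    obtain ⟨x, rfl⟩ := hs y
    exact ⟨x, hf.connectedComponentsLift_apply_coe x⟩
  exact ENat.card_le_card_of_injective (Function.injective_surjInv hsurj)

theorem enatCard_connectedComponents_le (X : Type*) [TopologicalSpace X] :
    ENat.card (ConnectedComponents X) ≤ ENat.card X :=
  ENat.card_le_card_of_injective
    (Function.injective_surjInv (ConnectedComponents.surjective_coe (α := X)))

theorem MCC_le_enatCard_coincidence {M N : Type*} [TopologicalSpace M] [TopologicalSpace N]
    {f₁ f₂ g₁ g₂ : C(M, N)} (h₁ : g₁.Homotopic f₁) (h₂ : g₂.Homotopic f₂) :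
    MCC f₁ f₂ ≤ ENat.card {x : M // g₁ x = g₂ x} :=
  calc
    MCC f₁ f₂ ≤ ⨅ (g : C(M, N)) (_ : g.Homotopic f₂),
        ENat.card (ConnectedComponents {x : M // g₁ x = g x}) := iInf₂_le g₁ h₁
    _ ≤ ENat.card (ConnectedComponents {x : M // g₁ x = g₂ x}) := iInf₂_le g₂ h₂
    _ ≤ _ := enatCard_connectedComponents_le _

/-- Multiplying a circle-valued map by a constant does not change its homotopy class. -/
theorem homotopic_mul_exp_const {X : Type*} [TopologicalSpace X] (f : C(X, Circle)) (s : ℝ) :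
    (f * ContinuousMap.const X (Circle.exp s)).Homotopic f :=
  ContinuousMap.Homotopic.symm
    ⟨{ toFun := fun p => f p.2 * Circle.exp (p.1 * s)
       continuous_toFun := by fun_prop
       map_zero_left := fun x => by simp
       map_one_left := fun x => by simp }⟩

/-- The coincidence set of maps of degrees `d₁` and `d₂` has at least `|d₁ - d₂|` components. -/
theorem natAbs_sub_le_enatCard_coincidence_components {d₁ d₂ : ℤ} {g₁ g₂ : C(Circle, Circle)}
    (h₁ : g₁.Homotopic ⟨fun z => z ^ d₁, continuous_zpow d₁⟩)
    (h₂ : g₂.Homotopic ⟨fun z => z ^ d₂, continuous_zpow d₂⟩) :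
    ((d₁ - d₂).natAbs : ℕ∞) ≤ ENat.card (ConnectedComponents {x : Circle // g₁ x = g₂ x}) := by
  rcases eq_or_ne (d₁ - d₂) 0 with hd | hd
  · simp [hd]
  obtain ⟨φ₁, hφ₁⟩ := exists_eq_mul_exp_of_homotopic h₁
  obtain ⟨φ₂, hφ₂⟩ := exists_eq_mul_exp_of_homotopic h₂
  simp only [ContinuousMap.coe_mk] at hφ₁ hφ₂
  set d := d₁ - d₂ with hdef
  let φ : C(Circle, ℝ) := ⟨fun z => (φ₁ z - φ₂ z) / d, by fun_prop⟩
  let ψ : Circle → Circle := fun z => z * Circle.exp (φ z)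
  have hψ_cont : Continuous ψ := by fun_prop
  have hψ (z : Circle) : ψ z ^ d = g₁ z / g₂ z := by
    have hd' : (d : ℝ) ≠ 0 := Int.cast_ne_zero.mpr hd
    have hexp : Circle.exp (φ z) ^ d = Circle.exp (φ₁ z) / Circle.exp (φ₂ z) := by
      rw [← Circle.exp_intCast_mul, ← Circle.exp_sub]
      exact congrArg _ (mul_div_cancel₀ _ hd')
    rw [mul_zpow, hexp, hφ₁, hφ₂, hdef, zpow_sub, mul_div_mul_comm, div_eq_mul_inv (z ^ d₁)]
  have hψ_iff (z : Circle) : g₁ z = g₂ z ↔ ψ z ^ d = 1 := by rw [hψ, div_eq_one]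
  have hcard := enatCard_circle_zpow_eq_one hd
  have : Finite {z : Circle // z ^ d = 1} := by
    rw [← ENat.card_lt_top, hcard]
    exact ENat.natCast_lt_top _
  rw [← hcard]
  refine enatCard_le_enatCard_connectedComponents
    (f := fun x : {x : Circle // g₁ x = g₂ x} => ⟨ψ x, (hψ_iff x).mp x.2⟩)
    ((hψ_cont.comp continuous_subtype_val).subtype_mk _) ?_
  rintro ⟨w, hw⟩
  obtain ⟨z, rfl⟩ := surjective_mul_exp φ w
  exact ⟨⟨z, (hψ_iff z).mpr hw⟩, rfl⟩

theorem mcc_circle_eq_abs_sub_degree (d₁ d₂ : ℤ) (f₁ f₂ : C(Circle, Circle))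
    (h₁ : f₁.Homotopic ⟨fun z => z ^ d₁, continuous_zpow d₁⟩)
    (h₂ : f₂.Homotopic ⟨fun z => z ^ d₂, continuous_zpow d₂⟩) :
    MCC f₁ f₂ = ((d₁ - d₂).natAbs : ℕ∞) := by
  apply le_antisymm
  · rcases eq_or_ne (d₁ - d₂) 0 with hd | hd
    · obtain rfl : d₁ = d₂ := sub_eq_zero.mp hd
      refine (MCC_le_enatCard_coincidence
        ((homotopic_mul_exp_const _ Real.pi).trans h₁.symm) h₂.symm).trans ?_
      have : IsEmpty {x : Circle // x ^ d₁ * Circle.exp Real.pi = x ^ d₁} :=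
        ⟨fun x => Circle.exp_pi_ne_one (mul_eq_left.mp x.2)⟩
      exact ((ENat.card_eq_zero_iff_empty
        {x : Circle // x ^ d₁ * Circle.exp Real.pi = x ^ d₁}).mpr this).le.trans zero_le
    · refine (MCC_le_enatCard_coincidence h₁.symm h₂.symm).trans ?_
      rw [← enatCard_circle_zpow_eq_one hd]
      exact (ENat.card_congr (Equiv.subtypeEquivRight fun z => by
        simp [zpow_sub, ← div_eq_mul_inv, div_eq_one])).le
  · exact le_iInf₂ fun g₁ hg₁ => le_iInf₂ fun g₂ hg₂ =>
      natAbs_sub_le_enatCard_coincidence_components (hg₁.trans h₁) (hg₂.trans h₂)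
end

section
/- Let M and N be topological spaces with M path-connected, fix basepoints x₀ ∈ M and y₀ ∈ N, and let f₁, f₂ : M → N be continuous maps with f₁(x₀) = f₂(x₀) = y₀. Let E(f₁,f₂) = {(x, γ) ∈ M × C([0,1], N) | γ(0) = f₁(x) and γ(1) = f₂(x)}, topologized as a subspace of M × C([0,1], N) with the compact-open topology on C([0,1], N). Define the Reidemeister set R(f₁,f₂) as the quotient of the fundamental group π₁(N, y₀) by the equivalence relation generated by α ∼ (f₁)₊(h) · α · ((f₂)₊(h))⁻¹ for all h ∈ π₁(M, x₀), where (f₁)₊, (f₂)₊ : π₁(M, x₀) → π₁(N, y₀) are the induced homomorphisms. Then the set π₀(E(f₁,f₂)) of path components of E(f₁,f₂) is in bijective correspondence with R(f₁,f₂). -/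
open unitInterval

/-- The loop at `y₀` induced by a loop `h` at `x₀` under a continuous map `f` with
`f x₀ = y₀`. -/
noncomputable def inducedLoop {M N : Type*} [TopologicalSpace M] [TopologicalSpace N]
    {x₀ : M} {y₀ : N} (f : C(M, N)) (hf : f x₀ = y₀) (h : Path x₀ x₀) : Path y₀ y₀ :=
  (h.map f.continuous).cast hf.symm hf.symm

/-- The element of the fundamental group `π₁(N, y₀)` induced by a loop `h` at `x₀` under a
continuous map `f : M → N` with `f x₀ = y₀`; this is `f₊(h)`. -/
noncomputable def inducedElem {M N : Type*} [TopologicalSpace M] [TopologicalSpace N]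
    {x₀ : M} {y₀ : N} (f : C(M, N)) (hf : f x₀ = y₀) (h : Path x₀ x₀) :
    FundamentalGroup N y₀ :=
  FundamentalGroup.fromPath (X := TopCat.of N) (x := y₀)
    (Quotient.mk (Path.Homotopic.setoid y₀ y₀) (inducedLoop f hf h))

/-- The space `E(f₁, f₂)` of pairs `(x, γ)`, with `γ` a path from `f₁ x` to `f₂ x`. -/
abbrev CoincidencePathSpace {M N : Type*} [TopologicalSpace M] [TopologicalSpace N]
    (f₁ f₂ : C(M, N)) : Type _ :=
  {p : M × C(unitInterval, N) // p.2 0 = f₁ p.1 ∧ p.2 1 = f₂ p.1}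

namespace CoincidencePathSpace

variable {M N : Type*} [TopologicalSpace M] [TopologicalSpace N] {f₁ f₂ : C(M, N)}

/-- The point of `E(f₁, f₂)` over `x` given by a path whose endpoints are `f₁ x` and `f₂ x`. -/
def ofPath {x : M} {y z : N} (hy : f₁ x = y) (hz : f₂ x = z) (q : Path y z) :
    CoincidencePathSpace f₁ f₂ :=
  ⟨(x, q.toContinuousMap), by simp [hy], by simp [hz]⟩

theorem ofPath_congr {x x' : M} {y z y' z' : N} {hy : f₁ x = y} {hz : f₂ x = z}
    {hy' : f₁ x' = y'} {hz' : f₂ x' = z'} {q : Path y z} {q' : Path y' z'}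
    (hx : x = x') (hq : ∀ t, q t = q' t) :
    (ofPath hy hz q : CoincidencePathSpace f₁ f₂) = ofPath hy' hz' q' :=
  Subtype.ext (Prod.ext hx (ContinuousMap.ext hq))

theorem exists_eq_ofPath (e : CoincidencePathSpace f₁ f₂) :
    ∃ (x : M) (q : Path (f₁ x) (f₂ x)), e = ofPath rfl rfl q :=
  ⟨e.1.1, ⟨e.1.2, e.2.1, e.2.2⟩, rfl⟩

/-- A path in `M` together with a continuous family of paths over it joins the points of
`E(f₁, f₂)` at its two ends. -/
theorem joined_ofPath_of_family {x x' : M} (p : Path x x')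
    (γ : ∀ s, Path (f₁ (p s)) (f₂ (p s))) (hγ : Continuous ↿γ) :
    Joined (ofPath rfl rfl (γ 0) : CoincidencePathSpace f₁ f₂) (ofPath rfl rfl (γ 1)) :=
  ⟨{ toFun := fun s => ofPath rfl rfl (γ s)
     continuous_toFun := Continuous.subtype_mk
       (p.continuous.prodMk (ContinuousMap.curry ⟨↿γ, hγ⟩).continuous) _
     source' := rfl
     target' := rfl }⟩

theorem joined_ofPath_of_homotopic {x : M} {y z : N} {hy : f₁ x = y} {hz : f₂ x = z}
    {q q' : Path y z} (h : q.Homotopic q') :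
    Joined (ofPath hy hz q : CoincidencePathSpace f₁ f₂) (ofPath hy hz q') := by
  subst hy hz
  obtain ⟨F⟩ := h
  convert joined_ofPath_of_family (Path.refl x) F.eval F.continuous using 1
  · exact ofPath_congr rfl fun t => (DFunLike.congr_fun F.eval_zero t).symm
  · exact ofPath_congr rfl fun t => (DFunLike.congr_fun F.eval_one t).symm

/-- Transport of a point of `E(f₁, f₂)` along a path in `M`. -/
theorem joined_ofPath_conj {x x' : M} (p : Path x x') (q : Path (f₁ x) (f₂ x)) :
    Joined (ofPath rfl rfl q : CoincidencePathSpace f₁ f₂)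
      (ofPath rfl rfl
        ((p.map f₁.continuous).symm.trans (q.trans (p.map f₂.continuous)))) := by
  let r : ∀ s, Path x (p s) := fun s =>
    { toFun := fun t => p (s * t)
      source' := by simp
      target' := by simp }
  have hr : Continuous ↿r :=
    p.continuous.comp (continuous_fst.mul continuous_snd)
  let γ : ∀ s, Path (f₁ (p s)) (f₂ (p s)) := fun s =>
    ((r s).map f₁.continuous).symm.trans (q.trans ((r s).map f₂.continuous))
  have hγ : Continuous ↿γ :=
    Path.trans_continuous_family _
      (Path.symm_continuous_family _ (f₁.continuous.comp hr)) _
      (Path.trans_continuous_family _ (q.continuous.comp continuous_snd) _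
        (f₂.continuous.comp hr))
  have h := joined_ofPath_of_family p γ hγ
  have h0 : (ofPath rfl rfl (γ 0) : CoincidencePathSpace f₁ f₂) =
      ofPath rfl rfl ((Path.refl (f₁ x)).symm.trans (q.trans (Path.refl (f₂ x)))) :=
    ofPath_congr p.source fun t => by simp [γ, r, Path.trans_apply]
  have h1 : (ofPath rfl rfl (γ 1) : CoincidencePathSpace f₁ f₂) =
      ofPath rfl rfl ((p.map f₁.continuous).symm.trans (q.trans (p.map f₂.continuous))) :=
    ofPath_congr p.target fun t => by simp [γ, r, Path.trans_apply]
  rw [h0, h1] at h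
  refine (joined_ofPath_of_homotopic ?_).trans h
  rw [Path.refl_symm]
  exact ((Path.Homotopic.refl_trans _).trans (Path.Homotopic.trans_refl _)).symm

/-- Two points of `E(f₁, f₂)` are in the same path component if and only if some path in `M`
between their base points makes the resulting square in `N` commute up to homotopy. -/
theorem joined_ofPath_iff {x x' : M} {y z y' z' : N} (hy : f₁ x = y) (hz : f₂ x = z)
    (hy' : f₁ x' = y') (hz' : f₂ x' = z') (q : Path y z) (q' : Path y' z') :
    Joined (ofPath hy hz q : CoincidencePathSpace f₁ f₂) (ofPath hy' hz' q') ↔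
      ∃ p : Path x x',
        (q.trans ((p.map f₂.continuous).cast hz.symm hz'.symm)).Homotopic
          (((p.map f₁.continuous).cast hy.symm hy'.symm).trans q') := by
  subst hy hz hy' hz'
  constructor
  · rintro ⟨P⟩
    let p : Path x x' := P.map (continuous_fst.comp continuous_subtype_val)
    let H : q.toContinuousMap.Homotopy q'.toContinuousMap :=
      { toContinuousMap := ContinuousMap.uncurry
          ⟨fun s => (P s).1.2, continuous_snd.comp (continuous_subtype_val.comp P.continuous)⟩
        map_zero_left := fun t => DFunLike.congr_fun (congrArg (·.1.2) P.source) t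
        map_one_left := fun t => DFunLike.congr_fun (congrArg (·.1.2) P.target) t }
    refine ⟨p, ?_⟩
    have h := (Path.Homotopic.map_trans_evalAt H Path.id).pathCast
      q.source.symm q'.target.symm
    convert h using 1
    · ext t
      simp only [Path.trans_apply, Path.cast_coe]
      split_ifs
      · rfl
      · exact ((P _).2.2).symm
    · ext t
      simp only [Path.trans_apply, Path.cast_coe]
      split_ifs
      · exact ((P _).2.1).symm
      · rfl
  · rintro ⟨p, hp⟩
    refine (joined_ofPath_conj p q).trans (joined_ofPath_of_homotopic ?_)
    rw [← Path.Homotopic.Quotient.eq] at hp ⊢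
    simp only [Path.cast_rfl_rfl, Path.Homotopic.Quotient.mk_trans,
      Path.Homotopic.Quotient.mk_symm] at hp ⊢
    rw [hp, ← Path.Homotopic.Quotient.trans_assoc, Path.Homotopic.Quotient.symm_trans,
      Path.Homotopic.Quotient.refl_trans]

/-- Every path component of `E(f₁, f₂)` meets the fibre over a given base point. -/
theorem exists_joined_ofPath [PathConnectedSpace M] {x₀ : M} {y z : N}
    (hy : f₁ x₀ = y) (hz : f₂ x₀ = z) (e : CoincidencePathSpace f₁ f₂) :
    ∃ q : Path y z, Joined (ofPath hy hz q) e := by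
  subst hy hz
  obtain ⟨x, q, rfl⟩ := exists_eq_ofPath e
  exact ⟨_, (joined_ofPath_conj (PathConnectedSpace.somePath x x₀) q).symm⟩

end CoincidencePathSpace

open CoincidencePathSpace in
/-- The set of path components of the path space `E(f₁, f₂)` is in bijection with the
Reidemeister set `R(f₁, f₂)`, i.e. the quotient of `π₁(N, y₀)` by the equivalence relation
generated by `α ∼ (f₁)₊(h) · α · ((f₂)₊(h))⁻¹` for `h ∈ π₁(M, x₀)`. -/
theorem zerothHomotopy_pathSpace_equiv_reidemeister
    {M N : Type*} [TopologicalSpace M] [TopologicalSpace N] [PathConnectedSpace M]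
    (x₀ : M) (y₀ : N) (f₁ f₂ : C(M, N)) (h₁ : f₁ x₀ = y₀) (h₂ : f₂ x₀ = y₀) :
    Nonempty
      (ZerothHomotopy
          {p : M × C(unitInterval, N) // p.2 0 = f₁ p.1 ∧ p.2 1 = f₂ p.1} ≃
        Quot (fun α β : FundamentalGroup N y₀ =>
          ∃ h : Path x₀ x₀, β = inducedElem f₁ h₁ h * α * (inducedElem f₂ h₂ h)⁻¹)) := by
  let cls : Path y₀ y₀ → FundamentalGroup N y₀ := fun q => Path.Homotopic.Quotient.mk q
  have cls_surjective : Function.Surjective cls := Path.Homotopic.Quotient.mk_surjective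
  -- Multiplication in `FundamentalGroup` is reversed concatenation, hence the inverse below.
  choose rep hrep using fun α : FundamentalGroup N y₀ => cls_surjective α⁻¹
  let Φ : FundamentalGroup N y₀ → ZerothHomotopy (CoincidencePathSpace f₁ f₂) :=
    fun α => ZerothHomotopy.mk (ofPath h₁ h₂ (rep α))
  have joined_iff (q q' : Path y₀ y₀) :
      Joined (ofPath h₁ h₂ q : CoincidencePathSpace f₁ f₂) (ofPath h₁ h₂ q') ↔
        ∃ h : Path x₀ x₀, inducedElem f₂ h₂ h * cls q = cls q' * inducedElem f₁ h₁ h := by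
    rw [joined_ofPath_iff]
    exact exists_congr fun h => Path.Homotopic.Quotient.eq.symm
  have Φ_eq_iff (α β : FundamentalGroup N y₀) : Φ α = Φ β ↔
      ∃ h : Path x₀ x₀, β = inducedElem f₁ h₁ h * α * (inducedElem f₂ h₂ h)⁻¹ := by
    refine Quotient.eq.trans ((joined_iff _ _).trans (exists_congr fun h => ?_))
    rw [hrep, hrep, eq_inv_mul_iff_mul_eq, eq_mul_inv_iff_mul_eq, ← mul_assoc,
      mul_inv_eq_iff_eq_mul]
  refine ⟨(Equiv.ofBijective (Quot.lift Φ fun α β h => (Φ_eq_iff α β).2 h) ⟨?_, ?_⟩).symm⟩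
  · rintro ⟨α⟩ ⟨β⟩ h
    exact Quot.sound ((Φ_eq_iff α β).1 h)
  · rintro ⟨e⟩
    obtain ⟨q, hq⟩ := exists_joined_ofPath h₁ h₂ e
    refine ⟨Quot.mk _ (cls q)⁻¹, Quotient.sound (Joined.trans ?_ hq)⟩
    apply joined_ofPath_of_homotopic
    rw [← Path.Homotopic.Quotient.eq]
    exact (hrep _).trans (inv_inv _)
end
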